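/- Let H ⊂ ℂ be a Jordan curve and let ε > 0. Then there exists a homeomorphism φ : ℂ → ℂ with sup_{z ∈ ℂ} |φ(z) − z| < ε, with φ(z) = z for every z whose distance to H is at least ε, and such that φ(H) is an analytic Jordan curve. -/

import Mathlib

open Set Metric Topology

noncomputable section

/-- A Jordan curve: a set homeomorphic to the unit circle. -/
def IsJordanCurve (E : Set ℂ) : Prop :=
  Nonempty (E ≃ₜ (Metric.sphere (0 : ℂ) 1 : Set ℂ))

/-- An analytic Jordan curve: the image of the unit circle under a map that is
holomorphic and injective on an open annulus containing the unit circle. -/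
def IsAnalyticJordanCurve (E : Set ℂ) : Prop :=
  ∃ (r R : ℝ) (g : ℂ → ℂ), r < 1 ∧ 1 < R ∧
    DifferentiableOn ℂ g {z : ℂ | r < ‖z‖ ∧ ‖z‖ < R} ∧
    Set.InjOn g {z : ℂ | r < ‖z‖ ∧ ‖z‖ < R} ∧
    E = g '' Metric.sphere (0 : ℂ) 1

/-!
A Jordan curve `H` is the image of the unit circle under a homeomorphism `Φ` of the plane that is
conformal inside the unit disc. Shrinking the unit circle a little, by a radial homeomorphism `ρ`
supported near it, moves it to a circle on which `Φ` is holomorphic and injective, so `Φ ∘ ρ ∘ Φ⁻¹`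
moves `H` to an analytic Jordan curve, and by uniform continuity of `Φ` near the circle it moves
points as little as desired.

To obtain `Φ`, two Riemann maps are glued along `H`. That the curve separates the plane into exactly
two components, and that the bounded one is simply connected, comes from counting winding numbers:
by Borsuk's theorem a continuous non-vanishing function on a compact set that does not separate the
plane has a continuous logarithm. The Riemann map of the bounded component extends to the circle by
the length–area principle: there are crosscuts around each boundary point with images of arbitrarily
small diameter. The extension is injective, because otherwise it would be constant on an arc. The
same applies to the image of the unbounded component under an inversion, and the two boundary
parametrizations are matched by a radial extension of the resulting homeomorphism of the circle.
-/

/-! ### Continuous logarithms -/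

lemma exists_eqOn_add_of_exp_eq {X : Type*} [TopologicalSpace X] {K : Set X} {g g' : X → ℂ}
    (hK : IsPreconnected K) (hg : ContinuousOn g K) (hg' : ContinuousOn g' K)
    (h : ∀ z ∈ K, Complex.exp (g z) = Complex.exp (g' z)) :
    ∃ n : ℤ, ∀ z ∈ K, g z = g' z + n * (2 * Real.pi * Complex.I) := by
  rcases K.eq_empty_or_nonempty with rfl | ⟨x, hx⟩
  · exact ⟨0, by simp⟩
  obtain ⟨n, hn⟩ := Complex.exp_eq_exp_iff_exists_int.1 (h x hx)
  refine ⟨n, Complex.isCoveringMap_exp.eqOn_of_comp_eqOn hK hg (hg'.add continuousOn_const)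
    (fun z hz => Subtype.ext ?_) hx hn⟩
  simpa [Complex.exp_add, Complex.exp_int_mul_two_pi_mul_I] using h z hz

/-- `f` has a continuous logarithm on `K`: the vanishing of the winding-number obstruction, which
is how separation properties of plane sets are expressed below. -/
def HasContLog {X : Type*} [TopologicalSpace X] (f : X → ℂ) (K : Set X) : Prop :=
  ∃ g : X → ℂ, ContinuousOn g K ∧ ∀ z ∈ K, f z = Complex.exp (g z)

namespace HasContLog

variable {X Y : Type*} [TopologicalSpace X] [TopologicalSpace Y] {f f' : X → ℂ} {K L : Set X}

lemma mono (h : HasContLog f L) (hKL : K ⊆ L) : HasContLog f K :=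
  let ⟨g, hg, hfg⟩ := h
  ⟨g, hg.mono hKL, fun z hz => hfg z (hKL hz)⟩

lemma congr (h : HasContLog f K) (hf : EqOn f' f K) : HasContLog f' K :=
  let ⟨g, hg, hfg⟩ := h
  ⟨g, hg, fun z hz => (hf hz).trans (hfg z hz)⟩

lemma mul (h : HasContLog f K) (h' : HasContLog f' K) :
    HasContLog (fun z => f z * f' z) K := by
  obtain ⟨g, hg, hfg⟩ := h
  obtain ⟨g', hg', hfg'⟩ := h'
  exact ⟨fun z => g z + g' z, hg.add hg', fun z hz => by
    simp only [Complex.exp_add, hfg z hz, hfg' z hz]⟩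

lemma zpow (h : HasContLog f K) (n : ℤ) : HasContLog (fun z => f z ^ n) K := by
  obtain ⟨g, hg, hfg⟩ := h
  exact ⟨fun z => n * g z, continuousOn_const.mul hg, fun z hz => by
    simp only [Complex.exp_int_mul, hfg z hz]⟩

lemma inv (h : HasContLog f K) : HasContLog (fun z => (f z)⁻¹) K :=
  (h.zpow (-1)).congr fun z _ => by simp

lemma div (h : HasContLog f K) (h' : HasContLog f' K) :
    HasContLog (fun z => f z / f' z) K :=
  (h.mul h'.inv).congr fun _ _ => div_eq_mul_inv _ _

lemma const {c : ℂ} (hc : c ≠ 0) : HasContLog (fun _ : X => c) K :=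
  ⟨fun _ => Complex.log c, continuousOn_const, fun _ _ => (Complex.exp_log hc).symm⟩

lemma comp {φ : Y → X} {M : Set Y} (h : HasContLog f K) (hφ : ContinuousOn φ M)
    (hM : MapsTo φ M K) : HasContLog (f ∘ φ) M := by
  obtain ⟨g, hg, hfg⟩ := h
  exact ⟨g ∘ φ, hg.comp hφ hM, fun z hz => hfg _ (hM hz)⟩

lemma of_slitPlane (hf : ContinuousOn f K) (h : ∀ z ∈ K, f z ∈ Complex.slitPlane) :
    HasContLog f K :=
  ⟨fun z => Complex.log (f z), hf.clog h,
    fun z hz => (Complex.exp_log (Complex.slitPlane_ne_zero (h z hz))).symm⟩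

lemma of_norm_sub_lt {c : ℂ} (hf : ContinuousOn f K) (h : ∀ z ∈ K, ‖f z - c‖ < ‖c‖) :
    HasContLog f K := by
  rcases K.eq_empty_or_nonempty with rfl | ⟨x, hx⟩
  · exact ⟨0, continuousOn_empty _, by simp⟩
  have hc : c ≠ 0 := norm_pos_iff.1 ((norm_nonneg _).trans_lt (h x hx))
  refine ((const hc).mul (of_slitPlane (hf.div_const c) fun z hz => ?_)).congr
    fun z _ => (mul_div_cancel₀ _ hc).symm
  refine Complex.ball_one_subset_slitPlane ?_
  rw [mem_ball_iff_norm, div_sub_one hc, norm_div, div_lt_one (norm_pos_iff.2 hc)]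
  exact h z hz

lemma of_simplyConnected [SimplyConnectedSpace X] [LocallyPathConnectedSpace X]
    (hf : Continuous f) (h : ∀ z, f z ≠ 0) : HasContLog f univ := by
  obtain ⟨g, hg, hfg⟩ := Complex.exists_continuousOn_eqOn_exp_comp (U := (univ : Set X))
    ((Homeomorph.Set.univ X).toHomotopyEquiv.simplyConnectedSpace) isOpen_univ
    hf.continuousOn (by simpa using h)
  exact ⟨g, hg, fun z hz => (hfg hz).symm⟩

lemma union_of_eqOn {A B : Set X} {g g' : X → ℂ} (hA : IsClosed A) (hB : IsClosed B)
    (hg : ContinuousOn g A) (hfg : ∀ z ∈ A, f z = Complex.exp (g z))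
    (hg' : ContinuousOn g' B) (hfg' : ∀ z ∈ B, f z = Complex.exp (g' z))
    (h : EqOn g g' (A ∩ B)) : HasContLog f (A ∪ B) := by
  classical
  have hA' : EqOn (A.piecewise g g') g A := piecewise_eqOn A g g'
  have hB' : EqOn (A.piecewise g g') g' B := fun z hz => by
    by_cases hzA : z ∈ A
    · rw [hA' hzA, h ⟨hzA, hz⟩]
    · exact piecewise_eq_of_notMem A g g' hzA
  refine ⟨_, (hg.congr hA').union_of_isClosed (hg'.congr hB') hA hB, ?_⟩
  rintro z (hz | hz)
  · rw [hA' hz, hfg z hz]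
  · rw [hB' hz, hfg' z hz]

lemma union_of_isPreconnected_inter {A B : Set X} (hA : IsClosed A) (hB : IsClosed B)
    (hAB : IsPreconnected (A ∩ B)) (h : HasContLog f A) (h' : HasContLog f B) :
    HasContLog f (A ∪ B) := by
  obtain ⟨g, hg, hfg⟩ := h
  obtain ⟨g', hg', hfg'⟩ := h'
  obtain ⟨n, hn⟩ := exists_eqOn_add_of_exp_eq hAB (hg.mono inter_subset_left)
    (hg'.mono inter_subset_right) fun z hz => by rw [← hfg z hz.1, hfg' z hz.2]
  refine union_of_eqOn hA hB hg hfg (hg'.add continuousOn_const) (fun z hz => ?_) hn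
  simp [hfg' z hz, Complex.exp_add, Complex.exp_int_mul_two_pi_mul_I]

end HasContLog

/-! ### Separation of the plane -/

lemma not_hasContLog_zpow_sphere {p : ℂ} {r : ℝ} (hr : 0 < r) {n : ℤ} (hn : n ≠ 0) :
    ¬ HasContLog (fun z => (z - p) ^ n) (sphere p r) := by
  rintro ⟨G, hG, hfG⟩
  have hc : Continuous fun t : ℝ => p + r * Complex.exp (t * Complex.I) := by fun_prop
  have hm : MapsTo (fun t : ℝ => p + r * Complex.exp (t * Complex.I)) univ (sphere p r) :=
    fun t _ => by simp [Complex.norm_exp_ofReal_mul_I, hr.le]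
  have hr' : (r : ℂ) ≠ 0 := by exact_mod_cast hr.ne'
  obtain ⟨m, hm⟩ := exists_eqOn_add_of_exp_eq (K := univ) isPreconnected_univ
    (hG.comp hc.continuousOn hm)
    (g' := fun t : ℝ => n * (Complex.log r + t * Complex.I)) (by fun_prop) fun t ht => by
      rw [Function.comp_apply, ← hfG _ (hm ht), Complex.exp_int_mul, Complex.exp_add,
        Complex.exp_log hr']
      simp
  have h0 := hm 0 trivial
  have h1 := hm (2 * Real.pi) trivial
  simp only [Function.comp_apply, Complex.ofReal_mul, Complex.ofReal_ofNat,
    Complex.exp_two_pi_mul_I, Complex.ofReal_zero, zero_mul, Complex.exp_zero] at h0 h1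
  rw [h0] at h1
  have : (n : ℂ) * (2 * Real.pi * Complex.I) = 0 := by linear_combination -h1
  simp [hn] at this

lemma not_hasContLog_frontier {U : Set ℂ} (hU : IsOpen U) (hUb : Bornology.IsBounded U) {p : ℂ}
    (hp : p ∈ U) {n : ℤ} (hn : n ≠ 0) {f : ℂ → ℂ} (hf : ContinuousOn f (closure U))
    (hf0 : ∀ z ∈ closure U, f z ≠ 0) :
    ¬ HasContLog (fun z => (z - p) ^ n / f z) (frontier U) := by
  classical
  rintro ⟨g, hg, hfg⟩
  obtain ⟨G, hG⟩ := ContinuousMap.exists_restrict_eq (isClosed_frontier (s := U))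
    ⟨(frontier U).domRestrict g, hg.domRestrict⟩
  have hGg : ∀ z ∈ frontier U, G z = g z := fun z hz => by
    simpa using DFunLike.congr_fun hG ⟨z, hz⟩
  have hpz : ∀ z ∉ U, z - p ≠ 0 := fun z hz h => hz (by rwa [sub_eq_zero.1 h])
  set F : ℂ → ℂ := U.piecewise (fun z => f z * Complex.exp (G z)) fun z => (z - p) ^ n with hF
  have hFc : Continuous F := by
    refine continuous_piecewise (fun z hz => ?_) (hf.mul (by fun_prop)) fun z hz => ?_
    · rw [hGg z hz, ← hfg z hz, mul_div_cancel₀ _ (hf0 z (frontier_subset_closure hz))]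
    · rw [hU.isClosed_compl.closure_eq] at hz
      exact ContinuousAt.continuousWithinAt
        (((continuous_id.sub continuous_const).continuousAt).zpow₀ n (Or.inl (hpz z hz)))
  have hF0 : ∀ z, F z ≠ 0 := fun z => by
    by_cases hz : z ∈ U
    · simpa [hF, hz] using hf0 z (subset_closure hz)
    · simpa [hF, hz] using zpow_ne_zero n (hpz z hz)
  obtain ⟨r, hr, hUr⟩ : ∃ r > 0, U ⊆ ball p r := by
    obtain ⟨r, hr⟩ := hUb.subset_ball p
    exact ⟨max r 1, by simp, hr.trans (ball_subset_ball (le_max_left _ _))⟩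
  refine not_hasContLog_zpow_sphere (p := p) hr hn
    (((HasContLog.of_simplyConnected hFc hF0).mono (subset_univ _)).congr fun z hz => ?_)
  have hzU : z ∉ U := fun h => (mem_ball.1 (hUr h)).ne hz
  simp [hF, hzU]

lemma hasContLog_div_of_isPreconnected {K S : Set ℂ} (hK : IsCompact K) (hS : IsPreconnected S)
    (hSK : Disjoint S K) {p q : ℂ} (hp : p ∈ S) (hq : q ∈ S) :
    HasContLog (fun z => (z - p) / (z - q)) K := by
  have hne : ∀ x ∈ S, ∀ z ∈ K, z - x ≠ 0 := fun x hx z hz h =>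
    hSK.ne_of_mem hx hz (sub_eq_zero.1 h).symm
  refine hS.induction₂ (fun p q => HasContLog (fun z => (z - p) / (z - q)) K) ?_ ?_ ?_ hp hq
  · intro x hx
    have hx' : x ∈ Kᶜ := fun h => hSK.ne_of_mem hx h rfl
    obtain ⟨ε, hε, hb⟩ := Metric.isOpen_iff.1 hK.isClosed.isOpen_compl x hx'
    refine nhdsWithin_le_nhds (Filter.mem_of_superset (ball_mem_nhds x hε) fun y hy => ?_)
    have hε' : ∀ z ∈ K, ε ≤ ‖z - x‖ := fun z hz => by
      by_contra! h
      exact hb (mem_ball_iff_norm.2 h) hz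
    have h_inv : HasContLog (fun z => (z - y) / (z - x)) K := by
      refine .of_norm_sub_lt (c := 1) (.div (by fun_prop) (by fun_prop) (hne x hx)) fun z hz => ?_
      have h0 := hne x hx z hz
      rw [norm_one, div_sub_one h0, norm_div, div_lt_one (norm_pos_iff.2 h0),
        sub_sub_sub_cancel_left, norm_sub_rev]
      exact (mem_ball_iff_norm.1 hy).trans_le (hε' z hz)
    exact h_inv.inv.congr fun z _ => (inv_div _ _).symm
  · intro x y w _ hy _ hxy hyw
    exact (hxy.mul hyw).congr fun z hz => (div_mul_div_cancel₀ (hne y hy z hz)).symm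
  · intro x y _ _ h
    exact h.inv.congr fun z _ => (inv_div _ _).symm

section

variable {E : Type*} [NormedAddCommGroup E] [NormedSpace ℝ E]

lemma isPreconnected_compl_closedBall (hE : 1 < Module.rank ℝ E) (c : E) (r : ℝ) :
    IsPreconnected (closedBall c r)ᶜ := by
  rcases lt_or_ge r 0 with hr | hr
  · simpa [closedBall_eq_empty.2 hr] using isPreconnected_univ
  have : (closedBall c r)ᶜ = (fun w : ℝ × E => c + w.1 • w.2) '' (Ioi r ×ˢ sphere (0 : E) 1) := by
    ext z
    simp only [mem_compl_iff, mem_closedBall, not_le, mem_image, mem_prod, mem_Ioi,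
      mem_sphere_iff_norm, sub_zero, Prod.exists]
    constructor
    · intro h
      rw [dist_eq_norm] at h
      have h0 : ‖z - c‖ ≠ 0 := (hr.trans_lt h).ne'
      exact ⟨‖z - c‖, ‖z - c‖⁻¹ • (z - c), ⟨h, by simp [norm_smul, h0]⟩, by simp [smul_smul, h0]⟩
    · rintro ⟨a, b, ⟨ha, hb⟩, rfl⟩
      simp [norm_smul, hb, abs_of_pos (hr.trans_lt ha), ha]
  rw [this]
  exact (isPreconnected_Ioi.prod (isPreconnected_sphere hE 0 1)).image _ (by fun_prop)

lemma connectedComponentIn_eq_of_not_isBounded (hE : 1 < Module.rank ℝ E) {K : Set E}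
    (hK : Bornology.IsBounded K) {p q : E}
    (hp : ¬ Bornology.IsBounded (connectedComponentIn Kᶜ p))
    (hq : ¬ Bornology.IsBounded (connectedComponentIn Kᶜ q)) :
    connectedComponentIn Kᶜ p = connectedComponentIn Kᶜ q := by
  obtain ⟨r, hr⟩ := hK.subset_closedBall 0
  have exists_far : ∀ {p}, ¬ Bornology.IsBounded (connectedComponentIn Kᶜ p) →
      ∃ x ∈ connectedComponentIn Kᶜ p, x ∉ closedBall (0 : E) r := fun hp => by
    by_contra! h
    exact hp (isBounded_closedBall.subset h)
  obtain ⟨x, hx, hxr⟩ := exists_far hp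
  obtain ⟨y, hy, hyr⟩ := exists_far hq
  rw [connectedComponentIn_eq hx, connectedComponentIn_eq hy]
  exact connectedComponentIn_eq ((isPreconnected_compl_closedBall hE 0
    r).subset_connectedComponentIn hxr (compl_subset_compl.2 hr) hyr)

end

lemma isPreconnected_of_connectedComponentIn_eq {X : Type*} [TopologicalSpace X] {S : Set X}
    (h : ∀ x ∈ S, ∀ y ∈ S, connectedComponentIn S x = connectedComponentIn S y) :
    IsPreconnected S :=
  isPreconnected_of_forall_pair fun x hx y hy =>
    ⟨connectedComponentIn S x, connectedComponentIn_subset _ _, mem_connectedComponentIn hx,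
      h x hx y hy ▸ mem_connectedComponentIn hy, isPreconnected_connectedComponentIn⟩

lemma frontier_connectedComponentIn_subset {X : Type*} [TopologicalSpace X]
    [LocallyConnectedSpace X] {K : Set X} (hK : IsClosed K) {p : X} :
    frontier (connectedComponentIn Kᶜ p) ⊆ K := by
  intro z hz
  by_contra hzK
  have ho : IsOpen (connectedComponentIn Kᶜ p) := hK.isOpen_compl.connectedComponentIn
  obtain ⟨y, hy, hyp⟩ := mem_closure_iff.1 hz.1 _
    (hK.isOpen_compl.connectedComponentIn (x := z)) (mem_connectedComponentIn hzK)
  rw [ho.frontier_eq] at hz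
  apply hz.2
  rw [connectedComponentIn_eq hyp, ← connectedComponentIn_eq hy]
  exact mem_connectedComponentIn hzK

lemma notMem_closure_connectedComponentIn {X : Type*} [TopologicalSpace X]
    [LocallyConnectedSpace X] {K : Set X} (hK : IsClosed K) {p q : X} (hq : q ∉ K)
    (hpq : connectedComponentIn Kᶜ p ≠ connectedComponentIn Kᶜ q) :
    q ∉ closure (connectedComponentIn Kᶜ p) := by
  rw [closure_eq_self_union_frontier]
  rintro (h | h)
  exacts [hpq (connectedComponentIn_eq h), hq (frontier_connectedComponentIn_subset hK h)]

lemma not_isBounded_connectedComponentIn_of_hasContLog {K : Set ℂ} (hK : IsClosed K) {p q : ℂ}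
    (hp : p ∉ K) (hq : q ∉ K) (h : HasContLog (fun z => (z - p) / (z - q)) K)
    (hpq : connectedComponentIn Kᶜ p ≠ connectedComponentIn Kᶜ q) :
    ¬ Bornology.IsBounded (connectedComponentIn Kᶜ p) := by
  intro hb
  refine not_hasContLog_frontier (n := 1) hK.isOpen_compl.connectedComponentIn hb
    (mem_connectedComponentIn hp) one_ne_zero (f := fun z => z - q) (by fun_prop) ?_
    ((h.mono (frontier_connectedComponentIn_subset hK)).congr fun z _ => by simp)
  rintro z hz h0
  obtain rfl := sub_eq_zero.1 h0
  exact notMem_closure_connectedComponentIn hK hq hpq hz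

lemma connectedComponentIn_eq_of_hasContLog {K : Set ℂ} (hK : IsCompact K) {p q : ℂ}
    (hp : p ∉ K) (hq : q ∉ K) (h : HasContLog (fun z => (z - p) / (z - q)) K) :
    connectedComponentIn Kᶜ p = connectedComponentIn Kᶜ q := by
  by_contra hpq
  exact hpq (connectedComponentIn_eq_of_not_isBounded (by simp) hK.isBounded
    (not_isBounded_connectedComponentIn_of_hasContLog hK.isClosed hp hq h hpq)
    (not_isBounded_connectedComponentIn_of_hasContLog hK.isClosed hq hp
      (h.inv.congr fun z _ => (inv_div _ _).symm) (Ne.symm hpq)))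

theorem connectedComponentIn_compl_union_eq {A B S T : Set ℂ} (hA : IsCompact A) (hB : IsCompact B)
    (hAB : IsPreconnected (A ∩ B)) (hS : IsPreconnected S) (hT : IsPreconnected T)
    (hSA : Disjoint S A) (hTB : Disjoint T B) {p q : ℂ} (hpS : p ∈ S) (hqS : q ∈ S)
    (hpT : p ∈ T) (hqT : q ∈ T) :
    connectedComponentIn (A ∪ B)ᶜ p = connectedComponentIn (A ∪ B)ᶜ q := by
  have hne : ∀ x ∈ S, x ∈ T → x ∉ A ∪ B := by
    rintro x hx hx' (h | h)
    exacts [hSA.ne_of_mem hx h rfl, hTB.ne_of_mem hx' h rfl]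
  exact connectedComponentIn_eq_of_hasContLog (hA.union hB) (hne p hpS hpT) (hne q hqS hqT)
    (.union_of_isPreconnected_inter hA.isClosed hB.isClosed hAB
      (hasContLog_div_of_isPreconnected hA hS hSA hpS hqS)
      (hasContLog_div_of_isPreconnected hB hT hTB hpT hqT))

lemma hasContLog_sub_of_isPreconnected_compl {K : Set ℂ} (hK : IsCompact K)
    (hKc : IsPreconnected Kᶜ) {a : ℂ} (ha : a ∉ K) : HasContLog (fun z => z - a) K := by
  obtain ⟨r, hr0, hr⟩ := hK.isBounded.subset_ball_lt 0 0
  have hq : (r : ℂ) ∉ K := fun h => by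
    have := hr h
    simp [abs_of_pos hr0] at this
  have hr_log : HasContLog (fun z : ℂ => z - r) K :=
    .of_norm_sub_lt (c := -r) (by fun_prop) fun z hz => by
      simpa [abs_of_pos hr0] using hr hz
  refine ((hasContLog_div_of_isPreconnected hK hKc disjoint_compl_left ha hq).mul hr_log).congr
    fun z hz => (div_mul_cancel₀ _ (sub_ne_zero.2 ?_)).symm
  rintro rfl
  exact hq hz

/-! ### Borsuk's theorem -/

/-- A full compact set, that is, one which does not separate the plane. -/
structure IsFullCompact (K : Set ℂ) : Prop where
  isCompact : IsCompact K
  isPreconnected_compl : IsPreconnected Kᶜ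

namespace IsFullCompact

variable {K : Set ℂ}

lemma inter_re_preimage {C : Set ℝ} (hK : IsFullCompact K) (hC : IsClosed C)
    (hCc : Convex ℝ Cᶜ) (hCb : ¬ Bornology.IsBounded Cᶜ) :
    IsFullCompact (K ∩ Complex.re ⁻¹' C) := by
  refine ⟨hK.isCompact.inter_right (hC.preimage Complex.continuous_re), ?_⟩
  obtain ⟨z, hzC, hzK⟩ : ∃ z ∈ Complex.re ⁻¹' Cᶜ, z ∉ K := by
    by_contra! h
    refine hCb ?_
    rw [← image_preimage_eq Cᶜ Complex.re_surjective]
    exact Complex.reCLM.lipschitz.isBounded_image (hK.isCompact.isBounded.subset h)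
  rw [compl_inter, ← preimage_compl]
  exact hK.isPreconnected_compl.union' ⟨z, hzK, hzC⟩
    (hCc.is_linear_preimage Complex.reLm.isLinear).isPreconnected

lemma inter_re_preimage_Iic (hK : IsFullCompact K) (a : ℝ) :
    IsFullCompact (K ∩ Complex.re ⁻¹' Iic a) :=
  hK.inter_re_preimage isClosed_Iic (by simpa using convex_Ioi a)
    fun h => not_bddAbove_Ioi a (by simpa using h.bddAbove)

lemma inter_re_preimage_Ici (hK : IsFullCompact K) (a : ℝ) :
    IsFullCompact (K ∩ Complex.re ⁻¹' Ici a) :=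
  hK.inter_re_preimage isClosed_Ici (by simpa using convex_Iio a)
    fun h => not_bddBelow_Iio a (by simpa using h.bddBelow)

lemma inter_re_preimage_Icc (hK : IsFullCompact K) (a b : ℝ) :
    IsFullCompact (K ∩ Complex.re ⁻¹' Icc a b) := by
  rw [← Ici_inter_Iic, preimage_inter, ← inter_assoc]
  exact (hK.inter_re_preimage_Ici a).inter_re_preimage_Iic b

lemma preimage_homeomorph (hK : IsFullCompact K) (e : ℂ ≃ₜ ℂ) : IsFullCompact (e ⁻¹' K) :=
  ⟨e.isCompact_preimage.2 hK.isCompact,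
    preimage_compl (f := e) ▸ e.isPreconnected_preimage.2 hK.isPreconnected_compl⟩

end IsFullCompact

lemma clog_neg_of_im_pos {w : ℂ} (hw : 0 < w.im) :
    Complex.log (-w) = Complex.log w - Real.pi * Complex.I := by
  simp only [Complex.log, norm_neg, Complex.arg_neg_eq_arg_sub_pi_of_im_pos hw]
  push_cast
  ring

lemma clog_neg_of_im_neg {w : ℂ} (hw : w.im < 0) :
    Complex.log (-w) = Complex.log w + Real.pi * Complex.I := by
  rw [← neg_neg w, clog_neg_of_im_pos (w := -w) (by simpa using hw), neg_neg]
  ring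

lemma sub_mem_slitPlane_of_re_le {z p : ℂ} (h : p.re ≤ z.re) (hz : z ≠ p) :
    z - p ∈ Complex.slitPlane := by
  rw [Complex.mem_slitPlane_iff, Complex.sub_re, Complex.sub_im, sub_pos]
  rcases h.lt_or_eq with h | h
  · exact .inl h
  · exact .inr fun him => hz (Complex.ext h.symm (sub_eq_zero.1 him))

/-- The function `D` on the part of `K` on the line `re z = a` is the difference of two continuous
`2πiℤ`-valued functions, one on each of the two parts into which this line cuts `K`; in other words
it is a coboundary for the cover of `K` by two closed half planes. -/
def IsLineCoboundary (K : Set ℂ) (a : ℝ) (D : ℂ → ℂ) : Prop :=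
  ∃ u v : ℂ → ℂ,
    ContinuousOn u (K ∩ Complex.re ⁻¹' Iic a) ∧ ContinuousOn v (K ∩ Complex.re ⁻¹' Ici a) ∧
    (∀ z ∈ K ∩ Complex.re ⁻¹' Iic a, Complex.exp (u z) = 1) ∧
    (∀ z ∈ K ∩ Complex.re ⁻¹' Ici a, Complex.exp (v z) = 1) ∧
    ∀ z ∈ K, z.re = a → v z - u z = D z

namespace IsLineCoboundary

variable {K : Set ℂ} {a : ℝ} {D D' : ℂ → ℂ}

lemma zero : IsLineCoboundary K a 0 :=
  ⟨0, 0, continuousOn_const, continuousOn_const, by simp, by simp, by simp⟩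

lemma add (h : IsLineCoboundary K a D) (h' : IsLineCoboundary K a D') :
    IsLineCoboundary K a (D + D') := by
  obtain ⟨u, v, hu, hv, hu1, hv1, huv⟩ := h
  obtain ⟨u', v', hu', hv', hu1', hv1', huv'⟩ := h'
  refine ⟨u + u', v + v', hu.add hu', hv.add hv', fun z hz => ?_, fun z hz => ?_,
    fun z hz hza => ?_⟩
  · rw [Pi.add_apply, Complex.exp_add, hu1 z hz, hu1' z hz, one_mul]
  · rw [Pi.add_apply, Complex.exp_add, hv1 z hz, hv1' z hz, one_mul]
  · simp only [Pi.add_apply, ← huv z hz hza, ← huv' z hz hza]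
    ring

lemma congr (h : IsLineCoboundary K a D) (hD : ∀ z ∈ K, z.re = a → D' z = D z) :
    IsLineCoboundary K a D' := by
  obtain ⟨u, v, hu, hv, hu1, hv1, huv⟩ := h
  exact ⟨u, v, hu, hv, hu1, hv1, fun z hz hza => (huv z hz hza).trans (hD z hz hza).symm⟩

end IsLineCoboundary

/-- The principal logarithms of `z - p` on the two sides of the vertical line through `p` differ by
a jump at `p`; comparing both with a logarithm on all of `K` exhibits the jump as a coboundary. -/
lemma IsFullCompact.isLineCoboundary_step {K : Set ℂ} (hK : IsFullCompact K) {p : ℂ} (hp : p ∉ K)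
    (c : ℤ) : IsLineCoboundary K p.re
      (fun z => if z.im ≤ p.im then 0 else c * (2 * Real.pi * Complex.I)) := by
  obtain ⟨g, hg, hexp⟩ := hasContLog_sub_of_isPreconnected_compl hK.isCompact
    hK.isPreconnected_compl hp
  have hne : ∀ z ∈ K, z ≠ p := fun z hz h => hp (h ▸ hz)
  have hleft : ∀ z ∈ K ∩ Complex.re ⁻¹' Iic p.re, -(z - p) ∈ Complex.slitPlane := fun z hz => by
    simpa using sub_mem_slitPlane_of_re_le hz.2 (hne z hz.1).symm
  have hright : ∀ z ∈ K ∩ Complex.re ⁻¹' Ici p.re, z - p ∈ Complex.slitPlane := fun z hz =>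
    sub_mem_slitPlane_of_re_le hz.2 (hne z hz.1)
  refine ⟨fun z => c * (Complex.log (-(z - p)) - g z - Real.pi * Complex.I),
    fun z => c * (Complex.log (z - p) - g z), ?_, ?_, fun z hz => ?_, fun z hz => ?_,
    fun z hz hzp => ?_⟩
  · have := hg.mono (inter_subset_left (t := Complex.re ⁻¹' Iic p.re))
    exact continuousOn_const.mul (((ContinuousOn.clog (by fun_prop) hleft).sub this).sub
      continuousOn_const)
  · have := hg.mono (inter_subset_left (t := Complex.re ⁻¹' Ici p.re))
    exact continuousOn_const.mul ((ContinuousOn.clog (by fun_prop) hright).sub this)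
  · have h0 := Complex.slitPlane_ne_zero (hleft z hz)
    have h1 := neg_ne_zero.1 h0
    rw [Complex.exp_int_mul, Complex.exp_sub, Complex.exp_sub, Complex.exp_log h0, ← hexp z hz.1,
      Complex.exp_pi_mul_I, neg_div, div_self h1, div_self (by simp), one_zpow]
  · have h0 := Complex.slitPlane_ne_zero (hright z hz)
    rw [Complex.exp_int_mul, Complex.exp_sub, Complex.exp_log h0, ← hexp z hz.1, div_self h0,
      one_zpow]
  · dsimp only
    split_ifs with him
    · have him' : (z - p).im < 0 := by
        rw [Complex.sub_im, sub_neg]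
        exact him.lt_of_ne fun h => hne z hz (Complex.ext hzp h)
      rw [clog_neg_of_im_neg him']
      ring
    · rw [clog_neg_of_im_pos (by simpa using him)]
      ring

lemma exists_pos_eq_of_dist_le_of_int_mul {M : Set ℂ} (hM : IsCompact M) {D : ℂ → ℂ}
    (hD : ContinuousOn D M) (hint : ∀ z ∈ M, ∃ n : ℤ, D z = n * (2 * Real.pi * Complex.I)) :
    ∃ η > 0, ∀ z ∈ M, ∀ w ∈ M, dist z w ≤ η → D z = D w := by
  obtain ⟨η, hη, hηD⟩ := Metric.uniformContinuousOn_iff_le.1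
    (hM.uniformContinuousOn_of_continuous hD) 1 one_pos
  refine ⟨η, hη, fun z hz w hw hzw => ?_⟩
  have hdist := hηD z hz w hw hzw
  obtain ⟨n, hn⟩ := hint z hz
  obtain ⟨m, hm⟩ := hint w hw
  rw [hn, hm, dist_eq_norm, ← sub_mul, norm_mul, ← Int.cast_sub, Complex.norm_intCast] at hdist
  have hnm : |((n - m : ℤ) : ℝ)| < 1 := by
    have h2pi : 1 < ‖(2 * Real.pi * Complex.I : ℂ)‖ := by
      simp only [norm_mul, Complex.norm_ofNat, Complex.norm_real, Complex.norm_I, mul_one,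
        Real.norm_of_nonneg Real.pi_pos.le]
      linarith [Real.pi_gt_three]
    nlinarith [abs_nonneg ((n - m : ℤ) : ℝ)]
  have hnm_eq : n = m := sub_eq_zero.1 (Int.abs_lt_one_iff.1 (by exact_mod_cast hnm))
  rw [hn, hm, hnm_eq]

/-- One step upwards along the line: a coboundary matching `D` below height `t` and constant above
is corrected by a jump at height `t`, which is possible unless `K` meets the line there; in that
case there is nothing to correct. -/
lemma IsFullCompact.exists_isLineCoboundary_extend {K : Set ℂ} (hK : IsFullCompact K) {a t t' : ℝ}
    {D : ℂ → ℂ} (ht : t ≤ t') {m : ℤ}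
    (hD : ∀ z ∈ K, z.re = a → z.im ∈ Icc t t' → D z = m * (2 * Real.pi * Complex.I))
    (h : ∃ D', IsLineCoboundary K a D' ∧ ∃ c : ℤ, ∀ z ∈ K, z.re = a → (z.im ≤ t → D' z = D z) ∧
      (t ≤ z.im → D' z = c * (2 * Real.pi * Complex.I))) :
    ∃ D', IsLineCoboundary K a D' ∧ ∃ c : ℤ, ∀ z ∈ K, z.re = a → (z.im ≤ t' → D' z = D z) ∧
      (t' ≤ z.im → D' z = c * (2 * Real.pi * Complex.I)) := by
  obtain ⟨D', hD', c, hc⟩ := h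
  by_cases hp : (⟨a, t⟩ : ℂ) ∈ K
  · have hcm : (c : ℂ) * (2 * Real.pi * Complex.I) = m * (2 * Real.pi * Complex.I) := by
      rw [← (hc _ hp rfl).2 le_rfl, (hc _ hp rfl).1 le_rfl, hD _ hp rfl ⟨le_rfl, ht⟩]
    refine ⟨D', hD', c, fun z hz hza => ⟨fun hzt => ?_, fun hzt => (hc z hz hza).2 (ht.trans hzt)⟩⟩
    rcases le_total z.im t with h | h
    · exact (hc z hz hza).1 h
    · rw [(hc z hz hza).2 h, hcm, hD z hz hza ⟨h, hzt⟩]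
  · have hne : ∀ z ∈ K, z.re = a → z.im ≠ t := fun z hz hza hzt =>
      hp (by rwa [← hza, ← hzt])
    refine ⟨_, hD'.add (hK.isLineCoboundary_step hp (m - c)), m, fun z hz hza => ?_⟩
    have h_above : t ≤ z.im → D' z + (m - c : ℤ) * (2 * Real.pi * Complex.I) =
        m * (2 * Real.pi * Complex.I) := fun h => by
      rw [(hc z hz hza).2 h]
      push_cast
      ring
    simp only [Pi.add_apply]
    split_ifs with h
    · have hlt := h.lt_of_ne (hne z hz hza)
      exact ⟨fun _ => by rw [add_zero, (hc z hz hza).1 h],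
        fun h' => absurd (ht.trans h') hlt.not_ge⟩
    · rw [h_above (not_le.1 h).le]
      exact ⟨fun h' => (hD z hz hza ⟨(not_le.1 h).le, h'⟩).symm, fun _ => rfl⟩

lemma IsFullCompact.isLineCoboundary {K : Set ℂ} (hK : IsFullCompact K) {a : ℝ} {D : ℂ → ℂ}
    (hD : ContinuousOn D (K ∩ Complex.re ⁻¹' {a}))
    (hint : ∀ z ∈ K, z.re = a → ∃ n : ℤ, D z = n * (2 * Real.pi * Complex.I)) :
    IsLineCoboundary K a D := by
  obtain ⟨η, hη, hconst⟩ := exists_pos_eq_of_dist_le_of_int_mul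
    (hK.isCompact.inter_right (isClosed_singleton.preimage Complex.continuous_re)) hD
    fun z hz => hint z hz.1 hz.2
  have hsegment : ∀ t, ∃ m : ℤ, ∀ z ∈ K, z.re = a → z.im ∈ Icc t (t + η) →
      D z = m * (2 * Real.pi * Complex.I) := fun t => by
    by_cases hex : ∃ w ∈ K, w.re = a ∧ w.im ∈ Icc t (t + η)
    · obtain ⟨w, hw, hwa, hwt⟩ := hex
      obtain ⟨m, hm⟩ := hint w hw hwa
      refine ⟨m, fun z hz hza hzt => (hconst z ⟨hz, hza⟩ w ⟨hw, hwa⟩ ?_).trans hm⟩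
      rw [Complex.dist_of_re_eq (hza.trans hwa.symm)]
      exact (Real.dist_le_of_mem_Icc hzt hwt).trans (by linarith)
    · exact ⟨0, fun z hz hza hzt => absurd ⟨z, hz, hza, hzt⟩ hex⟩
  obtain ⟨R, hR⟩ := hK.isCompact.isBounded.subset_closedBall 0
  have him : ∀ z ∈ K, |z.im| ≤ R := fun z hz =>
    (Complex.abs_im_le_norm z).trans (mem_closedBall_zero_iff.1 (hR hz))
  have hpartial : ∀ n : ℕ, ∃ D', IsLineCoboundary K a D' ∧ ∃ c : ℤ, ∀ z ∈ K, z.re = a →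
      (z.im ≤ -R - 1 + n * η → D' z = D z) ∧
      (-R - 1 + n * η ≤ z.im → D' z = c * (2 * Real.pi * Complex.I)) := fun n => by
    induction n with
    | zero =>
      refine ⟨0, .zero, 0, fun z hz _ => ⟨fun h => ?_, fun _ => by simp⟩⟩
      rw [Nat.cast_zero, zero_mul] at h
      linarith [(abs_le.1 (him z hz)).1]
    | succ n ih =>
      obtain ⟨m, hm⟩ := hsegment (-R - 1 + n * η)
      rw [add_assoc, ← add_one_mul, ← Nat.cast_succ] at hm
      refine hK.exists_isLineCoboundary_extend ?_ hm ih
      gcongr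
      simp
  obtain ⟨n, hn⟩ := exists_nat_gt ((2 * R + 1) / η)
  obtain ⟨D', hD', _, hc⟩ := hpartial n
  rw [div_lt_iff₀ hη] at hn
  exact hD'.congr fun z hz hza => ((hc z hz hza).1 (by linarith [(abs_le.1 (him z hz)).2])).symm

namespace IsFullCompact

variable {K : Set ℂ} {f : ℂ → ℂ}

lemma hasContLog_of_halfPlanes (hK : IsFullCompact K) (a : ℝ)
    (hleft : HasContLog f (K ∩ Complex.re ⁻¹' Iic a))
    (hright : HasContLog f (K ∩ Complex.re ⁻¹' Ici a)) : HasContLog f K := by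
  obtain ⟨g, hg, hfg⟩ := hleft
  obtain ⟨g', hg', hfg'⟩ := hright
  have hline : K ∩ Complex.re ⁻¹' {a} ⊆ (K ∩ Complex.re ⁻¹' Iic a) ∩ (K ∩ Complex.re ⁻¹' Ici a) :=
    fun z ⟨hz, hza⟩ => ⟨⟨hz, hza.le⟩, ⟨hz, hza.ge⟩⟩
  obtain ⟨u, v, hu, hv, hu1, hv1, huv⟩ := hK.isLineCoboundary (a := a) (D := fun z => g z - g' z)
    ((hg.mono fun _ hz => (hline hz).1).sub (hg'.mono fun _ hz => (hline hz).2))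
    fun z hz hza => by
      have hexp := (hfg z (hline ⟨hz, hza⟩).1).symm.trans (hfg' z (hline ⟨hz, hza⟩).2)
      obtain ⟨n, hn⟩ := Complex.exp_eq_exp_iff_exists_int.1 hexp
      exact ⟨n, by rw [hn, add_sub_cancel_left]⟩
  have hcover : (K ∩ Complex.re ⁻¹' Iic a) ∪ (K ∩ Complex.re ⁻¹' Ici a) = K := by
    rw [← inter_union_distrib_left, ← preimage_union, Iic_union_Ici, preimage_univ, inter_univ]
  have hclosed {C : Set ℝ} (hC : IsClosed C) : IsClosed (K ∩ Complex.re ⁻¹' C) :=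
    hK.isCompact.isClosed.inter (hC.preimage Complex.continuous_re)
  rw [← hcover]
  refine .union_of_eqOn (hclosed isClosed_Iic) (hclosed isClosed_Ici) (hg.add hu)
    (fun z hz => ?_) (hg'.add hv) (fun z hz => ?_) fun z hz => ?_
  · rw [Pi.add_apply, Complex.exp_add, hu1 z hz, mul_one, hfg z hz]
  · rw [Pi.add_apply, Complex.exp_add, hv1 z hz, mul_one, hfg' z hz]
  · have hjump : v z - u z = g z - g' z := huv z hz.1.1 (le_antisymm hz.1.2 hz.2.2)
    rw [Pi.add_apply, Pi.add_apply]
    linear_combination -hjump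

lemma hasContLog_of_strips (hK : IsFullCompact K) {h : ℝ} (hh : 0 < h)
    (hstrip : ∀ a, HasContLog f (K ∩ Complex.re ⁻¹' Icc a (a + h))) : HasContLog f K := by
  obtain ⟨R, hR⟩ := hK.isCompact.isBounded.subset_closedBall 0
  have hre : ∀ z ∈ K, |z.re| ≤ R := fun z hz =>
    (Complex.abs_re_le_norm z).trans (mem_closedBall_zero_iff.1 (hR hz))
  have hlog : ∀ n : ℕ, HasContLog f (K ∩ Complex.re ⁻¹' Iic (-R + n * h)) := fun n => by
    induction n with
    | zero =>
      refine (hstrip (-R)).mono fun z ⟨hz, hz'⟩ => ⟨hz, (abs_le.1 (hre z hz)).1, ?_⟩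
      rw [mem_preimage, mem_Iic, Nat.cast_zero, zero_mul] at hz'
      linarith
    | succ n ih =>
      rw [Nat.cast_succ, add_one_mul, ← add_assoc]
      refine (hK.inter_re_preimage_Iic _).hasContLog_of_halfPlanes (-R + n * h)
        (ih.mono fun z hz => ⟨hz.1.1, hz.2⟩) ((hstrip _).mono fun z hz => ⟨hz.1.1, hz.2, hz.1.2⟩)
  obtain ⟨n, hn⟩ := exists_nat_gt (2 * R / h)
  rw [div_lt_iff₀ hh] at hn
  exact (hlog n).mono fun z hz => ⟨hz, show z.re ≤ _ by linarith [(abs_le.1 (hre z hz)).2]⟩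

lemma hasContLog_of_horizontal_strips (hK : IsFullCompact K) {h : ℝ} (hh : 0 < h)
    (hstrip : ∀ b, HasContLog f (K ∩ Complex.im ⁻¹' Icc b (b + h))) : HasContLog f K := by
  let e : ℂ ≃ₜ ℂ := Homeomorph.mulLeft₀ Complex.I Complex.I_ne_zero
  have hlog : HasContLog (f ∘ e) (e ⁻¹' K) :=
    (hK.preimage_homeomorph e).hasContLog_of_strips hh fun a =>
      (hstrip a).comp e.continuous.continuousOn fun z hz => ⟨hz.1, by simpa [e] using hz.2⟩
  refine (hlog.comp (φ := e.symm) e.symm.continuous.continuousOn (M := K)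
    fun z hz => by simpa using hz).congr fun z _ => by simp

theorem hasContLog (hK : IsFullCompact K) (hf : ContinuousOn f K) (hf0 : ∀ z ∈ K, f z ≠ 0) :
    HasContLog f K := by
  rcases K.eq_empty_or_nonempty with rfl | hne
  · exact ⟨0, continuousOn_empty _, by simp⟩
  obtain ⟨x, hx, hmin⟩ := hK.isCompact.exists_isMinOn hne hf.norm
  obtain ⟨δ, hδ, hfδ⟩ := Metric.uniformContinuousOn_iff.1
    (hK.isCompact.uniformContinuousOn_of_continuous hf) _ (norm_pos_iff.2 (hf0 x hx))
  have hδ3 : 0 < δ / 3 := by positivity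
  refine hK.hasContLog_of_strips hδ3 fun a =>
    (hK.inter_re_preimage_Icc _ _).hasContLog_of_horizontal_strips hδ3 fun b => ?_
  rcases eq_empty_or_nonempty
    ((K ∩ Complex.re ⁻¹' Icc a (a + δ / 3)) ∩ Complex.im ⁻¹' Icc b (b + δ / 3)) with h | ⟨w, hw⟩
  · rw [h]
    exact ⟨0, continuousOn_empty _, by simp⟩
  refine .of_norm_sub_lt (c := f w) (hf.mono fun z hz => hz.1.1) fun z hz => ?_
  rw [← dist_eq_norm]
  refine (hfδ z hz.1.1 w hw.1.1 ?_).trans_le (isMinOn_iff.1 hmin w hw.1.1)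
  have hre := Real.dist_le_of_mem_Icc hz.1.2 hw.1.2
  have him := Real.dist_le_of_mem_Icc hz.2 hw.2
  rw [Real.dist_eq, ← Complex.sub_re] at hre
  rw [Real.dist_eq, ← Complex.sub_im] at him
  rw [dist_eq_norm]
  linarith [Complex.norm_le_abs_re_add_abs_im (z - w)]

end IsFullCompact

/-! ### Jordan curves -/

lemma mul_exp_mul_I_mem_sphere {u : ℂ} (hu : u ∈ sphere (0 : ℂ) 1) (t : ℝ) :
    u * Complex.exp (t * Complex.I) ∈ sphere (0 : ℂ) 1 := by
  simpa [Complex.norm_exp_ofReal_mul_I] using hu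

lemma div_mem_sphere {u v : ℂ} (hu : u ∈ sphere (0 : ℂ) 1) (hv : v ∈ sphere (0 : ℂ) 1) :
    u / v ∈ sphere (0 : ℂ) 1 := by
  simp_all

lemma exp_arg_mul_I_of_mem_sphere {u : ℂ} (hu : u ∈ sphere (0 : ℂ) 1) :
    Complex.exp (u.arg * Complex.I) = u := by
  simpa [mem_sphere_zero_iff_norm.1 hu] using Complex.norm_mul_exp_arg_mul_I u

lemma mem_slitPlane_of_mem_sphere {u : ℂ} (hu : u ∈ sphere (0 : ℂ) 1) (hne : u ≠ -1) :
    u ∈ Complex.slitPlane := by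
  refine Complex.mem_slitPlane_iff_arg.2 ⟨fun harg => hne ?_, ne_of_mem_sphere hu one_ne_zero⟩
  rw [← exp_arg_mul_I_of_mem_sphere hu, harg, Complex.exp_pi_mul_I]

lemma isPreconnected_sphere_diff_singleton {u : ℂ} (hu : u ∈ sphere (0 : ℂ) 1) :
    IsPreconnected (sphere (0 : ℂ) 1 \ {u}) := by
  obtain ⟨u, rfl⟩ : ∃ v : Circle, (v : ℂ) = u := ⟨⟨u, hu⟩, rfl⟩
  have himage : sphere (0 : ℂ) 1 \ {(u : ℂ)} = ((↑) : Circle → ℂ) '' {u}ᶜ := by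
    ext z
    exact ⟨fun hz => ⟨⟨z, hz.1⟩, fun h => hz.2 (congr_arg Subtype.val h), rfl⟩,
      fun ⟨v, hv, hvz⟩ => hvz ▸ ⟨v.2, fun h => hv (Subtype.ext h)⟩⟩
  rw [himage]
  exact (Circle.isPathConnected_compl_singleton u).isConnected.isPreconnected.image _
    continuous_subtype_val.continuousOn

lemma exists_zpow_hasContLog_sphere {f : ℂ → ℂ} (hf : ContinuousOn f (sphere 0 1))
    (hf0 : ∀ u ∈ sphere (0 : ℂ) 1, f u ≠ 0) :
    ∃ n : ℤ, HasContLog (fun u => f u / u ^ n) (sphere 0 1) := by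
  have hmem : ∀ t : ℝ, Complex.exp (t * Complex.I) ∈ sphere (0 : ℂ) 1 := fun t => by
    simp [Complex.norm_exp_ofReal_mul_I]
  obtain ⟨k, hk, hfk⟩ := HasContLog.of_simplyConnected
    (f := fun t : ℝ => f (Complex.exp (t * Complex.I)))
    (hf.comp_continuous (by fun_prop) hmem) fun t => hf0 _ (hmem t)
  rw [continuousOn_univ] at hk
  obtain ⟨n, hn⟩ := exists_eqOn_add_of_exp_eq (K := (univ : Set ℝ)) isPreconnected_univ
    (g := fun t => k (t + 2 * Real.pi)) (g' := k) (by fun_prop) (by fun_prop) fun t _ => by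
      rw [← hfk _ trivial, ← hfk _ trivial]
      simp [add_mul, Complex.exp_add, Complex.exp_two_pi_mul_I]
  have hper : Function.Periodic (fun t : ℝ => k t - n * (t * Complex.I))
      (2 * Real.pi) := fun t => by
    simp only [hn t trivial]
    push_cast
    ring
  have hcont : Continuous (hper.lift : Real.Angle → ℂ) :=
    continuous_coinduced_dom.2 (show Continuous fun t : ℝ => k t - n * (t * Complex.I) by fun_prop)
  refine ⟨n, fun u => hper.lift (u.arg : Real.Angle), fun u hu => ?_, fun u hu => ?_⟩
  · exact hcont.continuousAt.comp_continuousWithinAt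
      (Complex.continuousAt_arg_coe_angle (ne_of_mem_sphere hu one_ne_zero)).continuousWithinAt
  · change f u / u ^ n = Complex.exp (k u.arg - n * (u.arg * Complex.I))
    rw [Complex.exp_sub, Complex.exp_int_mul, ← hfk _ trivial]
    simp only [exp_arg_mul_I_of_mem_sphere hu]

lemma exists_pos_eq_mul_exp_of_dist_lt {η : ℝ} (hη : 0 < η) :
    ∃ r > 0, ∀ u ∈ sphere (0 : ℂ) 1, ∀ v ∈ sphere (0 : ℂ) 1, dist u v < r →
      ∃ t : ℝ, |t| ≤ η ∧ v * Complex.exp (t * Complex.I) = u := by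
  have harg : ∀ᶠ w in 𝓝 (1 : ℂ), |w.arg| < η :=
    (Complex.continuousAt_arg (by simp)).abs.eventually_lt continuousAt_const (by simpa using hη)
  obtain ⟨r, hr, hball⟩ := Metric.eventually_nhds_iff.1 harg
  refine ⟨r, hr, fun u hu v hv huv => ⟨(u / v).arg, (hball ?_).le, ?_⟩⟩
  · rwa [dist_eq_norm, div_sub_one (ne_of_mem_sphere hv one_ne_zero), norm_div,
      mem_sphere_zero_iff_norm.1 hv, div_one, ← dist_eq_norm]
  · rw [exp_arg_mul_I_of_mem_sphere (div_mem_sphere hu hv),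
      mul_div_cancel₀ _ (ne_of_mem_sphere hv one_ne_zero)]

/-- A parametrization `α` of a Jordan curve `H` by the unit circle, together with its inverse `β`;
both are functions on the whole plane with arbitrary values off their respective domains. -/
structure JordanParam (H : Set ℂ) (α β : ℂ → ℂ) : Prop where
  cont : ContinuousOn α (sphere 0 1)
  cont_inv : ContinuousOn β H
  mapsTo : MapsTo α (sphere 0 1) H
  mapsTo_inv : MapsTo β H (sphere 0 1)
  left_inv : ∀ u ∈ sphere (0 : ℂ) 1, β (α u) = u
  right_inv : ∀ z ∈ H, α (β z) = z

lemma exists_jordanParam {H : Set ℂ} (e : H ≃ₜ (sphere (0 : ℂ) 1 : Set ℂ)) :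
    ∃ α β, JordanParam H α β := by
  classical
  refine ⟨fun u => if hu : u ∈ sphere (0 : ℂ) 1 then e.symm ⟨u, hu⟩ else 0,
    fun z => if hz : z ∈ H then e ⟨z, hz⟩ else 0, ?_, ?_, fun u hu => ?_, fun z hz => ?_,
    fun u hu => ?_, fun z hz => ?_⟩
  · rw [continuousOn_iff_continuous_domRestrict]
    have : Continuous fun u : sphere (0 : ℂ) 1 => (e.symm u : ℂ) := by fun_prop
    convert this using 2 with u
    simp [domRestrict]
  · rw [continuousOn_iff_continuous_domRestrict]
    have : Continuous fun u : H => (e u : ℂ) := by fun_prop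
    convert this using 2 with u
    simp [domRestrict]
  · simp only [hu, dite_true, Subtype.coe_prop]
  · simp only [hz, dite_true, Subtype.coe_prop]
  · simp only [hu, dite_true, Subtype.coe_prop, Subtype.coe_eta, Homeomorph.apply_symm_apply]
  · simp only [hz, dite_true, Subtype.coe_prop, Subtype.coe_eta, Homeomorph.symm_apply_apply]

namespace JordanParam

variable {H : Set ℂ} {α β : ℂ → ℂ}

lemma image_eq (h : JordanParam H α β) : α '' sphere 0 1 = H :=
  Subset.antisymm h.mapsTo.image_subset fun z hz => ⟨β z, h.mapsTo_inv hz, h.right_inv z hz⟩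

lemma isCompact (h : JordanParam H α β) : IsCompact H :=
  h.image_eq ▸ (isCompact_sphere 0 1).image_of_continuousOn h.cont

lemma isClosed (h : JordanParam H α β) : IsClosed H := h.isCompact.isClosed

lemma isPreconnected (h : JordanParam H α β) : IsPreconnected H :=
  h.image_eq ▸ (isPreconnected_sphere (by simp) 0 1).image _ h.cont

lemma nonempty (h : JordanParam H α β) : H.Nonempty :=
  ⟨α 1, h.mapsTo (by simp)⟩

lemma injOn_inv (h : JordanParam H α β) : InjOn β H :=
  LeftInvOn.injOn h.right_inv

lemma exists_ne (h : JordanParam H α β) {x : ℂ} (hx : x ∈ H) : ∃ y ∈ H, y ≠ x := by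
  have hneg : -β x ∈ sphere (0 : ℂ) 1 := by simpa using h.mapsTo_inv hx
  refine ⟨α (-β x), h.mapsTo hneg, fun heq => ?_⟩
  have hβ := congr_arg β heq
  rw [h.left_inv _ hneg, neg_eq_self] at hβ
  exact ne_of_mem_sphere (h.mapsTo_inv hx) one_ne_zero hβ

lemma isPreconnected_diff_singleton (h : JordanParam H α β) {x : ℂ} (hx : x ∈ H) :
    IsPreconnected (H \ {x}) := by
  have himage : H \ {x} = α '' (sphere 0 1 \ {β x}) := by
    rw [(LeftInvOn.injOn h.left_inv).image_sdiff_subset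
      (singleton_subset_iff.2 (h.mapsTo_inv hx)), image_singleton, h.right_inv x hx, h.image_eq]
  rw [himage]
  exact (isPreconnected_sphere_diff_singleton (h.mapsTo_inv hx)).image _
    (h.cont.mono sdiff_subset)

lemma exists_zpow_hasContLog (h : JordanParam H α β) {f : ℂ → ℂ} (hf : ContinuousOn f H)
    (hf0 : ∀ z ∈ H, f z ≠ 0) : ∃ n : ℤ, HasContLog (fun z => f z / β z ^ n) H := by
  obtain ⟨n, hn⟩ := exists_zpow_hasContLog_sphere (hf.comp h.cont h.mapsTo)
    fun u hu => hf0 _ (h.mapsTo hu)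
  exact ⟨n, (hn.comp h.cont_inv h.mapsTo_inv).congr fun z hz => by
    simp only [Function.comp_apply, h.right_inv z hz]⟩

lemma hasContLog_diff_singleton (h : JordanParam H α β) {x : ℂ} (hx : x ∈ H) {f : ℂ → ℂ}
    (hf : ContinuousOn f H) (hf0 : ∀ z ∈ H, f z ≠ 0) : HasContLog f (H \ {x}) := by
  have hx0 : -β x ≠ 0 := neg_ne_zero.2 (ne_of_mem_sphere (h.mapsTo_inv hx) one_ne_zero)
  have hneg : -β x ∈ sphere (0 : ℂ) 1 := by simpa using h.mapsTo_inv hx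
  have hβ : HasContLog β (H \ {x}) := by
    refine ((HasContLog.const hx0).mul (.of_slitPlane (f := fun z => β z / -β x)
      ((h.cont_inv.mono sdiff_subset).div_const _) fun z hz => ?_)).congr
      fun z _ => (mul_div_cancel₀ _ hx0).symm
    refine mem_slitPlane_of_mem_sphere (div_mem_sphere (h.mapsTo_inv hz.1) hneg) fun heq => hz.2 ?_
    rw [div_eq_iff hx0, neg_one_mul, neg_neg] at heq
    exact h.injOn_inv hz.1 hx heq
  obtain ⟨n, hn⟩ := h.exists_zpow_hasContLog hf hf0
  refine ((hn.mono sdiff_subset).mul (hβ.zpow n)).congr fun z hz => (div_mul_cancel₀ _ ?_).symm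
  exact zpow_ne_zero n (ne_of_mem_sphere (h.mapsTo_inv hz.1) one_ne_zero)

lemma frontier_eq (h : JordanParam H α β) {U : Set ℂ} (hU : IsOpen U) (hne : U.Nonempty)
    (hUb : Bornology.IsBounded U) (hUH : Disjoint U H) (hfr : frontier U ⊆ H) :
    frontier U = H := by
  obtain ⟨p, hp⟩ := hne
  refine hfr.antisymm fun x hx => ?_
  by_contra hxf
  refine not_hasContLog_frontier hU hUb hp (n := 1) one_ne_zero (f := fun _ => 1) (by fun_prop)
    (by simp) (((h.hasContLog_diff_singleton hx (f := fun z => z - p) (by fun_prop) ?_).mono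
      (subset_sdiff_singleton hfr hxf)).congr fun z _ => by simp)
  exact fun z hz h0 => hUH.ne_of_mem hp hz (sub_eq_zero.1 h0).symm

/-- If `H` did not separate the plane, the parameter `β` would have a logarithm by Borsuk's theorem,
and hence so would the identity of the circle. -/
lemma exists_isBounded_component (h : JordanParam H α β) :
    ∃ p ∉ H, Bornology.IsBounded (connectedComponentIn Hᶜ p) := by
  by_contra! hunbounded
  have hfull : IsFullCompact H := ⟨h.isCompact, isPreconnected_of_connectedComponentIn_eq
    fun x hx y hy => connectedComponentIn_eq_of_not_isBounded (by simp) h.isCompact.isBounded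
      (hunbounded x hx) (hunbounded y hy)⟩
  have hlog := (hfull.hasContLog h.cont_inv fun z hz =>
    ne_of_mem_sphere (h.mapsTo_inv hz) one_ne_zero).comp h.cont h.mapsTo
  exact not_hasContLog_zpow_sphere one_pos one_ne_zero (p := 0)
    (hlog.congr fun u hu => by simp [h.left_inv u hu])

/-- With `z - p` and `z - q` equal to `β ^ n` and `β ^ m` up to functions with a logarithm, the
quotient `(z - p) ^ m / (z - q) ^ n` has a logarithm on `H`, which forces `m = 0` around `p` and
then contradicts the winding of `z - q` around `q`. -/
lemma connectedComponentIn_eq_of_isBounded (h : JordanParam H α β) {p q : ℂ} (hp : p ∉ H)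
    (hq : q ∉ H) (hpb : Bornology.IsBounded (connectedComponentIn Hᶜ p))
    (hqb : Bornology.IsBounded (connectedComponentIn Hᶜ q)) :
    connectedComponentIn Hᶜ p = connectedComponentIn Hᶜ q := by
  by_contra hne
  have hopen : ∀ x, IsOpen (connectedComponentIn Hᶜ x) := fun x =>
    h.isClosed.isOpen_compl.connectedComponentIn
  have hfr : ∀ x, frontier (connectedComponentIn Hᶜ x) ⊆ H := fun x =>
    frontier_connectedComponentIn_subset h.isClosed
  have hsub {x : ℂ} (hx : x ∉ H) : ∀ z ∈ H, z - x ≠ 0 := fun z hz h0 =>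
    hx (sub_eq_zero.1 h0 ▸ hz)
  have hsub_q : ∀ z ∈ closure (connectedComponentIn Hᶜ p), z - q ≠ 0 := fun z hz h0 =>
    notMem_closure_connectedComponentIn h.isClosed hq hne (sub_eq_zero.1 h0 ▸ hz)
  obtain ⟨n, hn⟩ := h.exists_zpow_hasContLog (f := fun z => z - p) (by fun_prop) (hsub hp)
  obtain ⟨m, hm⟩ := h.exists_zpow_hasContLog (f := fun z => z - q) (by fun_prop) (hsub hq)
  obtain rfl : m = 0 := by
    by_contra hm0
    refine not_hasContLog_frontier (hopen p) hpb (mem_connectedComponentIn hp) hm0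
      (f := fun z => (z - q) ^ n) (.zpow₀ (by fun_prop) _ fun z hz => .inl (hsub_q z hz))
      (fun z hz => zpow_ne_zero _ (hsub_q z hz)) ?_
    refine (((hn.zpow m).div (hm.zpow n)).mono (hfr p)).congr fun z hz => ?_
    have hβ : β z ≠ 0 := ne_of_mem_sphere (h.mapsTo_inv (hfr p hz)) one_ne_zero
    simp only [div_zpow, ← zpow_mul, mul_comm n m, div_div_div_cancel_right₀ (zpow_ne_zero _ hβ)]
  exact not_hasContLog_frontier (hopen q) hqb (mem_connectedComponentIn hq) (n := 1) one_ne_zero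
    (f := fun _ => 1) (by fun_prop) (by simp) ((hm.mono (hfr q)).congr fun z _ => by simp)

lemma exists_small_continuum (h : JordanParam H α β) {ε : ℝ} (hε : 0 < ε) :
    ∃ δ > 0, ∀ S ⊆ H, (∀ x ∈ S, ∀ y ∈ S, dist x y < δ) →
      ∃ J ⊆ H, IsCompact J ∧ IsPreconnected J ∧ S ⊆ J ∧ ∀ x ∈ J, ∀ y ∈ J, dist x y < ε := by
  obtain ⟨η, hη, hα⟩ := Metric.uniformContinuousOn_iff.1
    ((isCompact_sphere (0 : ℂ) 1).uniformContinuousOn_of_continuous h.cont) ε hε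
  obtain ⟨r, hr, harc⟩ := exists_pos_eq_mul_exp_of_dist_lt (η := η / 4) (by positivity)
  obtain ⟨δ, hδ, hβ⟩ := Metric.uniformContinuousOn_iff.1
    (h.isCompact.uniformContinuousOn_of_continuous h.cont_inv) r hr
  refine ⟨δ, hδ, fun S hS hSd => ?_⟩
  rcases S.eq_empty_or_nonempty with rfl | ⟨s, hs⟩
  · exact ⟨∅, empty_subset _, isCompact_empty, isPreconnected_empty, Subset.rfl, by simp⟩
  have hmem := mul_exp_mul_I_mem_sphere (h.mapsTo_inv (hS hs))
  have hcont : Continuous fun t : ℝ => α (β s * Complex.exp (t * Complex.I)) :=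
    h.cont.comp_continuous (by fun_prop) hmem
  refine ⟨(fun t : ℝ => α (β s * Complex.exp (t * Complex.I))) '' Icc (-(η / 4)) (η / 4),
    image_subset_iff.2 fun t _ => h.mapsTo (hmem t), isCompact_Icc.image hcont,
    isPreconnected_Icc.image _ hcont.continuousOn, fun x hx => ?_, ?_⟩
  · obtain ⟨t, ht, heq⟩ := harc _ (h.mapsTo_inv (hS hx)) _ (h.mapsTo_inv (hS hs))
      (hβ x (hS hx) s (hS hs) (hSd x hx s hs))
    exact ⟨t, abs_le.1 ht, by simp only [heq, h.right_inv x (hS hx)]⟩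
  · have hdist : ∀ t ∈ Icc (-(η / 4)) (η / 4),
        dist (β s * Complex.exp (t * Complex.I)) (β s) ≤ η / 4 := fun t ht => by
      rw [dist_eq_norm, ← mul_sub_one, norm_mul, mem_sphere_zero_iff_norm.1
        (h.mapsTo_inv (hS hs)), one_mul, mul_comm]
      exact Real.norm_exp_I_mul_ofReal_sub_one_le.trans (abs_le.2 ht)
    rintro _ ⟨t, ht, rfl⟩ _ ⟨t', ht', rfl⟩
    refine hα _ (hmem t) _ (hmem t') ?_
    linarith [dist_triangle_right (β s * Complex.exp (t * Complex.I))
      (β s * Complex.exp (t' * Complex.I)) (β s), hdist t ht, hdist t' ht']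

end JordanParam

/-! ### Holomorphic square roots -/

lemma isPreconnected_compl_connectedComponentIn {X : Type*} [TopologicalSpace X]
    [LocallyConnectedSpace X] [PreconnectedSpace X] {K : Set X} (hK : IsClosed K)
    (hKc : IsPreconnected K) (hne : K.Nonempty) (p : X) :
    IsPreconnected (connectedComponentIn Kᶜ p)ᶜ := by
  obtain ⟨x, hx⟩ := hne
  have hdisj : ∀ z ∈ K, ∀ q, z ∉ connectedComponentIn Kᶜ q := fun z hz q hzq =>
    connectedComponentIn_subset _ _ hzq hz
  refine isPreconnected_of_forall x fun y hy => ?_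
  by_cases hyK : y ∈ K
  · exact ⟨K, fun z hz => hdisj z hz p, hx, hyK, hKc⟩
  have hyy : y ∈ connectedComponentIn Kᶜ y := mem_connectedComponentIn hyK
  refine ⟨K ∪ closure (connectedComponentIn Kᶜ y), ?_, Or.inl hx, Or.inr (subset_closure hyy), ?_⟩
  · rintro z (hz | hz) hzp
    · exact hdisj z hz p hzp
    · have heq := connectedComponentIn_eq hzp
      refine notMem_closure_connectedComponentIn hK
        (fun hzK => hdisj z hzK p hzp) (fun hyz => hy ?_) hz
      rwa [heq, ← hyz]
  · obtain ⟨z, hz⟩ : (frontier (connectedComponentIn Kᶜ y)).Nonempty :=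
      nonempty_frontier_iff.2 ⟨⟨y, hyy⟩, fun h => hdisj x hx y (h ▸ mem_univ x)⟩
    exact hKc.union z (frontier_connectedComponentIn_subset hK hz) hz.1
      isPreconnected_connectedComponentIn.closure

lemma isPreconnected_thickening {E : Type*} [SeminormedAddCommGroup E] [NormedSpace ℝ E]
    {S : Set E} (hS : IsPreconnected S) (r : ℝ) : IsPreconnected (thickening r S) := by
  rw [← add_ball_zero, ← add_image_prod]
  exact (hS.prod (convex_ball _ _).isPreconnected).image _ continuous_add.continuousOn

lemma exists_eventually_ball_subset_compl_thickening {X : Type*} [PseudoMetricSpace X] {U : Set X}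
    (hU : IsOpen U) {z : X} (hz : z ∈ U) :
    ∃ r > 0, ∀ᶠ n : ℕ in Filter.atTop, ball z r ⊆ (thickening (1 / (n + 1) : ℝ) Uᶜ)ᶜ := by
  obtain ⟨r, hr, hrU⟩ := Metric.isOpen_iff.1 hU z hz
  refine ⟨r / 2, half_pos hr, ?_⟩
  filter_upwards [tendsto_one_div_add_atTop_nhds_zero_nat.eventually_lt_const (half_pos hr)]
    with n hn w hw hwt
  obtain ⟨x, hx, hwx⟩ := mem_thickening_iff.1 hwt
  refine hx (hrU ?_)
  rw [mem_ball] at hw ⊢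
  linarith [dist_triangle_left x z w]

lemma exists_continuousOn_of_eventually_eqOn {ι X Y : Type*} [TopologicalSpace X]
    [TopologicalSpace Y] {l : Filter ι} [l.NeBot] {s : ι → X → Y} {U : Set X}
    (h : ∀ z ∈ U, ∃ t, ContinuousAt t z ∧ ∃ B ∈ 𝓝 z, ∀ᶠ n in l, EqOn (s n) t B) :
    ∃ σ, ContinuousOn σ U ∧ ∀ z ∈ U, ∀ᶠ n in l, s n z = σ z := by
  have hself : ∀ z, ∃ y, z ∈ U → ∀ᶠ n in l, s n z = y := fun z => by
    by_cases hz : z ∈ U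
    · obtain ⟨t, -, B, hB, hst⟩ := h z hz
      exact ⟨t z, fun _ => hst.mono fun n hn => hn (mem_of_mem_nhds hB)⟩
    · obtain ⟨n⟩ := l.nonempty_of_neBot
      exact ⟨s n z, fun h => absurd h hz⟩
  choose σ hσ using hself
  refine ⟨σ, fun z hz => ?_, hσ⟩
  obtain ⟨t, ht, B, hB, hst⟩ := h z hz
  have heq : ∀ w ∈ U ∩ B, σ w = t w := fun w hw => by
    obtain ⟨n, hn, hn'⟩ := ((hσ w hw.1).and hst).exists
    rw [← hn, hn' hw.2]
  refine ht.continuousWithinAt.congr_of_eventuallyEq ?_ (heq z ⟨hz, mem_of_mem_nhds hB⟩)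
  filter_upwards [self_mem_nhdsWithin, nhdsWithin_le_nhds hB] with w hw hwB using heq w ⟨hw, hwB⟩

lemma HasContLog.exists_sq_eq {X : Type*} [TopologicalSpace X] {f : X → ℂ} {K : Set X}
    (h : HasContLog f K) : ∃ s, ContinuousOn s K ∧ ∀ z ∈ K, s z ^ 2 = f z := by
  obtain ⟨g, hg, hfg⟩ := h
  refine ⟨fun z => Complex.exp (g z / 2), (hg.div_const 2).cexp, fun z hz => ?_⟩
  rw [hfg z hz, ← Complex.exp_nat_mul]
  congr 1
  push_cast
  ring

/-- The domain is exhausted by full compact sets, which carry square roots by Borsuk's theorem. On a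
small ball these agree up to sign, and an ultrafilter picks the sign consistently. -/
lemma exists_continuousOn_sq_eq {U : Set ℂ} (hU : IsOpen U) (hUb : Bornology.IsBounded U)
    (hUc : IsPreconnected Uᶜ) {f : ℂ → ℂ} (hf : ContinuousOn f U) (hf0 : ∀ z ∈ U, f z ≠ 0) :
    ∃ s, ContinuousOn s U ∧ ∀ z ∈ U, s z ^ 2 = f z := by
  let K : ℕ → Set ℂ := fun n => (thickening (1 / (n + 1) : ℝ) Uᶜ)ᶜ
  have hKU : ∀ n, K n ⊆ U := fun n =>
    compl_subset_comm.1 (self_subset_thickening (by positivity) Uᶜ)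
  have hK : ∀ n, IsFullCompact (K n) := fun n =>
    ⟨isCompact_of_isClosed_isBounded isOpen_thickening.isClosed_compl (hUb.subset (hKU n)), by
      simpa only [K, compl_compl] using isPreconnected_thickening hUc _⟩
  choose s hs hsq using fun n => ((hK n).hasContLog (hf.mono (hKU n))
    fun z hz => hf0 z (hKU n hz)).exists_sq_eq
  let l : Ultrafilter ℕ := Filter.hyperfilter ℕ
  have hball : ∀ z ∈ U, ∃ r > 0, ∀ᶠ n in (l : Filter ℕ), ball z r ⊆ K n := fun z hz => by
    obtain ⟨r, hr, hev⟩ := exists_eventually_ball_subset_compl_thickening hU hz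
    exact ⟨r, hr, Nat.hyperfilter_le_atTop hev⟩
  obtain ⟨σ, hσ, hsσ⟩ := exists_continuousOn_of_eventually_eqOn (l := (l : Filter ℕ)) (s := s)
      (U := U) fun z hz => by
    obtain ⟨r, hr, hev⟩ := hball z hz
    obtain ⟨m, hm⟩ := hev.exists
    have hsm : ContinuousAt (s m) z :=
      (hs m).continuousAt (Filter.mem_of_superset (ball_mem_nhds z hr) hm)
    have hsign : ∀ᶠ n in (l : Filter ℕ),
        EqOn (s n) (s m) (ball z r) ∨ EqOn (s n) (-s m) (ball z r) := by
      filter_upwards [hev] with n hn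
      refine (convex_ball z r).isPreconnected.eq_or_eq_neg_of_sq_eq ((hs n).mono hn)
        ((hs m).mono hm) (fun w hw => ?_) fun {w} hw h0 => hf0 w (hKU m (hm hw)) ?_
      · simp only [Pi.pow_apply, hsq n w (hn hw), hsq m w (hm hw)]
      · rw [← hsq m w (hm hw), h0, zero_pow two_ne_zero]
    rcases Ultrafilter.eventually_or.1 hsign with h | h
    exacts [⟨s m, hsm, _, ball_mem_nhds z hr, h⟩, ⟨-s m, hsm.neg, _, ball_mem_nhds z hr, h⟩]
  refine ⟨σ, hσ, fun z hz => ?_⟩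
  obtain ⟨r, hr, hev⟩ := hball z hz
  obtain ⟨n, hn, hsn⟩ := (hev.and (hsσ z hz)).exists
  rw [← hsn, hsq n z (hn (mem_ball_self hr))]

lemma differentiableOn_of_sq_eq {U : Set ℂ} (hU : IsOpen U) {f s : ℂ → ℂ}
    (hf : DifferentiableOn ℂ f U) (hs : ContinuousOn s U) (hsq : ∀ z ∈ U, s z ^ 2 = f z)
    (hf0 : ∀ z ∈ U, f z ≠ 0) : DifferentiableOn ℂ s U := by
  intro z hz
  have hsum : s z + s z ≠ 0 := by
    have hsz : s z ≠ 0 := fun h0 => hf0 z hz (by rw [← hsq z hz, h0, zero_pow two_ne_zero])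
    simpa [← two_mul] using hsz
  have hfd := ((hf z hz).differentiableAt (hU.mem_nhds hz)).hasDerivAt
  refine DifferentiableAt.differentiableWithinAt (HasDerivAt.differentiableAt
    (f' := deriv f z / (s z + s z)) ?_)
  rw [hasDerivAt_iff_tendsto_slope] at hfd ⊢
  have hlim : Filter.Tendsto (fun w => s w + s z) (𝓝[≠] z) (𝓝 (s z + s z)) :=
    ((hs.continuousAt (hU.mem_nhds hz)).tendsto.mono_left nhdsWithin_le_nhds).add_const _
  refine (hfd.div hlim hsum).congr' ?_
  filter_upwards [self_mem_nhdsWithin, nhdsWithin_le_nhds (hU.mem_nhds hz),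
    hlim.eventually_ne hsum] with w hw hwU hne
  have hwz : w - z ≠ 0 := sub_ne_zero.2 hw
  simp only [Pi.div_apply]
  rw [slope_def_field, slope_def_field, ← hsq z hz, ← hsq w hwU]
  field_simp
  ring

/-! ### The Riemann mapping theorem -/

lemma exists_tendstoLocallyUniformlyOn_of_norm_le {ι : Type*} (l : Ultrafilter ι) {U : Set ℂ}
    (hU : IsOpen U) {f : ι → ℂ → ℂ} (hf : ∀ n, DifferentiableOn ℂ (f n) U) {M : ℝ}
    (hfM : ∀ n, ∀ z ∈ U, ‖f n z‖ ≤ M) : ∃ g, TendstoLocallyUniformlyOn f g l U := by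
  have hlim : ∀ z ∈ U, ∃ a, Filter.Tendsto (fun n => f n z) l (𝓝 a) := fun z hz => by
    obtain ⟨a, -, ha⟩ := (isCompact_closedBall (0 : ℂ) M).ultrafilter_le_nhds
      (l.map fun n => f n z) (Filter.le_principal_iff.2 (Filter.mem_map.2
        (Filter.univ_mem' fun n => mem_closedBall_zero_iff.2 (hfM n z hz))))
    exact ⟨a, ha⟩
  choose! g hg using hlim
  refine ⟨g, Metric.tendstoLocallyUniformlyOn_iff.2 fun ε hε z hz => ?_⟩
  obtain ⟨r, hr, hrU⟩ := Metric.isOpen_iff.1 hU z hz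
  have hlip : ∀ n, ∀ w ∈ ball z r, dist (f n w) (f n z) ≤ 2 * M / r * dist w z := fun n w hw =>
    Complex.dist_le_div_mul_dist_of_mapsTo_ball ((hf n).mono hrU) (fun v hv => by
      rw [mem_closedBall, dist_eq_norm]
      linarith [norm_sub_le (f n v) (f n z), hfM n v (hrU hv), hfM n z hz]) hw
  have hglip : ∀ w ∈ ball z r, dist (g w) (g z) ≤ 2 * M / r * dist w z := fun w hw =>
    le_of_tendsto ((hg w (hrU hw)).dist (hg z hz)) (.of_forall fun n => hlip n w hw)
  have hsmall : ∀ᶠ w in 𝓝 z, 2 * M / r * dist w z < ε / 4 := by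
    refine Filter.Tendsto.eventually_lt_const (by positivity : (0 : ℝ) < ε / 4) ?_
    have hcont : Continuous fun w => 2 * M / r * dist w z := by fun_prop
    simpa using hcont.tendsto z
  refine ⟨_, mem_nhdsWithin_of_mem_nhds (Filter.inter_mem (ball_mem_nhds z hr) hsmall), ?_⟩
  filter_upwards [(hg z hz).eventually (ball_mem_nhds _ (half_pos hε))] with n hn w hw
  replace hn : dist (f n z) (g z) < ε / 2 := hn
  linarith [dist_triangle4 (g w) (g z) (f n z) (f n w), dist_comm (f n z) (g z),
    dist_comm (f n z) (f n w), hlip n w hw.1, hglip w hw.1, hw.2.out]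

lemma le_norm_of_forall_mem_frontier_le_norm {U : Set ℂ} (hU : Bornology.IsBounded U) {f : ℂ → ℂ}
    (hf : DiffContOnCl ℂ f U) (hf0 : ∀ z ∈ closure U, f z ≠ 0) {c : ℝ} (hc : 0 < c)
    (h : ∀ z ∈ frontier U, c ≤ ‖f z‖) {z : ℂ} (hz : z ∈ closure U) : c ≤ ‖f z‖ := by
  have hinv := Complex.norm_le_of_forall_mem_frontier_norm_le (C := c⁻¹) hU (hf.inv hf0)
    (fun w hw => by simpa using inv_anti₀ hc (h w hw)) hz
  rw [Pi.inv_apply, norm_inv] at hinv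
  exact (inv_le_inv₀ (norm_pos_iff.2 (hf0 z hz)) hc).1 hinv

lemma ne_zero_of_tendstoLocallyUniformlyOn {ι : Type*} {l : Filter ι} [l.NeBot] {U : Set ℂ}
    (hU : IsOpen U) {f : ι → ℂ → ℂ} {g : ℂ → ℂ} (h : TendstoLocallyUniformlyOn f g l U)
    (hf : ∀ n, DifferentiableOn ℂ (f n) U) (hf0 : ∀ n, ∀ z ∈ U, f n z ≠ 0) {a : ℂ} (ha : a ∈ U)
    (hga : ∀ᶠ z in 𝓝[≠] a, g z ≠ 0) : g a ≠ 0 := by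
  intro hga0
  obtain ⟨r, hr, hrU, hr0⟩ : ∃ r > 0, closedBall a r ⊆ U ∧ ∀ z ∈ sphere a r, g z ≠ 0 := by
    obtain ⟨r, hr, hball⟩ := Metric.nhds_basis_closedBall.eventually_iff.1
      ((eventually_nhdsWithin_iff.1 hga).and (hU.eventually_mem ha))
    exact ⟨r, hr, fun z hz => (hball hz).2, fun z hz =>
      (hball (sphere_subset_closedBall hz)).1 (ne_of_mem_sphere hz hr.ne')⟩
  have hsU : sphere a r ⊆ U := sphere_subset_closedBall.trans hrU
  have hg : ContinuousOn g U := (h.differentiableOn (.of_forall hf) hU).continuousOn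
  obtain ⟨m, hm, hmin⟩ := (isCompact_sphere a r).exists_isMinOn
    (NormedSpace.sphere_nonempty.2 hr.le) (hg.mono hsU).norm
  have hm0 : 0 < ‖g m‖ := norm_pos_iff.2 (hr0 m hm)
  have hunif := (tendstoLocallyUniformlyOn_iff_tendstoUniformlyOn_of_compact
    (isCompact_sphere a r)).1 (h.mono hsU)
  have hev : ∀ᶠ n in l, ‖g m‖ / 2 ≤ ‖f n a‖ := by
    filter_upwards [Metric.tendstoUniformlyOn_iff.1 hunif _ (half_pos hm0)] with n hn
    have hcl : closure (ball a r) ⊆ U := closure_ball_subset_closedBall.trans hrU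
    refine le_norm_of_forall_mem_frontier_le_norm isBounded_ball ((hf n).mono hcl).diffContOnCl
      (fun z hz => hf0 n z (hcl hz)) (half_pos hm0) (fun z hz => ?_)
      (subset_closure (mem_ball_self hr))
    rw [frontier_ball _ hr.ne'] at hz
    have hdist := hn z hz
    rw [dist_eq_norm] at hdist
    linarith [norm_sub_norm_le (g z) (f n z), isMinOn_iff.1 hmin z hz]
  have hle := ge_of_tendsto (h.tendsto_at ha).norm hev
  rw [hga0, norm_zero] at hle
  linarith

lemma eqOn_zero_or_ne_zero_of_tendstoLocallyUniformlyOn {ι : Type*} {l : Filter ι} [l.NeBot]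
    {U : Set ℂ} (hU : IsOpen U) (hUc : IsPreconnected U) {f : ι → ℂ → ℂ} {g : ℂ → ℂ}
    (h : TendstoLocallyUniformlyOn f g l U) (hf : ∀ n, DifferentiableOn ℂ (f n) U)
    (hf0 : ∀ n, ∀ z ∈ U, f n z ≠ 0) : EqOn g 0 U ∨ ∀ z ∈ U, g z ≠ 0 := by
  refine or_iff_not_imp_left.2 fun hne a ha => ne_zero_of_tendstoLocallyUniformlyOn hU h hf hf0
    ha ?_
  have hg : AnalyticOnNhd ℂ g U := (h.differentiableOn (.of_forall hf) hU).analyticOnNhd hU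
  exact (hg a ha).eventually_eq_zero_or_eventually_ne_zero.resolve_left fun h0 =>
    hne (hg.eqOn_zero_of_preconnected_of_eventuallyEq_zero hUc ha h0)

lemma injOn_of_tendstoLocallyUniformlyOn {ι : Type*} {l : Filter ι} [l.NeBot] {U : Set ℂ}
    (hU : IsOpen U) {f : ι → ℂ → ℂ} {g : ℂ → ℂ} (h : TendstoLocallyUniformlyOn f g l U)
    (hf : ∀ n, DifferentiableOn ℂ (f n) U) (hinj : ∀ n, InjOn (f n) U)
    (hg : ∀ z ∈ U, deriv g z ≠ 0) : InjOn g U := by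
  intro a ha b hb hab
  by_contra hne
  have hsub : TendstoLocallyUniformlyOn (fun n z => f n z - f n b) (fun z => g z - g b) l
      (U \ {b}) :=
    (h.mono sdiff_subset).sub
      ((h.tendsto_at hb).tendstoUniformlyOn_const _).tendstoLocallyUniformlyOn
  refine ne_zero_of_tendstoLocallyUniformlyOn (hU.sdiff isClosed_singleton) hsub
    (fun n => ((hf n).mono sdiff_subset).sub_const _)
    (fun n z hz h0 => hz.2 (hinj n hz.1 hb (sub_eq_zero.1 h0))) ⟨ha, hne⟩ ?_ (sub_eq_zero.2 hab)
  have hga : DifferentiableAt ℂ g a :=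
    (h.differentiableOn (.of_forall hf) hU).differentiableAt (hU.mem_nhds ha)
  exact (hga.hasDerivAt.eventually_ne (hg a ha)).mono fun z hz => sub_ne_zero.2 hz

lemma mapsTo_ball_of_deriv_ne_zero {U : Set ℂ} (hU : IsOpen U) {g : ℂ → ℂ}
    (hg : DifferentiableOn ℂ g U) (hg' : ∀ z ∈ U, deriv g z ≠ 0) {c : ℂ} {r : ℝ} (hr : r ≠ 0)
    (h : MapsTo g U (closedBall c r)) : MapsTo g U (ball c r) := by
  intro z hz
  rw [← interior_closedBall c hr, mem_interior_iff_mem_nhds,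
    ← ((hg.analyticAt (hU.mem_nhds hz)).hasStrictDerivAt).map_nhds_eq (hg' z hz)]
  exact Filter.mem_of_superset (Filter.image_mem_map (hU.mem_nhds hz)) h.image_subset

/-- The automorphism of the unit disc sending `w` to `0`. -/
def discMap (w z : ℂ) : ℂ := (z - w) / (1 - starRingEnd ℂ w * z)

lemma one_sub_conj_mul_ne_zero {w z : ℂ} (hw : ‖w‖ < 1) (hz : ‖z‖ < 1) :
    1 - starRingEnd ℂ w * z ≠ 0 := by
  intro h
  have hnorm := congr_arg norm (sub_eq_zero.1 h)
  rw [norm_one, norm_mul, RCLike.norm_conj] at hnorm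
  exact (mul_lt_one_of_nonneg_of_lt_one_left (norm_nonneg w) hw hz.le).ne hnorm.symm

lemma norm_discMap_lt_one {w z : ℂ} (hw : ‖w‖ < 1) (hz : ‖z‖ < 1) : ‖discMap w z‖ < 1 := by
  rw [discMap, norm_div, div_lt_one (norm_pos_iff.2 (one_sub_conj_mul_ne_zero hw hz))]
  refine lt_of_pow_lt_pow_left₀ 2 (norm_nonneg _) (sub_pos.1 ?_)
  have hsq : ‖1 - starRingEnd ℂ w * z‖ ^ 2 - ‖z - w‖ ^ 2 = (1 - ‖z‖ ^ 2) * (1 - ‖w‖ ^ 2) := by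
    simp only [Complex.sq_norm, Complex.normSq_apply, Complex.sub_re, Complex.sub_im,
      Complex.mul_re, Complex.mul_im, Complex.conj_re, Complex.conj_im, Complex.one_re,
      Complex.one_im]
    ring
  rw [hsq]
  exact mul_pos (by nlinarith [norm_nonneg z]) (by nlinarith [norm_nonneg w])

lemma one_sub_conj_mul_self (w : ℂ) : 1 - starRingEnd ℂ w * w = ((1 - ‖w‖ ^ 2 : ℝ) : ℂ) := by
  rw [mul_comm, Complex.mul_conj']
  push_cast
  rfl

lemma injOn_discMap {w : ℂ} (hw : ‖w‖ < 1) : InjOn (discMap w) (ball 0 1) := by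
  intro x hx y hy h
  rw [mem_ball_zero_iff] at hx hy
  rw [discMap, discMap, div_eq_div_iff (one_sub_conj_mul_ne_zero hw hx)
    (one_sub_conj_mul_ne_zero hw hy)] at h
  exact mul_left_cancel₀ (one_sub_conj_mul_ne_zero hw hw) (by linear_combination h)

lemma hasDerivAt_discMap {w z : ℂ} (hw : ‖w‖ < 1) (hz : ‖z‖ < 1) : HasDerivAt (discMap w)
    ((1 - starRingEnd ℂ w * w) / (1 - starRingEnd ℂ w * z) ^ 2) z := by
  have h : HasDerivAt (discMap w) _ z := ((hasDerivAt_id z).sub_const w).div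
    (((hasDerivAt_id z).const_mul (starRingEnd ℂ w)).const_sub 1) (one_sub_conj_mul_ne_zero hw hz)
  convert h using 1
  simp only [id]
  ring

lemma hasDerivAt_discMap_zero {w : ℂ} (hw : ‖w‖ < 1) :
    HasDerivAt (discMap w) ((1 - ‖w‖ ^ 2 : ℝ) : ℂ) 0 := by
  simpa [one_sub_conj_mul_self] using hasDerivAt_discMap (z := 0) hw (by simp)

lemma hasDerivAt_discMap_self {w : ℂ} (hw : ‖w‖ < 1) :
    HasDerivAt (discMap w) (((1 - ‖w‖ ^ 2 : ℝ) : ℂ)⁻¹) w := by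
  convert hasDerivAt_discMap hw hw using 1
  rw [← one_sub_conj_mul_self]
  have := one_sub_conj_mul_ne_zero hw hw
  field_simp

/-- A conformal map of `U` into the unit disc. -/
structure IsDiscEmbedding (f : ℂ → ℂ) (U : Set ℂ) : Prop where
  differentiableOn : DifferentiableOn ℂ f U
  mapsTo : MapsTo f U (ball 0 1)
  injOn : InjOn f U
  deriv_ne_zero : ∀ z ∈ U, deriv f z ≠ 0

namespace IsDiscEmbedding

variable {U : Set ℂ} {f : ℂ → ℂ}

lemma norm_lt_one (hf : IsDiscEmbedding f U) {z : ℂ} (hz : z ∈ U) : ‖f z‖ < 1 :=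
  mem_ball_zero_iff.1 (hf.mapsTo hz)

lemma hasDerivAt (hf : IsDiscEmbedding f U) (hU : IsOpen U) {z : ℂ} (hz : z ∈ U) :
    HasDerivAt f (deriv f z) z :=
  (hf.differentiableOn.differentiableAt (hU.mem_nhds hz)).hasDerivAt

lemma discMap_comp (hf : IsDiscEmbedding f U) (hU : IsOpen U) {w : ℂ} (hw : ‖w‖ < 1) :
    IsDiscEmbedding (fun z => discMap w (f z)) U := by
  have hderiv : ∀ z ∈ U, HasDerivAt (fun z => discMap w (f z)) _ z := fun z hz =>
    (hasDerivAt_discMap hw (hf.norm_lt_one hz)).comp z (hf.hasDerivAt hU hz)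
  refine ⟨fun z hz => (hderiv z hz).differentiableAt.differentiableWithinAt, fun z hz =>
    mem_ball_zero_iff.2 (norm_discMap_lt_one hw (hf.norm_lt_one hz)),
    (injOn_discMap hw).comp hf.injOn hf.mapsTo, fun z hz => ?_⟩
  rw [(hderiv z hz).deriv]
  exact mul_ne_zero (div_ne_zero (one_sub_conj_mul_ne_zero hw hw)
    (pow_ne_zero 2 (one_sub_conj_mul_ne_zero hw (hf.norm_lt_one hz)))) (hf.deriv_ne_zero z hz)

lemma deriv_of_sq_eq (hU : IsOpen U) {s : ℂ → ℂ} (hs : DifferentiableOn ℂ s U)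
    (hsq : ∀ z ∈ U, s z ^ 2 = f z) {z : ℂ} (hz : z ∈ U) : deriv f z = 2 * s z * deriv s z := by
  have hd : HasDerivAt (fun z => s z ^ 2) _ z :=
    (hs.differentiableAt (hU.mem_nhds hz)).hasDerivAt.pow 2
  rw [← Filter.EventuallyEq.deriv_eq (Filter.mem_of_superset (hU.mem_nhds hz) hsq), hd.deriv]
  simp

lemma of_sq_eq (hf : IsDiscEmbedding f U) (hU : IsOpen U) {s : ℂ → ℂ}
    (hs : DifferentiableOn ℂ s U) (hsq : ∀ z ∈ U, s z ^ 2 = f z) : IsDiscEmbedding s U := by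
  refine ⟨hs, fun z hz => ?_, fun x hx y hy hxy => hf.injOn hx hy ?_, fun z hz h0 => ?_⟩
  · have hnorm := hf.norm_lt_one hz
    rw [← hsq z hz, norm_pow] at hnorm
    exact mem_ball_zero_iff.2 ((pow_lt_one_iff_of_nonneg (norm_nonneg _) two_ne_zero).1 hnorm)
  · rw [← hsq x hx, ← hsq y hy, hxy]
  · exact hf.deriv_ne_zero z hz (by rw [deriv_of_sq_eq hU hs hsq hz, h0, mul_zero])

lemma exists_of_isBounded (hU : Bornology.IsBounded U) (z₀ : ℂ) :
    ∃ f, IsDiscEmbedding f U ∧ f z₀ = 0 := by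
  obtain ⟨r, hr, hrU⟩ := hU.subset_ball_lt 0 z₀
  have hr0 : (r : ℂ) ≠ 0 := by exact_mod_cast hr.ne'
  refine ⟨fun z => (z - z₀) / r, ⟨by fun_prop, fun z hz => ?_, fun x _ y _ h => ?_, fun z _ => ?_⟩,
    by simp⟩
  · have hdist := hrU hz
    rw [mem_ball, dist_eq_norm] at hdist
    simpa [abs_of_pos hr, div_lt_one hr] using hdist
  · simpa [hr0] using h
  · simpa using hr0

/-- Koebe's trick: a branch `s` of the square root of `discMap w ∘ f`, recentred at `s z₀`, expands
more than `f`, by the factor `(1 + t ^ 2) / (2 * t)` with `t = ‖s z₀‖`. -/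
lemma exists_norm_deriv_lt (hf : IsDiscEmbedding f U) (hU : IsOpen U) {z₀ : ℂ} (hz₀ : z₀ ∈ U)
    (hf0 : f z₀ = 0) {w : ℂ} (hw : ‖w‖ < 1) {s : ℂ → ℂ} (hs : DifferentiableOn ℂ s U)
    (hsq : ∀ z ∈ U, s z ^ 2 = discMap w (f z)) :
    ∃ h, IsDiscEmbedding h U ∧ h z₀ = 0 ∧ ‖deriv f z₀‖ < ‖deriv h z₀‖ := by
  have hg := hf.discMap_comp hU hw
  have hse := hg.of_sq_eq hU hs hsq
  have hs1 := hse.norm_lt_one hz₀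
  have hwt : ‖w‖ = ‖s z₀‖ ^ 2 := by
    rw [← norm_pow, hsq z₀ hz₀, hf0]
    simp [discMap]
  have hdg : HasDerivAt (fun z => discMap w (f z)) (((1 - ‖w‖ ^ 2 : ℝ) : ℂ) * deriv f z₀) z₀ :=
    (hf0 ▸ hasDerivAt_discMap_zero hw).comp z₀ (hf.hasDerivAt hU hz₀)
  have hdh : HasDerivAt (fun z => discMap (s z₀) (s z))
      (((1 - ‖s z₀‖ ^ 2 : ℝ) : ℂ)⁻¹ * deriv s z₀) z₀ :=
    (hasDerivAt_discMap_self hs1).comp z₀ (hse.hasDerivAt hU hz₀)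
  refine ⟨_, hse.discMap_comp hU hs1, by simp [discMap], ?_⟩
  have hrel : (1 - (‖s z₀‖ ^ 2) ^ 2) * ‖deriv f z₀‖ = 2 * ‖s z₀‖ * ‖deriv s z₀‖ := by
    have hnorm := congr_arg norm (hdg.deriv.symm.trans (deriv_of_sq_eq hU hs hsq hz₀))
    rwa [norm_mul, norm_mul, norm_mul, Complex.norm_ofNat, Complex.norm_real, Real.norm_of_nonneg
      (sub_nonneg.2 (pow_le_one₀ (norm_nonneg _) hw.le)), hwt] at hnorm
  have hpos : 0 < 1 - ‖s z₀‖ ^ 2 := sub_pos.2 (pow_lt_one₀ (norm_nonneg _) hs1 two_ne_zero)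
  rw [hdh.deriv, norm_mul, norm_inv, Complex.norm_real, Real.norm_of_nonneg hpos.le, inv_mul_eq_div,
    lt_div_iff₀ hpos]
  have hf' : 0 < ‖deriv f z₀‖ := norm_pos_iff.2 (hf.deriv_ne_zero z₀ hz₀)
  have hgain : 0 < (1 - ‖s z₀‖ ^ 2) * ‖deriv f z₀‖ * (1 - ‖s z₀‖) ^ 2 :=
    mul_pos (mul_pos hpos hf') (pow_pos (sub_pos.2 hs1) 2)
  by_contra! hcon
  nlinarith [norm_nonneg (s z₀)]

lemma of_tendstoLocallyUniformlyOn {ι : Type*} {l : Filter ι} [l.NeBot] (hU : IsOpen U)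
    (hUc : IsPreconnected U) {F : ι → ℂ → ℂ} (hF : ∀ n, IsDiscEmbedding (F n) U)
    (h : TendstoLocallyUniformlyOn F f l U) {z₀ : ℂ} (hz₀ : z₀ ∈ U) (hf0 : deriv f z₀ ≠ 0) :
    IsDiscEmbedding f U := by
  have hFd : ∀ n, DifferentiableOn ℂ (F n) U := fun n => (hF n).differentiableOn
  have hfd : DifferentiableOn ℂ f U := h.differentiableOn (.of_forall hFd) hU
  have hf' : ∀ z ∈ U, deriv f z ≠ 0 :=
    (eqOn_zero_or_ne_zero_of_tendstoLocallyUniformlyOn hU hUc (h.deriv (.of_forall hFd) hU)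
      (fun n => (hFd n).deriv hU) fun n => (hF n).deriv_ne_zero).resolve_left
      fun h0 => hf0 (h0 hz₀)
  refine ⟨hfd, mapsTo_ball_of_deriv_ne_zero hU hfd hf' one_ne_zero fun z hz => ?_,
    injOn_of_tendstoLocallyUniformlyOn hU h hFd (fun n => (hF n).injOn) hf', hf'⟩
  exact isClosed_closedBall.mem_of_tendsto (h.tendsto_at hz)
    (.of_forall fun n => ball_subset_closedBall ((hF n).mapsTo hz))

lemma norm_deriv_le (hf : IsDiscEmbedding f U) {z₀ : ℂ} (hf0 : f z₀ = 0) {r : ℝ} (hr : 0 < r)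
    (hrU : ball z₀ r ⊆ U) : ‖deriv f z₀‖ ≤ 1 / r := by
  refine Complex.norm_deriv_le_div_of_mapsTo_ball (hf.differentiableOn.mono hrU) (fun z hz => ?_) hr
  rw [hf0]
  exact ball_subset_closedBall (hf.mapsTo (hrU hz))

lemma exists_forall_norm_deriv_le (hU : IsOpen U) (hUc : IsPreconnected U)
    (hUb : Bornology.IsBounded U) {z₀ : ℂ} (hz₀ : z₀ ∈ U) :
    ∃ g, (IsDiscEmbedding g U ∧ g z₀ = 0) ∧
      ∀ f, IsDiscEmbedding f U → f z₀ = 0 → ‖deriv f z₀‖ ≤ ‖deriv g z₀‖ := by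
  obtain ⟨r, hr, hrU⟩ := Metric.isOpen_iff.1 hU z₀ hz₀
  let S : Set ℝ := {x | ∃ f, (IsDiscEmbedding f U ∧ f z₀ = 0) ∧ ‖deriv f z₀‖ = x}
  obtain ⟨f₀, hf₀⟩ := exists_of_isBounded hUb z₀
  have hSb : BddAbove S := ⟨1 / r, by
    rintro _ ⟨f, hf, rfl⟩
    exact hf.1.norm_deriv_le hf.2 hr hrU⟩
  have hSne : S.Nonempty := ⟨_, f₀, hf₀, rfl⟩
  obtain ⟨u, -, hu, huS⟩ := exists_seq_tendsto_sSup hSne hSb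
  choose F hF hFu using huS
  let l : Ultrafilter ℕ := Filter.hyperfilter ℕ
  have hFd : ∀ n, DifferentiableOn ℂ (F n) U := fun n => (hF n).1.differentiableOn
  obtain ⟨g, hg⟩ := exists_tendstoLocallyUniformlyOn_of_norm_le l hU hFd (M := 1)
    fun n z hz => ((hF n).1.norm_lt_one hz).le
  have hmax : ‖deriv g z₀‖ = sSup S := by
    have hlim := ((hg.deriv (.of_forall hFd) hU).tendsto_at hz₀).norm
    simp only [Function.comp_apply, hFu] at hlim
    exact tendsto_nhds_unique hlim (hu.mono_left Nat.hyperfilter_le_atTop)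
  have hle : ∀ f, IsDiscEmbedding f U → f z₀ = 0 → ‖deriv f z₀‖ ≤ ‖deriv g z₀‖ := fun f hf hf0 =>
    hmax ▸ le_csSup hSb ⟨f, ⟨hf, hf0⟩, rfl⟩
  refine ⟨g, ⟨.of_tendstoLocallyUniformlyOn hU hUc (fun n => (hF n).1) hg hz₀ ?_, ?_⟩, hle⟩
  · exact norm_pos_iff.1 ((norm_pos_iff.2 (hf₀.1.deriv_ne_zero z₀ hz₀)).trans_le
      (hle f₀ hf₀.1 hf₀.2))
  · exact tendsto_nhds_unique (hg.tendsto_at hz₀) (by simp only [(hF _).2, tendsto_const_nhds])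

/-- An embedding with maximal derivative at the base point is onto, since otherwise Koebe's trick
improves it. -/
theorem exists_image_eq_ball (hU : IsOpen U) (hUc : IsPreconnected U)
    (hUb : Bornology.IsBounded U) (hUcompl : IsPreconnected Uᶜ) {z₀ : ℂ} (hz₀ : z₀ ∈ U) :
    ∃ f, IsDiscEmbedding f U ∧ f z₀ = 0 ∧ f '' U = ball 0 1 := by
  obtain ⟨g, ⟨hg, hg0⟩, hmax⟩ := exists_forall_norm_deriv_le hU hUc hUb hz₀
  refine ⟨g, hg, hg0, hg.mapsTo.image_subset.antisymm fun w hw => ?_⟩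
  rw [mem_ball_zero_iff] at hw
  by_contra hwg
  have hne : ∀ z ∈ U, discMap w (g z) ≠ 0 := fun z hz h0 =>
    (div_eq_zero_iff.1 h0).elim (fun h => hwg ⟨z, hz, sub_eq_zero.1 h⟩)
      (one_sub_conj_mul_ne_zero hw (hg.norm_lt_one hz))
  have hd := (hg.discMap_comp hU hw).differentiableOn
  obtain ⟨s, hs, hsq⟩ := exists_continuousOn_sq_eq hU hUb hUcompl hd.continuousOn hne
  obtain ⟨h, hh, hh0, hlt⟩ := hg.exists_norm_deriv_lt hU hz₀ hg0 hw
    (differentiableOn_of_sq_eq hU hd hs hsq hne) hsq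
  exact hlt.not_ge (hmax h hh hh0)

end IsDiscEmbedding

/-- A conformal map `F` from the unit disc onto `U`, together with its inverse `G`. -/
structure ConformalDisc (U : Set ℂ) (F G : ℂ → ℂ) : Prop where
  diff : DifferentiableOn ℂ F (ball 0 1)
  diff_inv : DifferentiableOn ℂ G U
  mapsTo : MapsTo F (ball 0 1) U
  mapsTo_inv : MapsTo G U (ball 0 1)
  left_inv : ∀ z ∈ ball (0 : ℂ) 1, G (F z) = z
  right_inv : ∀ w ∈ U, F (G w) = w

theorem exists_conformalDisc {U : Set ℂ} (hU : IsOpen U) (hUc : IsPreconnected U)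
    (hUb : Bornology.IsBounded U) (hUcompl : IsPreconnected Uᶜ) {z₀ : ℂ} (hz₀ : z₀ ∈ U) :
    ∃ F G, ConformalDisc U F G ∧ F 0 = z₀ := by
  obtain ⟨G, hG, hG0, hGU⟩ := IsDiscEmbedding.exists_image_eq_ball hU hUc hUb hUcompl hz₀
  have hbij : BijOn G U (ball 0 1) := hGU ▸ hG.injOn.bijOn_image
  have hinv : InvOn (Function.invFunOn G U) G U (ball 0 1) := hbij.invOn_invFunOn
  have hmaps : MapsTo (Function.invFunOn G U) (ball 0 1) U := hbij.surjOn.mapsTo_invFunOn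
  refine ⟨Function.invFunOn G U, G, ⟨fun z hz => ?_, hG.differentiableOn, hmaps, hbij.mapsTo,
    hinv.2, hinv.1⟩, hG0 ▸ hinv.1 hz₀⟩
  have hderiv := ((hG.differentiableOn.analyticAt
    (hU.mem_nhds (hmaps hz))).hasStrictDerivAt).to_local_left_inverse
    (hG.deriv_ne_zero _ (hmaps hz)) (Filter.mem_of_superset (hU.mem_nhds (hmaps hz)) hinv.1)
  rw [hinv.2 hz] at hderiv
  exact hderiv.hasDerivAt.differentiableAt.differentiableWithinAt
/-! ### The length–area principle -/

open MeasureTheory in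
lemma lintegral_norm_deriv_sq_eq_volume_image {Φ : ℂ → ℂ} {E : Set ℂ} (hE : MeasurableSet E)
    (hΦ : ∀ z ∈ E, DifferentiableAt ℂ Φ z) (hinj : InjOn Φ E) :
    ∫⁻ z in E, ENNReal.ofReal (‖deriv Φ z‖ ^ 2) = volume (Φ '' E) := by
  rw [← lintegral_abs_det_fderiv_eq_addHaar_image volume hE
    (fun z hz => ((hΦ z hz).hasFDerivAt.restrictScalars ℝ).hasFDerivWithinAt) hinj]
  refine setLIntegral_congr_fun hE fun z _ => ?_
  have hmul : (((fderiv ℂ Φ z).restrictScalars ℝ : ℂ →L[ℝ] ℂ) : ℂ →ₗ[ℝ] ℂ) =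
      Algebra.lmul ℝ ℂ (deriv Φ z) := by
    ext
    simp [mul_comm]
  have hdet : ((fderiv ℂ Φ z).restrictScalars ℝ).det = ‖deriv Φ z‖ ^ 2 := by
    rw [ContinuousLinearMap.det, hmul, ← Algebra.norm_apply, Algebra.norm_complex_apply,
      Complex.normSq_eq_norm_sq]
  simp only [hdet, abs_of_nonneg (sq_nonneg ‖deriv Φ z‖)]

open MeasureTheory in
/-- The total energy of an injective holomorphic function is the area of its image, so by Fubini
some vertical segment carries at most the average. -/
lemma exists_lintegral_norm_deriv_sq_le {Φ : ℂ → ℂ} {x₀ L : ℝ} {T : Set ℝ} (hL : 0 < L)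
    (hT : MeasurableSet T) (hΦ : ∀ z ∈ Icc x₀ (x₀ + L) ×ℂ T, DifferentiableAt ℂ Φ z)
    (hinj : InjOn Φ (Icc x₀ (x₀ + L) ×ℂ T)) {A : ℝ}
    (hA : volume (Φ '' (Icc x₀ (x₀ + L) ×ℂ T)) ≤ ENNReal.ofReal A) :
    ∃ s ∈ Icc x₀ (x₀ + L), ∫⁻ θ in T,
      ENNReal.ofReal (‖deriv Φ (s + θ * Complex.I)‖ ^ 2) ≤ ENNReal.ofReal (A / L) := by
  let q : ℝ × ℝ → ENNReal := fun x => ENNReal.ofReal (‖deriv Φ (x.1 + x.2 * Complex.I)‖ ^ 2)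
  have hqm : Measurable q := by
    have : Measurable fun x : ℝ × ℝ => deriv Φ (x.1 + x.2 * Complex.I) :=
      (measurable_deriv Φ).comp (by fun_prop)
    exact ENNReal.measurable_ofReal.comp (this.norm.pow_const 2)
  have hRm : MeasurableSet (Icc x₀ (x₀ + L) ×ℂ T) :=
    Complex.measurableEquivRealProd.measurable (measurableSet_Icc.prod hT)
  have harea : ∫⁻ x in Icc x₀ (x₀ + L) ×ˢ T, q x ≤ ENNReal.ofReal A := by
    rw [← Complex.volume_preserving_equiv_real_prod.setLIntegral_comp_preimage_emb
      Complex.measurableEquivRealProd.measurableEmbedding q]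
    have hq : ∀ z : ℂ, q (Complex.measurableEquivRealProd z) =
        ENNReal.ofReal (‖deriv Φ z‖ ^ 2) := fun z => by
      simp only [q, Complex.measurableEquivRealProd_apply, Complex.re_add_im]
    simp only [hq]
    exact (lintegral_norm_deriv_sq_eq_volume_image hRm hΦ hinj).trans_le hA
  rw [Measure.volume_eq_prod, setLIntegral_prod q hqm.aemeasurable] at harea
  have hv : volume (Icc x₀ (x₀ + L)) = ENNReal.ofReal L := by
    rw [Real.volume_Icc, add_sub_cancel_left]
  obtain ⟨s, hs, h⟩ := exists_le_setLAverage (μ := volume) (s := Icc x₀ (x₀ + L))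
    (f := fun s => ∫⁻ θ in T, q (s, θ)) (by rw [hv]; simpa using hL) (by rw [hv]; simp)
    (hqm.lintegral_prod_right').aemeasurable
  refine ⟨s, hs, h.trans ?_⟩
  rw [setLAverage_eq, hv, ENNReal.ofReal_div_of_pos hL]
  gcongr

open MeasureTheory in
lemma dist_le_of_lintegral_norm_deriv_sq_le {E : Type*} [NormedAddCommGroup E] [NormedSpace ℝ E]
    [CompleteSpace E] {f f' : ℝ → E} {a b : ℝ} (hab : a ≤ b)
    (hf : ∀ t ∈ Icc a b, HasDerivAt f (f' t) t) (hf' : ContinuousOn f' (Icc a b)) {B : ℝ}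
    (hB0 : 0 ≤ B) (hB : ∫⁻ t in Icc a b, ENNReal.ofReal (‖f' t‖ ^ 2) ≤ ENNReal.ofReal B)
    {c : ℝ} (hc : 0 < c) : dist (f a) (f b) ≤ (c * (b - a) + B / c) / 2 := by
  rw [← uIcc_of_le hab] at hf hf'
  have hint : IntervalIntegrable (fun t => ‖f' t‖) volume a b := hf'.norm.intervalIntegrable
  have hint_sq : IntervalIntegrable (fun t => ‖f' t‖ ^ 2) volume a b :=
    (hf'.norm.pow 2).intervalIntegrable
  have hB' : ∫ t in a..b, ‖f' t‖ ^ 2 ≤ B := by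
    rw [intervalIntegral.integral_of_le hab, integral_eq_lintegral_of_nonneg_ae
      (.of_forall fun t => sq_nonneg _) hint_sq.1.aestronglyMeasurable]
    exact ENNReal.toReal_le_of_le_ofReal hB0
      ((lintegral_mono_set Ioc_subset_Icc_self).trans hB)
  have amgm : ∀ x : ℝ, x ≤ c / 2 + 1 / (2 * c) * x ^ 2 := fun x => by
    have h : c / 2 + 1 / (2 * c) * x ^ 2 - x = (c - x) ^ 2 / (2 * c) := by
      field_simp
      ring
    have : 0 ≤ (c - x) ^ 2 / (2 * c) := by positivity
    linarith
  rw [dist_comm, dist_eq_norm,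
    ← intervalIntegral.integral_eq_sub_of_hasDerivAt hf hf'.intervalIntegrable]
  calc ‖∫ t in a..b, f' t‖
      ≤ ∫ t in a..b, ‖f' t‖ := intervalIntegral.norm_integral_le_integral_norm hab
    _ ≤ ∫ t in a..b, (c / 2 + 1 / (2 * c) * ‖f' t‖ ^ 2) :=
        intervalIntegral.integral_mono_on hab hint
          (intervalIntegrable_const.add (hint_sq.const_mul _)) fun t _ => amgm _
    _ = (b - a) * (c / 2) + 1 / (2 * c) * ∫ t in a..b, ‖f' t‖ ^ 2 := by
        rw [intervalIntegral.integral_add intervalIntegrable_const (hint_sq.const_mul _),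
          intervalIntegral.integral_const, intervalIntegral.integral_const_mul, smul_eq_mul]
    _ ≤ (b - a) * (c / 2) + 1 / (2 * c) * B := by gcongr
    _ = (c * (b - a) + B / c) / 2 := by field_simp

/-- The strip `|Im ζ| < π / 2`, a half-plane in logarithmic coordinates. -/
def strip : Set ℂ := {ζ | |ζ.im| < Real.pi / 2}

lemma isOpen_strip : IsOpen strip := isOpen_lt (by fun_prop) continuous_const

lemma ofReal_add_mul_I_mem_strip {s θ : ℝ} :
    (s + θ * Complex.I : ℂ) ∈ strip ↔ θ ∈ Ioo (-(Real.pi / 2)) (Real.pi / 2) := by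
  simp [strip, abs_lt]

lemma Icc_reProdIm_Ioo_subset_strip {x y : ℝ} :
    Icc x y ×ℂ Ioo (-(Real.pi / 2)) (Real.pi / 2) ⊆ strip := fun _ hz => abs_lt.2 hz.2

open MeasureTheory in
lemma exists_dist_vertical_segment_le {Φ : ℂ → ℂ} {A L : ℝ} (hL : 0 < L) (hA0 : 0 ≤ A)
    (hΦ : DifferentiableOn ℂ Φ strip) (hinj : InjOn Φ strip)
    (hA : volume (Φ '' strip) ≤ ENNReal.ofReal A) (x₀ : ℝ) {c : ℝ} (hc : 0 < c) :
    ∃ s ∈ Icc x₀ (x₀ + L), ∀ θ₁ ∈ Ioo (-(Real.pi / 2)) (Real.pi / 2),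
      ∀ θ₂ ∈ Ioo (-(Real.pi / 2)) (Real.pi / 2),
      dist (Φ (s + θ₁ * Complex.I)) (Φ (s + θ₂ * Complex.I)) ≤
        (c * Real.pi + A / L / c) / 2 := by
  obtain ⟨s, hs, hE⟩ := exists_lintegral_norm_deriv_sq_le hL measurableSet_Ioo
    (fun z hz => (hΦ z (Icc_reProdIm_Ioo_subset_strip hz)).differentiableAt
      (isOpen_strip.mem_nhds (Icc_reProdIm_Ioo_subset_strip hz)))
    (hinj.mono (Icc_reProdIm_Ioo_subset_strip (x := x₀)))
    ((measure_mono (image_mono Icc_reProdIm_Ioo_subset_strip)).trans hA)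
  refine ⟨s, hs, fun θ₁ h₁ θ₂ h₂ => ?_⟩
  wlog hle : θ₁ ≤ θ₂ generalizing θ₁ θ₂
  · rw [dist_comm]
    exact this θ₂ h₂ θ₁ h₁ (not_le.1 hle).le
  have hsub : Icc θ₁ θ₂ ⊆ Ioo (-(Real.pi / 2)) (Real.pi / 2) := Icc_subset_Ioo h₁.1 h₂.2
  have hmem : ∀ θ ∈ Icc θ₁ θ₂, (s + θ * Complex.I : ℂ) ∈ strip := fun θ hθ =>
    ofReal_add_mul_I_mem_strip.2 (hsub hθ)
  have hderiv : ∀ θ ∈ Icc θ₁ θ₂, HasDerivAt (fun t : ℝ => Φ (s + t * Complex.I))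
      (deriv Φ (s + θ * Complex.I) * Complex.I) θ := fun θ hθ => by
    have hline : HasDerivAt (fun t : ℂ => s + t * Complex.I) Complex.I (θ : ℂ) := by
      simpa using ((hasDerivAt_id (θ : ℂ)).mul_const Complex.I).const_add (s : ℂ)
    exact (((hΦ _ (hmem θ hθ)).differentiableAt
      (isOpen_strip.mem_nhds (hmem θ hθ))).hasDerivAt.comp (θ : ℂ) hline).comp_ofReal
  have hcont : ContinuousOn (fun t : ℝ => deriv Φ (s + t * Complex.I) * Complex.I)
      (Icc θ₁ θ₂) :=
    ((hΦ.deriv isOpen_strip).continuousOn.comp (by fun_prop) hmem).mul continuousOn_const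
  have henergy : ∫⁻ t in Icc θ₁ θ₂,
      ENNReal.ofReal (‖deriv Φ (s + t * Complex.I) * Complex.I‖ ^ 2) ≤
      ENNReal.ofReal (A / L) := by
    simp only [norm_mul, Complex.norm_I, mul_one]
    exact (lintegral_mono_set hsub).trans hE
  refine (dist_le_of_lintegral_norm_deriv_sq_le hle hderiv hcont (by positivity) henergy
    hc).trans ?_
  gcongr
  linarith [h₁.1, h₂.2]

/-! ### Boundary extension of conformal maps -/

lemma re_exp_pos {ζ : ℂ} (hζ : ζ ∈ strip) : 0 < (Complex.exp ζ).re := by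
  rw [Complex.exp_re]
  exact mul_pos (Real.exp_pos _) (Real.cos_pos_of_mem_Ioo (abs_lt.1 hζ))

lemma one_add_exp_ne_zero {ζ : ℂ} (hζ : ζ ∈ strip) : 1 + Complex.exp ζ ≠ 0 := fun h => by
  have hre := congr_arg Complex.re h
  simp only [Complex.add_re, Complex.one_re, Complex.zero_re] at hre
  linarith [re_exp_pos hζ]

/-- For `‖a‖ = 1`, the conformal map from the strip to the disc sending `-∞` to `a`. -/
def stripMap (a ζ : ℂ) : ℂ := a * ((1 - Complex.exp ζ) / (1 + Complex.exp ζ))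

lemma differentiableOn_stripMap (a : ℂ) : DifferentiableOn ℂ (stripMap a) strip :=
  (DifferentiableOn.div (by fun_prop) (by fun_prop) fun _ => one_add_exp_ne_zero).const_mul a

lemma sub_stripMap (a : ℂ) {ζ : ℂ} (hζ : ζ ∈ strip) :
    a - stripMap a ζ = Complex.exp ζ * (a + stripMap a ζ) := by
  have := one_add_exp_ne_zero hζ
  rw [stripMap]
  field_simp
  ring

lemma add_ne_zero_of_mem_ball {a z : ℂ} (ha : ‖a‖ = 1) (hz : z ∈ ball (0 : ℂ) 1) : a + z ≠ 0 :=
  fun h => by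
    rw [mem_ball_zero_iff, ← norm_neg, ← eq_neg_of_add_eq_zero_left h] at hz
    linarith

lemma mapsTo_stripMap {a : ℂ} (ha : ‖a‖ = 1) : MapsTo (stripMap a) strip (ball 0 1) := by
  intro ζ hζ
  rw [mem_ball_zero_iff, stripMap, norm_mul, ha, one_mul, norm_div,
    div_lt_one (norm_pos_iff.2 (one_add_exp_ne_zero hζ))]
  refine lt_of_pow_lt_pow_left₀ 2 (norm_nonneg _) ?_
  simp only [Complex.sq_norm, Complex.normSq_apply, Complex.sub_re, Complex.sub_im,
    Complex.add_re, Complex.add_im, Complex.one_re, Complex.one_im]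
  nlinarith [re_exp_pos hζ]

lemma injOn_stripMap {a : ℂ} (ha : ‖a‖ = 1) : InjOn (stripMap a) strip := by
  intro x hx y hy hxy
  have hexp : Complex.exp y = Complex.exp x := by
    have h := sub_stripMap a hx
    rw [hxy, sub_stripMap a hy] at h
    exact mul_right_cancel₀ (add_ne_zero_of_mem_ball ha (mapsTo_stripMap ha hy)) h
  have hpi := Real.pi_pos
  have hx' := abs_lt.1 (show |x.im| < Real.pi / 2 from hx)
  have hy' := abs_lt.1 (show |y.im| < Real.pi / 2 from hy)
  exact (Complex.exp_inj_of_neg_pi_lt_of_le_pi (by linarith) (by linarith) (by linarith)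
    (by linarith) hexp).symm

lemma re_sub_div_add_pos {a z : ℂ} (hza : ‖z‖ < ‖a‖) : 0 < ((a - z) / (a + z)).re := by
  have hne : a + z ≠ 0 := fun h => by
    rw [eq_neg_of_add_eq_zero_left h, norm_neg] at hza
    exact lt_irrefl _ hza
  have hsq : ‖z‖ ^ 2 < ‖a‖ ^ 2 := by gcongr
  simp only [Complex.sq_norm, Complex.normSq_apply] at hsq
  rw [Complex.div_re, ← add_div]
  refine div_pos ?_ (Complex.normSq_pos.2 hne)
  simp only [Complex.sub_re, Complex.add_re, Complex.sub_im, Complex.add_im]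
  nlinarith

/-- The arc of an Apollonius circle around the boundary point `a` which `stripMap a` makes out of
the vertical segment at abscissa `log k`. -/
def crosscut (a : ℂ) (k : ℝ) : Set ℂ := {z ∈ ball 0 1 | ‖a - z‖ = k * ‖a + z‖}

lemma exists_eq_stripMap {a z : ℂ} (ha : ‖a‖ = 1) {s : ℝ} (hz : z ∈ crosscut a (Real.exp s)) :
    ∃ θ ∈ Ioo (-(Real.pi / 2)) (Real.pi / 2), z = stripMap a (s + θ * Complex.I) := by
  have hne := add_ne_zero_of_mem_ball ha hz.1
  set w := (a - z) / (a + z) with hw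
  have hnorm : ‖w‖ = Real.exp s := by
    rw [hw, norm_div, hz.2, mul_div_cancel_right₀ _ (norm_ne_zero_iff.2 hne)]
  have hexp : Complex.exp (s + w.arg * Complex.I) = w := by
    rw [Complex.exp_add, ← Complex.ofReal_exp, ← hnorm, Complex.norm_mul_exp_arg_mul_I]
  have harg : w.arg ∈ Ioo (-(Real.pi / 2)) (Real.pi / 2) := abs_lt.1
    (Complex.abs_arg_lt_pi_div_two_iff.2
      (Or.inl (re_sub_div_add_pos (ha ▸ mem_ball_zero_iff.1 hz.1))))
  refine ⟨w.arg, harg, ?_⟩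
  have hone : 1 + w ≠ 0 := hexp ▸ one_add_exp_ne_zero (ofReal_add_mul_I_mem_strip.2 harg)
  rw [stripMap, hexp, mul_div_assoc', eq_div_iff hone]
  linear_combination div_mul_cancel₀ (a - z) hne

lemma norm_sub_le_of_mem_crosscut {a z : ℂ} {k : ℝ} (ha : ‖a‖ = 1) (hk : 0 ≤ k)
    (hz : z ∈ crosscut a k) : ‖a - z‖ ≤ 2 * k := by
  have hadd := norm_add_le a z
  have hz1 := mem_ball_zero_iff.1 hz.1
  rw [hz.2]
  nlinarith

lemma crosscut_nonempty {a : ℂ} {k : ℝ} (ha : ‖a‖ = 1) (hk : 0 < k) : (crosscut a k).Nonempty := by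
  have h0 : (Real.log k : ℂ) ∈ strip := by simp [strip, Real.pi_pos]
  refine ⟨stripMap a (Real.log k), mapsTo_stripMap ha h0, ?_⟩
  rw [sub_stripMap a h0, norm_mul, ← Complex.ofReal_exp, Real.exp_log hk, Complex.norm_real,
    Real.norm_of_nonneg hk.le]

lemma closure_connectedComponentIn_compl_subset {X : Type*} [TopologicalSpace X]
    [LocallyConnectedSpace X] {H : Set X} (hH : IsClosed H) (p : X) :
    closure (connectedComponentIn Hᶜ p) ⊆ connectedComponentIn Hᶜ p ∪ H := by
  rw [closure_eq_self_union_frontier]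
  exact union_subset_union_right _ (frontier_connectedComponentIn_subset hH)
lemma neBot_nhdsWithin_ball {a : ℂ} (ha : ‖a‖ = 1) : (𝓝[ball (0 : ℂ) 1] a).NeBot := by
  rw [← mem_closure_iff_nhdsWithin_neBot, closure_ball _ one_ne_zero]
  exact mem_closedBall_zero_iff.2 ha.le

lemma exists_tendsto_of_forall_eventually_dist_lt {X E : Type*} [PseudoMetricSpace E]
    [CompleteSpace E] {l : Filter X} [l.NeBot] {f : X → E}
    (h : ∀ ε > 0, ∃ c, ∀ᶠ x in l, dist (f x) c < ε) : ∃ y, Filter.Tendsto f l (𝓝 y) := by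
  refine cauchy_map_iff_exists_tendsto.1 (Metric.cauchy_iff.2 ⟨inferInstance, fun ε hε => ?_⟩)
  obtain ⟨c, hc⟩ := h (ε / 2) (half_pos hε)
  refine ⟨f '' {x | dist (f x) c < ε / 2}, Filter.image_mem_map hc, ?_⟩
  rintro _ ⟨x, hx, rfl⟩ _ ⟨y, hy, rfl⟩
  exact (dist_triangle_right _ _ c).trans_lt ((add_lt_add hx hy).trans_eq (add_halves ε))

lemma JordanParam.exists_continuum_superset {H : Set ℂ} {α β : ℂ → ℂ} (h : JordanParam H α β)
    {ρ : ℝ} (hρ : 0 < ρ) :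
    ∃ δ > 0, ∀ S, (∀ x ∈ S, ∀ y ∈ S, dist x y ≤ δ) → ∀ c ∈ S,
      ∃ J ⊆ H ∩ closedBall c ρ, IsCompact J ∧ IsPreconnected J ∧ S ∩ H ⊆ J := by
  obtain ⟨δ, hδ, hcont⟩ := h.exists_small_continuum (half_pos hρ)
  refine ⟨min (δ / 2) (ρ / 2), by positivity, fun S hS c hc => ?_⟩
  rcases (S ∩ H).eq_empty_or_nonempty with hempty | ⟨q, hq⟩
  · exact ⟨∅, empty_subset _, isCompact_empty, isPreconnected_empty, hempty.subset⟩
  obtain ⟨J, hJH, hJc, hJp, hSJ, hJd⟩ := hcont (S ∩ H) inter_subset_right fun x hx y hy =>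
    (hS x hx.1 y hy.1).trans_lt ((min_le_left _ _).trans_lt (half_lt_self hδ))
  refine ⟨J, fun x hx => ⟨hJH hx, ?_⟩, hJc, hJp, hSJ⟩
  have hxq := hJd x hx q (hSJ hq)
  have hqc := (hS q hq.1 c hc).trans (min_le_right _ _)
  exact mem_closedBall.2 (by linarith [dist_triangle x q c])

namespace ConformalDisc

variable {U H : Set ℂ} {α β F G : ℂ → ℂ}

lemma injOn (hF : ConformalDisc U F G) : InjOn F (ball 0 1) :=
  (show LeftInvOn G F _ from hF.left_inv).injOn

lemma congr {F' : ℂ → ℂ} (hF : ConformalDisc U F G) (h : EqOn F' F (ball 0 1)) :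
    ConformalDisc U F' G where
  diff := hF.diff.congr h
  diff_inv := hF.diff_inv
  mapsTo := hF.mapsTo.congr h.symm
  mapsTo_inv := hF.mapsTo_inv
  left_inv z hz := by rw [h hz, hF.left_inv z hz]
  right_inv w hw := by rw [h (hF.mapsTo_inv hw), hF.right_inv w hw]

open MeasureTheory in
lemma exists_small_crosscut (hF : ConformalDisc U F G) (hUb : Bornology.IsBounded U) {a : ℂ}
    (ha : ‖a‖ = 1) {η κ : ℝ} (hη : 0 < η) (hκ : 0 < κ) :
    ∃ k > 0, k < κ ∧ ∀ z ∈ crosscut a k, ∀ z' ∈ crosscut a k, dist (F z) (F z') ≤ η := by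
  have _ := Real.pi_pos
  set A := (volume U).toReal with hA
  have hA0 : 0 ≤ A := ENNReal.toReal_nonneg
  set c := η / Real.pi with hc
  have hc0 : 0 < c := by positivity
  set L := max 1 (A / (c * η))
  have hL : 0 < L := by positivity
  have harea : volume ((fun ζ => F (stripMap a ζ)) '' strip) ≤ ENNReal.ofReal A := by
    rw [hA, ENNReal.ofReal_toReal hUb.measure_lt_top.ne]
    exact measure_mono (image_subset_iff.2 (hF.mapsTo.comp (mapsTo_stripMap ha)))
  obtain ⟨s, hs, hd⟩ := exists_dist_vertical_segment_le hL hA0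
    (hF.diff.comp (differentiableOn_stripMap a) (mapsTo_stripMap ha))
    (hF.injOn.comp (injOn_stripMap ha) (mapsTo_stripMap ha)) harea (Real.log κ - 1 - L) hc0
  refine ⟨Real.exp s, Real.exp_pos s, ?_, fun z hz z' hz' => ?_⟩
  · rw [← Real.lt_log_iff_exp_lt hκ]
    linarith [hs.2]
  · obtain ⟨θ, hθ, rfl⟩ := exists_eq_stripMap ha hz
    obtain ⟨θ', hθ', rfl⟩ := exists_eq_stripMap ha hz'
    refine (hd θ hθ θ' hθ').trans ?_
    have hlength : c * Real.pi = η := by rw [hc]; field_simp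
    have henergy : A / L / c ≤ η := by
      rw [div_le_iff₀ hc0, div_le_iff₀ hL, mul_comm η c, mul_comm, ← div_le_iff₀ (by positivity)]
      exact le_max_right _ _
    linarith

lemma exists_infDist_lt (hF : ConformalDisc U F G) (hUb : Bornology.IsBounded U)
    (hUH : closure U ⊆ U ∪ H) {d : ℝ} (hd : 0 < d) :
    ∃ r < 1, ∀ z ∈ ball (0 : ℂ) 1, r < ‖z‖ → infDist (F z) H < d := by
  set K := closure U ∩ {w | d ≤ infDist w H}
  have hK : IsCompact K := hUb.isCompact_closure.inter_right
    (isClosed_le continuous_const (continuous_infDist_pt H))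
  have hKU : K ⊆ U := fun w hw => (hUH hw.1).resolve_right fun h =>
    hd.not_ge (infDist_zero_of_mem h ▸ hw.2)
  have hmem : ∀ z ∈ ball (0 : ℂ) 1, ¬infDist (F z) H < d → F z ∈ K := fun z hz h =>
    ⟨subset_closure (hF.mapsTo hz), not_lt.1 h⟩
  rcases K.eq_empty_or_nonempty with h0 | hne
  · exact ⟨0, one_pos, fun z hz _ => by_contra fun h => h0.subset (hmem z hz h)⟩
  obtain ⟨m, hm, hmax⟩ := hK.exists_isMaxOn hne (hF.diff_inv.continuousOn.mono hKU).norm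
  refine ⟨‖G m‖, by simpa using hF.mapsTo_inv (hKU hm), fun z hz hlt => by_contra fun h => ?_⟩
  have hle : ‖G (F z)‖ ≤ ‖G m‖ := hmax (hmem z hz h)
  rw [hF.left_inv z hz] at hle
  exact hlt.not_ge hle

/-- A crosscut separates the centre of the disc from the points beyond it. -/
lemma exists_mem_image_crosscut (hF : ConformalDisc U F G) {Q : Set ℂ} (hQ : IsPreconnected Q)
    (hQU : Q ⊆ U) (h0Q : F 0 ∈ Q) {z : ℂ} (hz : z ∈ ball (0 : ℂ) 1) (hzQ : F z ∈ Q) {a : ℂ} {k : ℝ}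
    (ha : ‖a‖ = 1) (hk1 : k < 1) (hzk : ‖a - z‖ < k * ‖a + z‖) :
    ∃ w ∈ Q, w ∈ F '' crosscut a k := by
  have hGQ : IsPreconnected (G '' Q) := hQ.image G (hF.diff_inv.continuousOn.mono hQU)
  obtain ⟨_, ⟨q, hq, rfl⟩, hval⟩ := hGQ.intermediate_value ⟨F z, hzQ, hF.left_inv z hz⟩
    ⟨F 0, h0Q, hF.left_inv 0 (mem_ball_self one_pos)⟩
    (f := fun x => ‖a - x‖ - k * ‖a + x‖) (by fun_prop)
    (show (0 : ℝ) ∈ _ from ⟨by linarith, by simpa [ha] using hk1.le⟩)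
  exact ⟨q, hq, G q, ⟨hF.mapsTo_inv (hQU hq), sub_eq_zero.1 hval⟩, hF.right_inv q (hQU hq)⟩

/-- The side of a small crosscut away from the centre has a small image: otherwise, by Janiszewski's
theorem, the centre could be joined to a point beyond the crosscut without meeting it. -/
lemma mem_closedBall_of_crosscut {p : ℂ} (hF : ConformalDisc (connectedComponentIn Hᶜ p) F G)
    (hH : IsCompact H) {J : Set ℂ} (hJ : IsCompact J) (hJc : IsPreconnected J) {c : ℂ} {ρ : ℝ}
    (hJH : J ⊆ H ∩ closedBall c ρ) {a : ℂ} {k : ℝ} (ha : ‖a‖ = 1) (hk1 : k < 1)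
    (hC : closure (F '' crosscut a k) ⊆ closedBall c ρ)
    (hCJ : closure (F '' crosscut a k) ∩ H ⊆ J) (h0 : F 0 ∉ closedBall c ρ) {z : ℂ}
    (hz : z ∈ ball (0 : ℂ) 1) (hzk : ‖a - z‖ < k * ‖a + z‖) : F z ∈ closedBall c ρ := by
  by_contra hzρ
  set C := F '' crosscut a k
  rw [subset_inter_iff] at hJH
  have hUH : connectedComponentIn Hᶜ p ⊆ Hᶜ := connectedComponentIn_subset _ _
  have h0U := hF.mapsTo (mem_ball_self one_pos)
  have hCc : IsCompact (closure C) :=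
    (isCompact_closedBall c ρ).of_isClosed_subset isClosed_closure hC
  have hinter : H ∩ (closure C ∪ J) = J := by
    rw [inter_union_distrib_left, inter_comm H, inter_eq_right.2 hJH.1]
    exact union_eq_right.2 hCJ
  have hCJρ : closure C ∪ J ⊆ closedBall c ρ := union_subset hC hJH.2
  have hcomp := connectedComponentIn_compl_union_eq hH (hCc.union hJ) (by rwa [hinter])
    isPreconnected_connectedComponentIn
    (isPreconnected_compl_closedBall (E := ℂ) (by simp) c ρ)
    (subset_compl_iff_disjoint_right.1 hUH)
    (disjoint_compl_left_iff_subset.2 hCJρ) h0U (hF.mapsTo hz) h0 hzρ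
  have hmem : ∀ w ∈ ball (0 : ℂ) 1, F w ∉ closedBall c ρ → F w ∈ (H ∪ (closure C ∪ J))ᶜ :=
    fun w hw hwρ h => h.elim (hUH (hF.mapsTo hw)) fun h => hwρ (hCJρ h)
  set Q := connectedComponentIn (H ∪ (closure C ∪ J))ᶜ (F 0)
  have h0Q : F 0 ∈ Q := mem_connectedComponentIn (hmem 0 (mem_ball_self one_pos) h0)
  have hQsub : Q ⊆ (H ∪ (closure C ∪ J))ᶜ := connectedComponentIn_subset _ _
  have hQU : Q ⊆ connectedComponentIn Hᶜ p := by
    rw [connectedComponentIn_eq h0U]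
    exact isPreconnected_connectedComponentIn.subset_connectedComponentIn h0Q
      (hQsub.trans (compl_subset_compl.2 subset_union_left))
  obtain ⟨w, hwQ, hwC⟩ := hF.exists_mem_image_crosscut isPreconnected_connectedComponentIn hQU h0Q
    hz (hcomp.superset (mem_connectedComponentIn (hmem z hz hzρ))) ha hk1 hzk
  exact hQsub hwQ (Or.inr (Or.inl (subset_closure hwC)))

lemma exists_forall_mem_crosscut_lt_dist {p : ℂ}
    (hF : ConformalDisc (connectedComponentIn Hᶜ p) F G) (h : JordanParam H α β)
    (hUb : Bornology.IsBounded (connectedComponentIn Hᶜ p)) :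
    ∃ κ > 0, ∃ d > 0, ∀ a : ℂ, ‖a‖ = 1 → ∀ k ∈ Ioo 0 κ, ∀ z ∈ crosscut a k,
      d < dist (F 0) (F z) := by
  have hd : 0 < infDist (F 0) H := (h.isClosed.notMem_iff_infDist_pos h.nonempty).1
    (connectedComponentIn_subset _ _ (hF.mapsTo (mem_ball_self one_pos)))
  obtain ⟨r, hr, hrH⟩ := hF.exists_infDist_lt hUb
    (closure_connectedComponentIn_compl_subset h.isClosed p) (half_pos hd)
  refine ⟨(1 - r) / 2, by linarith, infDist (F 0) H / 2, half_pos hd, fun a ha k hk z hz => ?_⟩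
  have hrz : r < ‖z‖ := by
    have haz := norm_sub_le_of_mem_crosscut ha hk.1.le hz
    linarith [norm_sub_norm_le a z, hk.2]
  linarith [hrH z hz.1 hrz, infDist_le_infDist_add_dist (s := H) (x := F 0) (y := F z)]

lemma exists_eventually_dist_lt {p : ℂ} (hF : ConformalDisc (connectedComponentIn Hᶜ p) F G)
    (h : JordanParam H α β) (hUb : Bornology.IsBounded (connectedComponentIn Hᶜ p)) {a : ℂ}
    (ha : ‖a‖ = 1) {ε : ℝ} (hε : 0 < ε) : ∃ c, ∀ᶠ z in 𝓝[ball 0 1] a, dist (F z) c < ε := by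
  obtain ⟨κ, hκ, d, hd, hfar⟩ := hF.exists_forall_mem_crosscut_lt_dist h hUb
  set ρ := min (ε / 2) d
  have hρ : 0 < ρ := by positivity
  obtain ⟨δ, hδ, hcont⟩ := h.exists_continuum_superset hρ
  obtain ⟨k, hk0, hk, hsmall⟩ := hF.exists_small_crosscut hUb ha
    (lt_min hρ hδ) (lt_min one_pos hκ)
  rw [lt_min_iff] at hk
  have hCd : ∀ x ∈ closure (F '' crosscut a k), ∀ y ∈ closure (F '' crosscut a k),
      dist x y ≤ min ρ δ := fun x hx y hy =>
    isClosed_Iic.closure_subset (map_mem_closure₂ continuous_dist hx hy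
      (forall_mem_image.2 fun z hz => forall_mem_image.2 fun z' hz' => hsmall z hz z' hz'))
  obtain ⟨z₀, hz₀⟩ := crosscut_nonempty ha hk0
  have hc : F z₀ ∈ closure (F '' crosscut a k) := subset_closure ⟨z₀, hz₀, rfl⟩
  obtain ⟨J, hJH, hJ, hJc, hCJ⟩ := hcont (closure (F '' crosscut a k))
    (fun x hx y hy => (hCd x hx y hy).trans (min_le_right _ _)) _ hc
  have hC : closure (F '' crosscut a k) ⊆ closedBall (F z₀) ρ := fun x hx =>
    mem_closedBall.2 ((hCd x hx _ hc).trans (min_le_left _ _))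
  have h0 : F 0 ∉ closedBall (F z₀) ρ := fun hmem =>
    (hfar a ha k ⟨hk0, hk.2⟩ z₀ hz₀).not_ge ((mem_closedBall.1 hmem).trans (min_le_right _ _))
  have hnear : ∀ᶠ z in 𝓝[ball 0 1] a, ‖a - z‖ < k * ‖a + z‖ := by
    refine nhdsWithin_le_nhds ((isOpen_lt (by fun_prop) (by fun_prop)).mem_nhds ?_)
    have : ‖a + a‖ = 2 := by rw [← two_mul, norm_mul, ha]; simp
    simp [this, hk0]
  refine ⟨F z₀, ?_⟩
  filter_upwards [hnear, self_mem_nhdsWithin] with z hzk hz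
  exact (mem_closedBall.1 (hF.mem_closedBall_of_crosscut h.isCompact hJ hJc hJH ha hk.1 hC hCJ h0
    hz hzk)).trans_lt ((min_le_left _ _).trans_lt (half_lt_self hε))

lemma exists_continuousOn_extension {p : ℂ} (hF : ConformalDisc (connectedComponentIn Hᶜ p) F G)
    (h : JordanParam H α β) (hUb : Bornology.IsBounded (connectedComponentIn Hᶜ p)) :
    ∃ F', EqOn F' F (ball 0 1) ∧ ContinuousOn F' (closedBall 0 1) := by
  have hcl : closure (ball (0 : ℂ) 1) = closedBall 0 1 := closure_ball _ one_ne_zero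
  refine ⟨extendFrom (ball 0 1) F, fun z hz => ?_, continuousOn_extendFrom hcl.ge fun z hz => ?_⟩
  · exact extendFrom_eq (subset_closure hz) (hF.diff.continuousOn z hz)
  · rcases (mem_closedBall_zero_iff.1 hz).lt_or_eq with hz1 | hz1
    · exact ⟨F z, hF.diff.continuousOn z (mem_ball_zero_iff.2 hz1)⟩
    · have := neBot_nhdsWithin_ball hz1
      exact exists_tendsto_of_forall_eventually_dist_lt fun ε hε =>
        hF.exists_eventually_dist_lt h hUb hz1 hε

lemma mapsTo_sphere (hF : ConformalDisc U F G) (hFc : ContinuousOn F (closedBall 0 1))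
    (hUb : Bornology.IsBounded U) (hH : IsClosed H) (hHne : H.Nonempty)
    (hUH : closure U ⊆ U ∪ H) : MapsTo F (sphere 0 1) H := by
  intro u hu
  have hu1 := mem_sphere_zero_iff_norm.1 hu
  have := neBot_nhdsWithin_ball hu1
  have ht : Filter.Tendsto F (𝓝[ball 0 1] u) (𝓝 (F u)) :=
    (hFc u (sphere_subset_closedBall hu)).mono ball_subset_closedBall
  have hle : ∀ d > 0, infDist (F u) H ≤ d := fun d hd => by
    obtain ⟨r, hr, hrH⟩ := hF.exists_infDist_lt hUb hUH hd
    refine le_of_tendsto ((continuous_infDist_pt H).continuousAt.tendsto.comp ht) ?_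
    have hnear : ∀ᶠ z in 𝓝[ball 0 1] u, r < ‖z‖ := nhdsWithin_le_nhds
      ((isOpen_lt continuous_const continuous_norm).mem_nhds (by simpa [hu1] using hr))
    filter_upwards [hnear, self_mem_nhdsWithin] with z hz hzb using (hrH z hzb hz).le
  rw [hH.mem_iff_infDist_zero hHne]
  exact le_antisymm (le_of_forall_gt_imp_ge_of_dense hle) infDist_nonneg

end ConformalDisc

/-- The product of the rotations of `F - p` that move the arc across the whole circle vanishes on
the circle, hence at the centre. -/
lemma eq_of_eqOn_arc {F : ℂ → ℂ} (hFc : ContinuousOn F (closedBall 0 1))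
    (hFd : DifferentiableOn ℂ F (ball 0 1)) {O : Set ℂ} (hO : IsOpen O) {u p : ℂ}
    (hu : u ∈ sphere (0 : ℂ) 1) (huO : u ∈ O) (hp : ∀ v ∈ O ∩ sphere (0 : ℂ) 1, F v = p) :
    F 0 = p := by
  have hu1 := mem_sphere_zero_iff_norm.1 hu
  obtain ⟨t, ht, hcov⟩ := (isCompact_sphere (0 : ℂ) 1).elim_nhds_subcover
    (fun w => {v | u / w * v ∈ O}) (fun w hw => by
      refine (hO.preimage (continuous_const.mul continuous_id)).mem_nhds ?_
      simpa [div_mul_cancel₀ _ (ne_of_mem_sphere hw one_ne_zero)] using huO)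
  have hnorm : ∀ w ∈ t, ∀ z : ℂ, ‖u / w * z‖ = ‖z‖ := fun w hw z => by
    rw [norm_mul, norm_div, hu1, mem_sphere_zero_iff_norm.1 (ht w hw), div_one, one_mul]
  have hball : ∀ w ∈ t, MapsTo (fun z => u / w * z) (ball 0 1) (ball 0 1) := fun w hw z hz => by
    simpa only [mem_ball_zero_iff, hnorm w hw] using hz
  have hcball : ∀ w ∈ t, MapsTo (fun z => u / w * z) (closedBall 0 1) (closedBall 0 1) :=
    fun w hw z hz => by simpa only [mem_closedBall_zero_iff, hnorm w hw] using hz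
  have hdiff : DiffContOnCl ℂ (fun z => ∏ w ∈ t, (F (u / w * z) - p)) (ball 0 1) := by
    refine ⟨DifferentiableOn.fun_finsetProd fun w hw => ?_, ?_⟩
    · exact (hFd.comp (by fun_prop) (hball w hw)).sub_const p
    · rw [closure_ball _ one_ne_zero]
      exact continuousOn_finsetProd _ fun w hw =>
        (hFc.comp (by fun_prop) (hcball w hw)).sub continuousOn_const
  have hzero : ∀ z ∈ frontier (ball (0 : ℂ) 1), ‖∏ w ∈ t, (F (u / w * z) - p)‖ ≤ 0 := fun z hz => by
    rw [frontier_ball _ one_ne_zero] at hz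
    obtain ⟨w, hw, hzw⟩ := mem_iUnion₂.1 (hcov hz)
    refine norm_le_zero_iff.2 (Finset.prod_eq_zero hw (sub_eq_zero.2 (hp _ ⟨hzw, ?_⟩)))
    rw [mem_sphere_zero_iff_norm, hnorm w hw, mem_sphere_zero_iff_norm.1 hz]
  have h0 := Complex.norm_le_of_forall_mem_frontier_norm_le isBounded_ball hdiff hzero
    (subset_closure (mem_ball_self one_pos))
  simp only [mul_zero, norm_le_zero_iff, Finset.prod_eq_zero_iff] at h0
  obtain ⟨w, -, hw⟩ := h0
  exact sub_eq_zero.1 hw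

section

open scoped RealInnerProductSpace

variable {E : Type*} [NormedAddCommGroup E] [InnerProductSpace ℝ E]

/-- The sector consists of the directions closer to that of `z` than those of `a` and `b`. -/
lemma exists_convex_sector {a b z : E} (ha : ‖a‖ = 1) (hb : ‖b‖ = 1) (hz : ‖z‖ < 1)
    (hza : z ∉ segment ℝ 0 a) (hzb : z ∉ segment ℝ 0 b) :
    ∃ O : Set E, IsOpen O ∧ Convex ℝ O ∧ z ∈ O ∧ (∃ u ∈ O, ‖u‖ = 1) ∧
      Disjoint O (segment ℝ 0 a ∪ segment ℝ 0 b) := by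
  have hz0 : z ≠ 0 := fun h0 => hza (h0 ▸ left_mem_segment ℝ 0 a)
  set u : E := ‖z‖⁻¹ • z with hu
  have hzu : z = ‖z‖ • u := by rw [hu, smul_inv_smul₀ (norm_ne_zero_iff.2 hz0)]
  have hu1 : ‖u‖ = 1 := by simp [hu, norm_smul, hz0]
  have inner_lt : ∀ {x : E}, ‖x‖ = 1 → z ∉ segment ℝ 0 x → ⟪u, x⟫ < 1 := fun {x} hx hzx =>
    (inner_lt_one_iff_real_of_norm_eq_one hu1 hx).2 fun h => hzx <| by
      rw [segment_eq_image']
      exact ⟨‖z‖, ⟨norm_nonneg z, hz.le⟩, by simp only [sub_zero, zero_add, ← h, ← hzu]⟩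
  set c := max 0 (max ⟪u, a⟫ ⟪u, b⟫)
  have hc0 : 0 ≤ c := le_max_left _ _
  have hc1 : c < 1 := max_lt one_pos (max_lt (inner_lt ha hza) (inner_lt hb hzb))
  have segment_notMem : ∀ x : E, ‖x‖ = 1 → ⟪u, x⟫ ≤ c → ∀ y ∈ segment ℝ 0 x,
      y ∉ {y | c * ‖y‖ - ⟪u, y⟫ < 0} := fun x hx hxc y hy => by
    rw [segment_eq_image'] at hy
    obtain ⟨t, ht, rfl⟩ := hy
    simp only [mem_ofPred_eq, sub_zero, zero_add, norm_smul, inner_smul_right, hx,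
      Real.norm_of_nonneg ht.1, not_lt]
    nlinarith [ht.1]
  refine ⟨{y | c * ‖y‖ - ⟪u, y⟫ < 0}, ?_, ?_, ?_, ⟨u, ?_, hu1⟩, disjoint_right.2 ?_⟩
  · exact isOpen_lt (by fun_prop) continuous_const
  · have hconvex := ((convexOn_norm (convex_univ (𝕜 := ℝ) (E := E))).smul hc0).sub
      ((innerₗ E u).concaveOn convex_univ)
    simpa using hconvex.convex_lt 0
  · rw [mem_ofPred_eq, hzu, inner_smul_right, real_inner_self_eq_norm_sq, hu1, ← hzu]
    nlinarith [norm_pos_iff.2 hz0]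
  · rw [mem_ofPred_eq, real_inner_self_eq_norm_sq, hu1]
    linarith
  · rintro y (hy | hy)
    · exact segment_notMem a ha ((le_max_left _ _).trans (le_max_right _ _)) y hy
    · exact segment_notMem b hb ((le_max_right _ _).trans (le_max_right _ _)) y hy

end

lemma isJordanCurve_image_Icc {f : ℝ → ℂ} {a b : ℝ} (hab : a < b) (hf : ContinuousOn f (Icc a b))
    (hend : f a = f b) (hinj : InjOn f (Ico a b)) : IsJordanCurve (f '' Icc a b) := by
  obtain ⟨p, rfl⟩ : ∃ p, b = a + p := ⟨b - a, by ring⟩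
  have hp : Fact (0 < p) := ⟨by simpa using hab⟩
  have himage : range (AddCircle.liftIco p a f) = f '' Icc a (a + p) := by
    rw [AddCircle.liftIco, range_comp, (AddCircle.equivIco p a).surjective.range_eq, image_univ,
      range_domRestrict]
    refine (image_mono Ico_subset_Icc_self).antisymm ?_
    rintro _ ⟨t, ht, rfl⟩
    rcases ht.2.lt_or_eq with hlt | rfl
    · exact ⟨t, ⟨ht.1, hlt⟩, rfl⟩
    · exact ⟨a, by simpa using hp.out, hend⟩
  have hlift_inj : Function.Injective (AddCircle.liftIco p a f) :=
    (injOn_iff_injective.1 hinj).comp (AddCircle.equivIco p a).injective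
  have hemb := (AddCircle.liftIco_continuous hend hf).isClosedEmbedding hlift_inj
  rw [IsJordanCurve, ← himage]
  exact ⟨hemb.isEmbedding.toHomeomorph.symm.trans (AddCircle.homeomorphCircle hp.out.ne')⟩

section

variable {E : Type*} [NormedAddCommGroup E] [NormedSpace ℝ E] {a b : E}

lemma exists_injective_image_Icc_eq_segment_union (ha : ‖a‖ = 1) (hb : ‖b‖ = 1) (hne : a ≠ b) :
    ∃ c : ℝ → E, Continuous c ∧ Function.Injective c ∧ (∀ t, ‖c t‖ = |t|) ∧ c (-1) = a ∧
      c 1 = b ∧ c '' Icc (-1) 1 = segment ℝ 0 a ∪ segment ℝ 0 b := by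
  set c : ℝ → E := fun t => max (-t) 0 • a + max t 0 • b with hc
  have c_of_nonpos : ∀ t ≤ 0, c t = (-t) • a := fun t ht => by
    simp [hc, max_eq_left (neg_nonneg.2 ht), max_eq_right ht]
  have c_of_nonneg : ∀ t, 0 ≤ t → c t = t • b := fun t ht => by
    simp [hc, max_eq_right (neg_nonpos.2 ht), max_eq_left ht]
  have norm_c : ∀ t, ‖c t‖ = |t| := fun t => by
    rcases le_total t 0 with ht | ht
    · rw [c_of_nonpos t ht, norm_smul, ha, mul_one, norm_neg, Real.norm_eq_abs]
    · rw [c_of_nonneg t ht, norm_smul, hb, mul_one, Real.norm_eq_abs]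
  refine ⟨c, by fun_prop, fun s t hst => ?_, norm_c, by simp [c_of_nonpos],
    by simp [c_of_nonneg], ?_⟩
  · rcases abs_eq_abs.1 (show |s| = |t| by rw [← norm_c, ← norm_c, hst]) with heq | rfl
    · exact heq
    rcases eq_or_ne t 0 with rfl | ht0
    · exact neg_zero
    refine absurd (smul_right_injective E ht0 ?_) hne
    rcases le_total t 0 with ht | ht
    · rw [c_of_nonneg _ (neg_nonneg.2 ht), c_of_nonpos t ht, neg_smul, neg_smul, neg_inj] at hst
      exact hst.symm
    · rwa [c_of_nonpos _ (neg_nonpos.2 ht), c_of_nonneg t ht, neg_neg] at hst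
  · have hneg : Icc (-1 : ℝ) 0 = Neg.neg '' Icc 0 1 := by simp
    rw [← Icc_union_Icc_eq_Icc (neg_nonpos.2 zero_le_one) (zero_le_one (α := ℝ)), image_union,
      image_congr fun t ht => c_of_nonpos t ht.2, image_congr fun t ht => c_of_nonneg t ht.1,
      hneg, image_image, segment_eq_image', segment_eq_image']
    simp only [neg_neg, sub_zero, zero_add]

lemma segment_zero_subset_insert_ball (ha : ‖a‖ = 1) :
    segment ℝ 0 a ⊆ insert a (ball 0 1) := by
  rw [segment_eq_image']
  rintro _ ⟨t, ht, rfl⟩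
  rcases ht.2.lt_or_eq with hlt | rfl
  · right
    simpa [norm_smul, ha, abs_of_nonneg ht.1] using hlt
  · left
    simp

lemma isJordanCurve_image_segment_union {F : E → ℂ} (hFc : ContinuousOn F (closedBall 0 1))
    (hF : InjOn F (ball 0 1)) (ha : ‖a‖ = 1) (hb : ‖b‖ = 1) (hne : a ≠ b) (hab : F a = F b)
    (haF : F a ∉ F '' ball 0 1) :
    IsJordanCurve (F '' (segment ℝ 0 a ∪ segment ℝ 0 b)) := by
  obtain ⟨c, hc, hcinj, norm_c, c_neg_one, c_one, image_c⟩ :=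
    exists_injective_image_Icc_eq_segment_union ha hb hne
  have hmapsTo : MapsTo c (Icc (-1) 1) (closedBall 0 1) := fun t ht => by
    rwa [mem_closedBall_zero_iff, norm_c, abs_le]
  have c_mem_ball : ∀ t ∈ Ico (-1 : ℝ) 1, t ≠ -1 → c t ∈ ball 0 1 := fun t ht h => by
    rw [mem_ball_zero_iff, norm_c, abs_lt]
    exact ⟨ht.1.lt_of_ne' h, ht.2⟩
  rw [← image_c, ← image_comp]
  refine isJordanCurve_image_Icc (by norm_num) (hFc.comp hc.continuousOn hmapsTo) ?_ ?_
  · rw [Function.comp_apply, Function.comp_apply, c_neg_one, c_one, hab]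
  · intro s hs t ht hst
    rw [Function.comp_apply, Function.comp_apply] at hst
    by_cases hs1 : s = -1 <;> by_cases ht1 : t = -1
    · rw [hs1, ht1]
    · exact (haF ⟨c t, c_mem_ball t ht ht1, by rw [← hst, hs1, c_neg_one]⟩).elim
    · exact (haF ⟨c s, c_mem_ball s hs hs1, by rw [hst, ht1, c_neg_one]⟩).elim
    · exact hcinj (hF (c_mem_ball s hs hs1) (c_mem_ball t ht ht1) hst)

end

/-- `H \ {w}` is connected and meets at most one component of `Jᶜ`; of the others, all meet `U`. -/
lemma JordanParam.exists_component_disjoint {H J U : Set ℂ} {α β : ℂ → ℂ} (h : JordanParam H α β)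
    (hJ : IsClosed J) (hJc : ¬IsPreconnected Jᶜ) (hU : IsOpen U) (hUH : Disjoint U H) {w : ℂ}
    (hw : w ∈ H) (hwJ : w ∈ J) (hJU : J ⊆ insert w U) :
    ∃ y ∈ U, y ∉ J ∧ Disjoint (connectedComponentIn Jᶜ y) H := by
  have hJH : ∀ x ∈ J, x ∈ H → x = w := fun x hx hxH =>
    (hJU hx).resolve_right fun hxU => disjoint_left.1 hUH hxU hxH
  obtain ⟨q, hqH, hqw⟩ := h.exists_ne hw
  have hHq : H \ {w} ⊆ connectedComponentIn Jᶜ q :=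
    (h.isPreconnected_diff_singleton hw).subset_connectedComponentIn ⟨hqH, hqw⟩
      fun x hx hxJ => hx.2 (hJH x hxJ hx.1)
  obtain ⟨x, hxJ, hxq⟩ : ∃ x ∈ Jᶜ, x ∉ connectedComponentIn Jᶜ q := by
    by_contra! hsub
    rw [(connectedComponentIn_subset _ _).antisymm' hsub] at hJc
    exact hJc isPreconnected_connectedComponentIn
  set W := connectedComponentIn Jᶜ x
  have hxW : x ∈ W := mem_connectedComponentIn hxJ
  have hWJ : W ⊆ Jᶜ := connectedComponentIn_subset _ _
  have hWH : Disjoint W H := disjoint_left.2 fun y hy hyH => by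
    have hyq : y ∈ connectedComponentIn Jᶜ q := hHq ⟨hyH, fun hyw => hWJ hy (hyw ▸ hwJ)⟩
    rw [connectedComponentIn_eq hyq, ← connectedComponentIn_eq hy] at hxq
    exact hxq hxW
  suffices hne : (W ∩ U).Nonempty by
    obtain ⟨y, hyW, hyU⟩ := hne
    exact ⟨y, hyU, hWJ hyW, connectedComponentIn_eq hyW ▸ hWH⟩
  by_contra hempty
  have hdisj : Disjoint (closure W) U :=
    (disjoint_iff_inter_eq_empty.2 (not_nonempty_iff_eq_empty.1 hempty)).closure_left hU
  have hsub : ({w}ᶜ : Set ℂ) ⊆ W := by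
    refine (isConnected_compl_singleton_of_one_lt_rank (by simp)
      w).isPreconnected.subset_of_closure_inter_subset
      hJ.isOpen_compl.connectedComponentIn ⟨x, fun hxw => hxJ (hxw ▸ hwJ), hxW⟩ ?_
    rintro y ⟨hy, hyw⟩
    refine (closure_connectedComponentIn_compl_subset hJ x hy).resolve_right fun hyJ => ?_
    exact disjoint_left.1 hdisj hy ((hJU hyJ).resolve_left hyw)
  exact disjoint_left.1 hWH (hsub hqw) hqH

lemma JordanParam.not_isPreconnected_compl {H : Set ℂ} {α β : ℂ → ℂ} (h : JordanParam H α β) :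
    ¬IsPreconnected Hᶜ := by
  intro hpre
  obtain ⟨p, hp, hb⟩ := h.exists_isBounded_component
  have hsub : Hᶜ ⊆ connectedComponentIn Hᶜ p := hpre.subset_connectedComponentIn hp subset_rfl
  have huniv : Bornology.IsBounded (univ : Set ℂ) := by
    rw [← union_compl_self H]
    exact h.isCompact.isBounded.union (hb.subset hsub)
  exact NormedSpace.unbounded_univ ℝ ℂ huniv

section

variable {H : Set ℂ} {α β F G : ℂ → ℂ} {p : ℂ}

lemma ConformalDisc.eq_of_mem_closedBall {U : Set ℂ} (hF : ConformalDisc U F G)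
    (hS : MapsTo F (sphere 0 1) H) (hUH : Disjoint U H) {z w : ℂ} (hz : z ∈ ball (0 : ℂ) 1)
    (hw : w ∈ closedBall (0 : ℂ) 1) (hzw : F z = F w) : z = w := by
  rw [← ball_union_sphere] at hw
  rcases hw with hw | hw
  · exact hF.injOn hz hw hzw
  · exact (disjoint_left.1 hUH (hF.mapsTo hz) (hzw ▸ hS hw)).elim

lemma ConformalDisc.exists_isOpen_mapsTo_image_segment_union {U : Set ℂ} (hF : ConformalDisc U F G)
    (hFc : ContinuousOn F (closedBall 0 1)) (hS : MapsTo F (sphere 0 1) H) (hUH : Disjoint U H)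
    {a b : ℂ} (ha : ‖a‖ = 1) (hb : ‖b‖ = 1)
    (hJ : IsClosed (F '' (segment ℝ 0 a ∪ segment ℝ 0 b))) {y : ℂ} (hyU : y ∈ U)
    (hyJ : y ∉ F '' (segment ℝ 0 a ∪ segment ℝ 0 b))
    (hyH : Disjoint (connectedComponentIn (F '' (segment ℝ 0 a ∪ segment ℝ 0 b))ᶜ y) H) :
    ∃ O, IsOpen O ∧ (∃ u ∈ O, ‖u‖ = 1) ∧
      MapsTo F (O ∩ sphere 0 1) (F '' (segment ℝ 0 a ∪ segment ℝ 0 b)) := by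
  set T := segment ℝ 0 a ∪ segment ℝ 0 b
  have hT : T ⊆ closedBall 0 1 := union_subset
    ((segment_zero_subset_insert_ball ha).trans
      (insert_subset (mem_closedBall_zero_iff.2 ha.le) ball_subset_closedBall))
    ((segment_zero_subset_insert_ball hb).trans
      (insert_subset (mem_closedBall_zero_iff.2 hb.le) ball_subset_closedBall))
  have hGy : G y ∉ T := fun hy => hyJ ⟨G y, hy, hF.right_inv y hyU⟩
  obtain ⟨O, hO, hOc, hyO, hu, hOT⟩ := exists_convex_sector ha hb
    (mem_ball_zero_iff.1 (hF.mapsTo_inv hyU)) (hGy <| Or.inl ·) (hGy <| Or.inr ·)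
  have hOW : F '' (ball 0 1 ∩ O) ⊆ connectedComponentIn (F '' T)ᶜ y := by
    refine (((convex_ball (0 : ℂ) 1).inter hOc).isPreconnected.image F
      (hF.diff.continuousOn.mono inter_subset_left)).subset_connectedComponentIn
      ⟨G y, ⟨hF.mapsTo_inv hyU, hyO⟩, hF.right_inv y hyU⟩ ?_
    rintro _ ⟨w, hw, rfl⟩ ⟨z, hz, hzw⟩
    have hwz := hF.eq_of_mem_closedBall hS hUH hw.1 (hT hz) hzw.symm
    exact disjoint_left.1 hOT hw.2 (hwz ▸ hz)
  refine ⟨O, hO, hu, fun v hv => ?_⟩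
  have hvcl : v ∈ closure (ball 0 1 ∩ O) := hO.closure_inter
    ⟨by rw [closure_ball _ one_ne_zero]; exact sphere_subset_closedBall hv.2, hv.1⟩
  have hFv : F v ∈ closure (connectedComponentIn (F '' T)ᶜ y) := closure_mono hOW <|
    ((hFc v (sphere_subset_closedBall hv.2)).mono
      (inter_subset_left.trans ball_subset_closedBall)).mem_closure_image hvcl
  exact (closure_connectedComponentIn_compl_subset hJ y hFv).resolve_left fun hW =>
    disjoint_left.1 hyH hW (hS hv.2)

/-- If `F` identified `a` and `b`, the images of their radii would form a Jordan curve. A sector of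
the disc would be mapped to a side of it which `H` does not enter, so `F` would be constant on an
arc of the circle. -/
lemma ConformalDisc.injOn_sphere (hF : ConformalDisc (connectedComponentIn Hᶜ p) F G)
    (hFc : ContinuousOn F (closedBall 0 1)) (h : JordanParam H α β)
    (hUH : Disjoint (connectedComponentIn Hᶜ p) H) (hS : MapsTo F (sphere 0 1) H) :
    InjOn F (sphere 0 1) := by
  intro a ha b hb hab
  by_contra hne
  have hU := h.isClosed.isOpen_compl.connectedComponentIn (x := p)
  have hFa : F a ∈ H := hS ha
  have haF : F a ∉ F '' ball 0 1 := fun ⟨z, hz, hza⟩ =>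
    disjoint_left.1 hUH (hF.mapsTo hz) (hza ▸ hFa)
  rw [mem_sphere_zero_iff_norm] at ha hb
  obtain ⟨e⟩ := isJordanCurve_image_segment_union hFc hF.injOn ha hb hne hab haF
  obtain ⟨α', β', hJ⟩ := exists_jordanParam e
  have hJU : F '' (segment ℝ 0 a ∪ segment ℝ 0 b) ⊆ insert (F a) (connectedComponentIn Hᶜ p) := by
    rintro _ ⟨z, hz | hz, rfl⟩
    · exact (segment_zero_subset_insert_ball ha hz).imp (congr_arg F) (hF.mapsTo ·)
    · exact (segment_zero_subset_insert_ball hb hz).imp (hab ▸ congr_arg F) (hF.mapsTo ·)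
  obtain ⟨y, hyU, hyJ, hyH⟩ := h.exists_component_disjoint hJ.isClosed hJ.not_isPreconnected_compl
    hU hUH hFa ⟨a, Or.inl (right_mem_segment ℝ 0 a), rfl⟩ hJU
  obtain ⟨O, hO, ⟨u, huO, hu⟩, hOJ⟩ := hF.exists_isOpen_mapsTo_image_segment_union hFc hS hUH ha hb
    hJ.isClosed hyU hyJ hyH
  exact haF ⟨0, mem_ball_self one_pos, eq_of_eqOn_arc hFc hF.diff hO
    (mem_sphere_zero_iff_norm.2 hu) huO fun v hv =>
      (hJU (hOJ hv)).resolve_right fun hvU => disjoint_left.1 hUH hvU (hS hv.2)⟩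

/-- A homeomorphism from the closed unit disc onto `U ∪ H` that is conformal from the open disc
onto `U`. -/
structure CaratheodoryMap (U H : Set ℂ) (F : ℂ → ℂ) : Prop where
  cont : ContinuousOn F (closedBall 0 1)
  diff : DifferentiableOn ℂ F (ball 0 1)
  inj : InjOn F (closedBall 0 1)
  image_ball : F '' ball 0 1 = U
  image_sphere : F '' sphere 0 1 = H

theorem JordanParam.exists_caratheodoryMap (h : JordanParam H α β) (hp : p ∉ H)
    (hUb : Bornology.IsBounded (connectedComponentIn Hᶜ p)) :
    ∃ F, CaratheodoryMap (connectedComponentIn Hᶜ p) H F ∧ F 0 = p := by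
  have hUo : IsOpen (connectedComponentIn Hᶜ p) := h.isClosed.isOpen_compl.connectedComponentIn
  have hpU : p ∈ connectedComponentIn Hᶜ p := mem_connectedComponentIn hp
  have hUH : Disjoint (connectedComponentIn Hᶜ p) H :=
    subset_compl_iff_disjoint_right.1 (connectedComponentIn_subset _ _)
  obtain ⟨F₀, G, hF₀, hF₀p⟩ := exists_conformalDisc hUo isPreconnected_connectedComponentIn hUb
    (isPreconnected_compl_connectedComponentIn h.isClosed h.isPreconnected h.nonempty p) hpU
  obtain ⟨F, hFF, hFc⟩ := hF₀.exists_continuousOn_extension h hUb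
  have hF := hF₀.congr hFF
  have hS : MapsTo F (sphere 0 1) H := hF.mapsTo_sphere hFc hUb h.isClosed h.nonempty
    (closure_connectedComponentIn_compl_subset h.isClosed p)
  have himage : F '' ball 0 1 = connectedComponentIn Hᶜ p :=
    hF.mapsTo.image_subset.antisymm fun w hw => ⟨G w, hF.mapsTo_inv hw, hF.right_inv w hw⟩
  have hfrontier := h.frontier_eq hUo ⟨p, hpU⟩ hUb hUH
    (frontier_connectedComponentIn_subset h.isClosed)
  have hclosure : closure (connectedComponentIn Hᶜ p) ⊆ F '' closedBall 0 1 :=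
    closure_minimal (himage ▸ image_mono ball_subset_closedBall)
      ((isCompact_closedBall 0 1).image_of_continuousOn hFc).isClosed
  refine ⟨F, ⟨hFc, hF.diff, ?_, himage, hS.image_subset.antisymm fun w hw => ?_⟩,
    (hFF (mem_ball_self one_pos)).trans hF₀p⟩
  · rw [← ball_union_sphere, injOn_union sphere_disjoint_ball.symm]
    refine ⟨hF.injOn, hF.injOn_sphere hFc h hUH hS, fun x hx y hy hxy => ?_⟩
    exact disjoint_left.1 hUH (hF.mapsTo hx) (hxy ▸ hS hy)
  · obtain ⟨z, hz, rfl⟩ := hclosure (frontier_subset_closure (hfrontier.symm ▸ hw))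
    rw [← ball_union_sphere] at hz
    exact ⟨z, hz.resolve_left fun hzb => disjoint_left.1 hUH (hF.mapsTo hzb) hw, rfl⟩

end

/-! ### The Schoenflies theorem -/

section Inversion

open Filter Bornology

lemma isBounded_image_inv_sub {S : Set ℂ} {p : ℂ} (hp : p ∉ closure S) :
    IsBounded ((fun z => (z - p)⁻¹) '' S) := by
  obtain ⟨r, hr, hball⟩ := Metric.isOpen_iff.1 isClosed_closure.isOpen_compl p hp
  refine isBounded_iff_forall_norm_le.2 ⟨r⁻¹, ?_⟩
  rintro _ ⟨z, hz, rfl⟩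
  rw [norm_inv, ← dist_eq_norm]
  exact inv_anti₀ hr (not_lt.1 fun hlt => hball hlt (subset_closure hz))

lemma image_inv_sub_eq_preimage (p : ℂ) (S : Set ℂ) :
    (fun z => (z - p)⁻¹) '' S = (fun w => w⁻¹ + p) ⁻¹' S :=
  congr_fun (image_eq_preimage_of_inverse (fun z => by simp) fun w => by simp) S

lemma image_inv_sub_mem_nhdsNE_zero {V : Set ℂ} (hV : IsBounded Vᶜ) (p : ℂ) :
    (fun z => (z - p)⁻¹) '' V ∈ 𝓝[≠] (0 : ℂ) := by
  rw [image_inv_sub_eq_preimage]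
  exact ((tendsto_add_const_cobounded p).comp tendsto_inv₀_nhdsNE_zero)
    (isBounded_def.1 hV |> (compl_compl V ▸ ·))

lemma isOpen_compl_zero_inter_image_inv_sub {V : Set ℂ} (hV : IsOpen V) (p : ℂ) :
    IsOpen ({0}ᶜ ∩ (fun z => (z - p)⁻¹) '' V) := by
  rw [image_inv_sub_eq_preimage]
  exact (continuousOn_inv₀.add continuousOn_const).isOpen_inter_preimage isOpen_compl_singleton hV

lemma isOpen_insert_zero_image_inv_sub {V : Set ℂ} {p : ℂ} (hV : IsOpen V) (hVb : IsBounded Vᶜ) :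
    IsOpen (insert 0 ((fun z => (z - p)⁻¹) '' V)) := by
  refine isOpen_iff_mem_nhds.2 fun w hw => ?_
  rcases eq_or_ne w 0 with rfl | hw0
  · exact insert_mem_nhds_iff.2 (image_inv_sub_mem_nhdsNE_zero hVb p)
  · exact Filter.mem_of_superset ((isOpen_compl_zero_inter_image_inv_sub hV p).mem_nhds
      ⟨hw0, hw.resolve_left hw0⟩) (inter_subset_right.trans (subset_insert _ _))

lemma isClosed_insert_zero_image_inv_sub {C : Set ℂ} (hC : IsClosed C) (p : ℂ) :
    IsClosed (insert 0 ((fun z => (z - p)⁻¹) '' C)) := by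
  have hopen := isOpen_compl_zero_inter_image_inv_sub hC.isOpen_compl p
  rwa [image_inv_sub_eq_preimage, preimage_compl, ← compl_union, singleton_union,
    isOpen_compl_iff, ← image_inv_sub_eq_preimage] at hopen

/-- Inversion about a point `p` turns the unbounded complementary component `V` of `K` into a
punctured neighbourhood of the origin. -/
lemma connectedComponentIn_compl_image_inv_sub {K : Set ℂ} {p q : ℂ} (hK : IsClosed K)
    (hp : p ∉ K) (hpV : p ∉ connectedComponentIn Kᶜ q)
    (hVb : IsBounded (connectedComponentIn Kᶜ q)ᶜ) :
    connectedComponentIn ((fun z => (z - p)⁻¹) '' K)ᶜ 0 =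
      insert 0 ((fun z => (z - p)⁻¹) '' connectedComponentIn Kᶜ q) := by
  set V := connectedComponentIn Kᶜ q
  have hne : ∀ z ∈ V, z - p ≠ 0 := fun z hz h0 => hpV (sub_eq_zero.1 h0 ▸ hz)
  have hWo := isOpen_insert_zero_image_inv_sub (p := p)
    hK.isOpen_compl.connectedComponentIn hVb
  have hWpre : IsPreconnected (insert 0 ((fun z => (z - p)⁻¹) '' V)) := by
    refine (isPreconnected_connectedComponentIn.image _
      (ContinuousOn.inv₀ (by fun_prop) hne)).subset_closure (subset_insert _ _)
      (insert_subset ?_ subset_closure)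
    exact mem_closure_iff_frequently.2
      ((Eventually.frequently (image_inv_sub_mem_nhdsNE_zero hVb p)).filter_mono
        nhdsWithin_le_nhds)
  have h0K : (0 : ℂ) ∉ (fun z => (z - p)⁻¹) '' K := by
    simpa [sub_eq_zero] using hp
  have hWK : insert 0 ((fun z => (z - p)⁻¹) '' V) ⊆ ((fun z => (z - p)⁻¹) '' K)ᶜ := by
    refine insert_subset h0K ?_
    rintro _ ⟨z, hz, rfl⟩
    rw [image_inv_sub_eq_preimage, mem_compl_iff, mem_preimage, inv_inv, sub_add_cancel]
    exact connectedComponentIn_subset _ _ hz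
  have hclosed : closure (insert 0 ((fun z => (z - p)⁻¹) '' V)) ⊆
      insert 0 ((fun z => (z - p)⁻¹) '' V) ∪ (fun z => (z - p)⁻¹) '' K := by
    rw [insert_union, ← image_union]
    refine closure_minimal (insert_subset_insert (image_mono subset_union_left))
      (isClosed_insert_zero_image_inv_sub (isClosed_of_closure_subset ?_) p)
    rw [closure_union, hK.closure_eq]
    exact union_subset (closure_connectedComponentIn_compl_subset hK q) subset_union_right
  refine Subset.antisymm ?_ (hWpre.subset_connectedComponentIn (mem_insert _ _) hWK)
  exact isPreconnected_connectedComponentIn.subset_of_closure_inter_subset hWo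
    ⟨0, mem_connectedComponentIn h0K, mem_insert _ _⟩ fun w hw =>
      (hclosed hw.1).resolve_right (connectedComponentIn_subset _ _ hw.2)

variable {H : Set ℂ} {α β : ℂ → ℂ}

lemma JordanParam.inversion (h : JordanParam H α β) {p : ℂ} (hp : p ∉ H) :
    JordanParam ((fun z => (z - p)⁻¹) '' H) (fun u => (α u - p)⁻¹) (fun w => β (w⁻¹ + p)) := by
  have hne : ∀ z ∈ H, z - p ≠ 0 := fun z hz h0 => hp (sub_eq_zero.1 h0 ▸ hz)
  have hmapsTo : MapsTo (fun w => w⁻¹ + p) ((fun z => (z - p)⁻¹) '' H) H := by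
    rw [image_inv_sub_eq_preimage]
    exact mapsTo_preimage _ _
  refine ⟨(h.cont.sub continuousOn_const).inv₀ fun u hu => hne _ (h.mapsTo hu),
    h.cont_inv.comp ?_ hmapsTo, fun u hu => ⟨α u, h.mapsTo hu, rfl⟩,
    fun w hw => h.mapsTo_inv (hmapsTo hw), fun u hu => by simpa using h.left_inv u hu, ?_⟩
  · refine (continuousOn_id.inv₀ ?_).add continuousOn_const
    rintro _ ⟨z, hz, rfl⟩
    exact inv_ne_zero (hne z hz)
  · rintro _ ⟨z, hz, rfl⟩
    simp [h.right_inv z hz]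

lemma JordanParam.exists_exterior (h : JordanParam H α β) {p : ℂ} (hp : p ∉ H)
    (hUb : IsBounded (connectedComponentIn Hᶜ p)) :
    ∃ q, connectedComponentIn Hᶜ q = (connectedComponentIn Hᶜ p ∪ H)ᶜ := by
  have hunbounded : ∀ z ∉ connectedComponentIn Hᶜ p ∪ H,
      ¬ IsBounded (connectedComponentIn Hᶜ z) := by
    refine fun z hz hzb => hz (Or.inl ?_)
    have hzH : z ∉ H := fun hzH => hz (Or.inr hzH)
    rw [h.connectedComponentIn_eq_of_isBounded hp hzH hUb hzb]
    exact mem_connectedComponentIn hzH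
  obtain ⟨q, hq⟩ : (connectedComponentIn Hᶜ p ∪ H)ᶜ.Nonempty :=
    nonempty_compl.2 fun huniv => NormedSpace.unbounded_univ ℂ ℂ
      (huniv ▸ hUb.union h.isCompact.isBounded)
  refine ⟨q, Subset.antisymm (fun z hzq => ?_) fun z hz => ?_⟩
  · rintro (hzp | hzH)
    · exact hunbounded q hq
        (connectedComponentIn_eq hzq ▸ connectedComponentIn_eq hzp ▸ hUb)
    · exact connectedComponentIn_subset _ _ hzq hzH
  · rw [connectedComponentIn_eq_of_not_isBounded (E := ℂ) (by simp) h.isCompact.isBounded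
      (hunbounded q hq) (hunbounded z hz)]
    exact mem_connectedComponentIn fun hzH => hz (Or.inr hzH)

lemma JordanParam.connectedComponentIn_inversion (h : JordanParam H α β) {p : ℂ} (hp : p ∉ H)
    (hUb : IsBounded (connectedComponentIn Hᶜ p)) :
    connectedComponentIn ((fun z => (z - p)⁻¹) '' H)ᶜ 0 =
      insert 0 ((fun z => (z - p)⁻¹) '' (connectedComponentIn Hᶜ p ∪ H)ᶜ) := by
  obtain ⟨q, hq⟩ := h.exists_exterior hp hUb
  rw [← hq]
  refine connectedComponentIn_compl_image_inv_sub h.isClosed hp ?_ ?_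
  · rw [hq, notMem_compl_iff]
    exact Or.inl (mem_connectedComponentIn hp)
  · rw [hq, compl_compl]
    exact hUb.union h.isCompact.isBounded

lemma JordanParam.isBounded_connectedComponentIn_inversion (h : JordanParam H α β) {p : ℂ}
    (hp : p ∉ H) (hUb : IsBounded (connectedComponentIn Hᶜ p)) :
    IsBounded (connectedComponentIn ((fun z => (z - p)⁻¹) '' H)ᶜ 0) := by
  rw [h.connectedComponentIn_inversion hp hUb]
  refine (isBounded_image_inv_sub fun hpcl => ?_).insert 0
  have hUo : IsOpen (connectedComponentIn Hᶜ p) := h.isClosed.isOpen_compl.connectedComponentIn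
  rw [closure_compl] at hpcl
  exact hpcl (interior_maximal subset_union_left hUo (mem_connectedComponentIn hp))

end Inversion

lemma continuousOn_image_of_leftInvOn {X Y : Type*} [TopologicalSpace X] [TopologicalSpace Y]
    [T2Space Y] {f : X → Y} {f' : Y → X} {K : Set X} (hK : IsCompact K) (hf : ContinuousOn f K)
    (hf' : LeftInvOn f' f K) : ContinuousOn f' (f '' K) := by
  refine continuousOn_iff_isClosed.2 fun t ht => ⟨f '' (t ∩ K), ?_, ?_⟩
  · exact ((hK.inter_left ht).image_of_continuousOn (hf.mono inter_subset_right)).isClosed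
  · rw [hf'.image_inter', inter_assoc, inter_self]

open Filter in
lemma exists_homeomorph_eqOn {X Y : Type*} [TopologicalSpace X] [TopologicalSpace Y] [T2Space Y]
    [WeaklyLocallyCompactSpace Y] {s : Set X} {f g : X → Y} (hs : IsCompact s)
    (hf : ContinuousOn f (closure s)) (hg : ContinuousOn g (closure sᶜ))
    (hfg : EqOn f g (frontier s)) (hf_inj : InjOn f s) (hg_inj : InjOn g sᶜ)
    (himage : g '' sᶜ = (f '' s)ᶜ)
    (hlim : Tendsto g (cocompact X) (cocompact Y)) :
    ∃ Φ : X ≃ₜ Y, EqOn Φ f s := by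
  classical
  have hcont : Continuous (s.piecewise f g) := continuous_piecewise hfg hf hg
  have hinj : Function.Injective (s.piecewise f g) := by
    refine (injective_piecewise_iff s).2 ⟨hf_inj, hg_inj, fun x hx y hy hxy => ?_⟩
    have hmem : g y ∈ (f '' s)ᶜ := himage ▸ mem_image_of_mem g hy
    exact hmem ⟨x, hx, hxy⟩
  have hsurj : Function.Surjective (s.piecewise f g) := by
    rw [← range_eq_univ, range_piecewise, himage, union_compl_self]
  have hproper : IsProperMap (s.piecewise f g) := by
    refine isProperMap_iff_tendsto_cocompact.2 ⟨hcont, hlim.congr' ?_⟩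
    filter_upwards [hs.compl_mem_cocompact] with z hz
    exact (piecewise_eq_of_notMem s f g hz).symm
  exact ⟨(Equiv.ofBijective _ ⟨hinj, hsurj⟩).toHomeomorphOfContinuousClosed hcont
    hproper.isClosedMap, piecewise_eqOn s f g⟩

section RadialMap

variable {E : Type*} [NormedAddCommGroup E] [NormedSpace ℝ E] {s t : ℝ → ℝ} {σ τ : E → E}

/-- The map of a normed space that acts on the norm by `s` and on the direction by `τ`. -/
def radialMap (s : ℝ → ℝ) (τ : E → E) (z : E) : E := s ‖z‖ • τ (‖z‖⁻¹ • z)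

lemma norm_inv_smul_mem_sphere {z : E} (hz : z ≠ 0) : ‖z‖⁻¹ • z ∈ sphere (0 : E) 1 := by
  simp [norm_smul, hz]

lemma radialMap_zero (hs : s 0 = 0) : radialMap s τ 0 = 0 := by
  simp [radialMap, hs]

lemma norm_radialMap (hτ : MapsTo τ (sphere 0 1) (sphere 0 1)) {z : E} (hz : z ≠ 0)
    (hs : 0 ≤ s ‖z‖) : ‖radialMap s τ z‖ = s ‖z‖ := by
  rw [radialMap, norm_smul, mem_sphere_zero_iff_norm.1 (hτ (norm_inv_smul_mem_sphere hz)),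
    Real.norm_of_nonneg hs, mul_one]

lemma leftInverse_radialMap (hs0 : s 0 = 0) (hs : ∀ x, 0 < x → 0 < s x)
    (hts : ∀ x, 0 ≤ x → t (s x) = x) (hτ : MapsTo τ (sphere 0 1) (sphere 0 1))
    (hστ : LeftInvOn σ τ (sphere 0 1)) :
    Function.LeftInverse (radialMap t σ) (radialMap s τ) := fun z => by
  rcases eq_or_ne z 0 with rfl | hz
  · have ht0 := hts 0 le_rfl
    rw [hs0] at ht0
    rw [radialMap_zero hs0, radialMap_zero ht0]
  · have hpos := hs _ (norm_pos_iff.2 hz)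
    rw [radialMap, norm_radialMap hτ hz hpos.le, hts _ (norm_nonneg z), radialMap,
      inv_smul_smul₀ hpos.ne', hστ (norm_inv_smul_mem_sphere hz),
      smul_inv_smul₀ (norm_ne_zero_iff.2 hz)]

lemma continuousOn_radialMap (hs : ContinuousOn s {0}ᶜ) (hτ : ContinuousOn τ (sphere 0 1)) :
    ContinuousOn (radialMap s τ) {0}ᶜ := by
  have hnorm : ContinuousOn (fun z : E => ‖z‖⁻¹) {0}ᶜ :=
    continuous_norm.continuousOn.inv₀ fun z hz => norm_ne_zero_iff.2 hz
  exact (hs.comp continuous_norm.continuousOn fun z hz => norm_ne_zero_iff.2 hz).smul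
    (hτ.comp (hnorm.smul continuousOn_id) fun z hz => norm_inv_smul_mem_sphere hz)

lemma radialMap_of_mem_sphere {u : E} (hu : u ∈ sphere (0 : E) 1) :
    radialMap s τ u = s 1 • τ u := by
  rw [radialMap, mem_sphere_zero_iff_norm.1 hu, inv_one, one_smul]

lemma norm_radialMap_inv (hτ : MapsTo τ (sphere 0 1) (sphere 0 1)) (z : E) :
    ‖radialMap Inv.inv τ z‖ = ‖z‖⁻¹ := by
  rcases eq_or_ne z 0 with rfl | hz
  · simp [radialMap]
  · exact norm_radialMap hτ hz (inv_nonneg.2 (norm_nonneg z))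

lemma bijective_radialMap_inv (hτ : BijOn τ (sphere 0 1) (sphere 0 1)) :
    Function.Bijective (radialMap Inv.inv τ) := by
  have hinv := hτ.invOn_invFunOn
  exact Function.bijective_iff_has_inverse.2 ⟨radialMap Inv.inv (Function.invFunOn τ (sphere 0 1)),
    leftInverse_radialMap inv_zero (fun _ => inv_pos.2) (fun x _ => inv_inv x) hτ.mapsTo hinv.1,
    leftInverse_radialMap inv_zero (fun _ => inv_pos.2) (fun x _ => inv_inv x)
      hτ.surjOn.mapsTo_invFunOn hinv.2⟩

lemma preimage_radialMap_inv_ball (hτ : MapsTo τ (sphere 0 1) (sphere 0 1)) :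
    radialMap Inv.inv τ ⁻¹' (ball 0 1 \ {0}) = (closedBall 0 1)ᶜ := by
  ext z
  rw [mem_preimage, mem_sdiff, mem_ball_zero_iff, mem_singleton_iff, ← ne_eq, ← norm_pos_iff,
    norm_radialMap_inv hτ, mem_compl_iff, mem_closedBall_zero_iff, not_le, and_comm]
  simpa using (one_lt_inv_iff₀ (a := ‖z‖⁻¹)).symm

lemma preimage_radialMap_inv_closedBall (hτ : MapsTo τ (sphere 0 1) (sphere 0 1)) :
    radialMap Inv.inv τ ⁻¹' (closedBall 0 1 \ {0}) = (ball 0 1)ᶜ := by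
  ext z
  rw [mem_preimage, mem_sdiff, mem_closedBall_zero_iff, mem_singleton_iff, ← ne_eq, ← norm_pos_iff,
    norm_radialMap_inv hτ, mem_compl_iff, mem_ball_zero_iff, not_lt, and_comm]
  simpa using (one_le_inv_iff₀ (a := ‖z‖⁻¹)).symm

end RadialMap

namespace CaratheodoryMap

open Filter Bornology

variable {U V H K : Set ℂ} {F G : ℂ → ℂ}

lemma bijOn_sphere (hF : CaratheodoryMap U H F) : BijOn F (sphere 0 1) H :=
  hF.image_sphere ▸ (hF.inj.mono sphere_subset_closedBall).bijOn_image

lemma image_closedBall (hF : CaratheodoryMap U H F) : F '' closedBall 0 1 = U ∪ H := by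
  rw [← ball_union_sphere, image_union, hF.image_ball, hF.image_sphere]

lemma exists_welding {ψ : ℂ → ℂ} (hF : CaratheodoryMap U H F) (hG : CaratheodoryMap V K G)
    (hψ : ContinuousOn ψ H) (hψ_bij : BijOn ψ H K) :
    ∃ τ : ℂ → ℂ, ContinuousOn τ (sphere 0 1) ∧ BijOn τ (sphere 0 1) (sphere 0 1) ∧
      EqOn (G ∘ τ) (ψ ∘ F) (sphere 0 1) := by
  have hinv := hG.bijOn_sphere.invOn_invFunOn
  have hψF := hψ_bij.comp hF.bijOn_sphere
  refine ⟨Function.invFunOn G (sphere 0 1) ∘ ψ ∘ F, ?_,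
    (hG.bijOn_sphere.symm hinv.symm).comp hψF, fun u hu => hinv.2 (hψF.mapsTo hu)⟩
  have hcont := continuousOn_image_of_leftInvOn (isCompact_sphere 0 1)
    (hG.cont.mono sphere_subset_closedBall) hinv.1
  rw [hG.image_sphere] at hcont
  exact hcont.comp (hψ.comp (hF.cont.mono sphere_subset_closedBall) hF.bijOn_sphere.mapsTo)
    hψF.mapsTo

section Exterior

variable {τ : ℂ → ℂ} (hG : CaratheodoryMap V K G) (hG0 : G 0 = 0)

include hG in
lemma continuousOn_comp_radialMap_inv (hτ : ContinuousOn τ (sphere 0 1))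
    (hτ_maps : MapsTo τ (sphere 0 1) (sphere 0 1)) :
    ContinuousOn (G ∘ radialMap Inv.inv τ) (ball 0 1)ᶜ := by
  refine hG.cont.comp ((continuousOn_radialMap continuousOn_inv₀ hτ).mono ?_) ?_
  · exact compl_subset_compl.2 (singleton_subset_iff.2 (mem_ball_self one_pos))
  · rw [← preimage_radialMap_inv_closedBall hτ_maps]
    exact fun z hz => hz.1

include hG in
lemma injOn_comp_radialMap_inv (hτ : BijOn τ (sphere 0 1) (sphere 0 1)) :
    InjOn (G ∘ radialMap Inv.inv τ) (ball 0 1)ᶜ := by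
  refine hG.inj.comp (bijective_radialMap_inv hτ).injective.injOn ?_
  rw [← preimage_radialMap_inv_closedBall hτ.mapsTo]
  exact fun z hz => hz.1

include hG hG0

lemma comp_radialMap_inv_ne_zero (hτ : MapsTo τ (sphere 0 1) (sphere 0 1)) {z : ℂ}
    (hz : z ∈ (ball (0 : ℂ) 1)ᶜ) : G (radialMap Inv.inv τ z) ≠ 0 := by
  rw [← preimage_radialMap_inv_closedBall hτ] at hz
  exact fun h => hz.2 (hG.inj hz.1 (mem_closedBall_self zero_le_one) (h.trans hG0.symm))

lemma image_comp_radialMap_inv (hτ : BijOn τ (sphere 0 1) (sphere 0 1)) :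
    (G ∘ radialMap Inv.inv τ) '' (closedBall 0 1)ᶜ = V \ {0} := by
  rw [image_comp, ← preimage_radialMap_inv_ball hτ.mapsTo,
    image_preimage_eq _ (bijective_radialMap_inv hτ).surjective,
    (hG.inj.mono ball_subset_closedBall).image_sdiff_subset
      (singleton_subset_iff.2 (mem_ball_self one_pos)), hG.image_ball, image_singleton, hG0]

lemma tendsto_comp_radialMap_inv (hτ : MapsTo τ (sphere 0 1) (sphere 0 1)) :
    Tendsto (G ∘ radialMap Inv.inv τ) (cobounded ℂ) (𝓝[≠] 0) := by
  refine tendsto_nhdsWithin_iff.2 ⟨?_, ?_⟩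
  · have hradial : Tendsto (radialMap Inv.inv τ) (cobounded ℂ) (𝓝 0) := by
      rw [tendsto_zero_iff_norm_tendsto_zero]
      simp only [norm_radialMap_inv hτ]
      exact tendsto_inv_atTop_zero.comp tendsto_norm_cobounded_atTop
    have hG_zero : Tendsto G (𝓝 0) (𝓝 0) := by
      simpa only [hG0] using (hG.cont.continuousAt (closedBall_mem_nhds 0 one_pos)).tendsto
    exact hG_zero.comp hradial
  · filter_upwards [isBounded_def.1 (isBounded_ball (x := (0 : ℂ)) (r := 1))] with z hz
    exact hG.comp_radialMap_inv_ne_zero hG0 hτ hz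

end Exterior

end CaratheodoryMap

open Filter Bornology in
/-- The map is `z ↦ (G (m z))⁻¹ + p`, where `G` is the conformal map of the disc onto the inverted
exterior and `m` is the radial inversion of the disc that corrects the boundary values of `G`. -/
lemma JordanParam.exists_exteriorMap {H : Set ℂ} {α β F : ℂ → ℂ} {p : ℂ} (h : JordanParam H α β)
    (hp : p ∉ H) (hUb : IsBounded (connectedComponentIn Hᶜ p))
    (hF : CaratheodoryMap (connectedComponentIn Hᶜ p) H F) :
    ∃ g : ℂ → ℂ, ContinuousOn g (ball 0 1)ᶜ ∧ EqOn F g (sphere 0 1) ∧ InjOn g (ball 0 1)ᶜ ∧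
      g '' (closedBall 0 1)ᶜ = (connectedComponentIn Hᶜ p ∪ H)ᶜ ∧
      Tendsto g (cobounded ℂ) (cobounded ℂ) := by
  have h0 : (0 : ℂ) ∉ (fun z => (z - p)⁻¹) '' H := by
    simpa [sub_eq_zero] using hp
  obtain ⟨G, hG, hG0⟩ := (h.inversion hp).exists_caratheodoryMap h0
    (h.isBounded_connectedComponentIn_inversion hp hUb)
  have hinv : Function.LeftInverse (fun w => w⁻¹ + p) fun z : ℂ => (z - p)⁻¹ := fun z => by simp
  have hcont : ContinuousOn (fun z => (z - p)⁻¹) H :=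
    (continuous_sub_right p).continuousOn.inv₀ fun z hz hzp => hp (sub_eq_zero.1 hzp ▸ hz)
  obtain ⟨τ, hτ, hτ_bij, hτG⟩ := hF.exists_welding hG hcont hinv.injective.injOn.bijOn_image
  refine ⟨(fun w => w⁻¹ + p) ∘ G ∘ radialMap Inv.inv τ, ?_, fun u hu => ?_, ?_, ?_, ?_⟩
  · exact ((hG.continuousOn_comp_radialMap_inv hτ hτ_bij.mapsTo).inv₀ fun z hz =>
      hG.comp_radialMap_inv_ne_zero hG0 hτ_bij.mapsTo hz).add continuousOn_const
  · have hu' := hτG hu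
    simp only [Function.comp_apply] at hu' ⊢
    rw [radialMap_of_mem_sphere hu, inv_one, one_smul, hu', inv_inv, sub_add_cancel]
  · exact (add_left_injective p).comp inv_injective |>.comp_injOn
      (hG.injOn_comp_radialMap_inv hτ_bij)
  · rw [image_comp, hG.image_comp_radialMap_inv hG0 hτ_bij,
      h.connectedComponentIn_inversion hp hUb, insert_sdiff_self_of_notMem, hinv.image_image]
    rintro ⟨z, hz, hz0⟩
    obtain rfl : z = p := sub_eq_zero.1 (inv_eq_zero.1 hz0)
    exact hz (Or.inl (mem_connectedComponentIn hp))
  · exact (tendsto_add_const_cobounded p).comp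
      (tendsto_inv₀_nhdsNE_zero.comp (hG.tendsto_comp_radialMap_inv hG0 hτ_bij.mapsTo))

theorem JordanParam.exists_homeomorph {H : Set ℂ} {α β : ℂ → ℂ} (h : JordanParam H α β) :
    ∃ Φ : ℂ ≃ₜ ℂ, DifferentiableOn ℂ Φ (ball 0 1) ∧ Φ '' sphere 0 1 = H := by
  obtain ⟨p, hp, hUb⟩ := h.exists_isBounded_component
  obtain ⟨F, hF, -⟩ := h.exists_caratheodoryMap hp hUb
  obtain ⟨g, hg, hgF, hg_inj, hg_image, hg_lim⟩ := h.exists_exteriorMap hp hUb hF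
  have hclosure : closure (closedBall (0 : ℂ) 1)ᶜ ⊆ (ball 0 1)ᶜ :=
    closure_minimal (compl_subset_compl.2 ball_subset_closedBall) isOpen_ball.isClosed_compl
  rw [← hF.image_closedBall] at hg_image
  rw [Metric.cobounded_eq_cocompact] at hg_lim
  obtain ⟨Φ, hΦ⟩ := exists_homeomorph_eqOn (isCompact_closedBall 0 1)
    (hF.cont.mono isClosed_closedBall.closure_subset) (hg.mono hclosure)
    (hgF.mono frontier_closedBall_subset_sphere) hF.inj
    (hg_inj.mono (compl_subset_compl.2 ball_subset_closedBall)) hg_image hg_lim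
  refine ⟨Φ, hF.diff.congr (hΦ.mono ball_subset_closedBall), ?_⟩
  rw [(hΦ.mono sphere_subset_closedBall).image_eq, hF.image_sphere]

/-! ### Radial homeomorphisms -/

section RadialHomeomorph

variable {E : Type*} [NormedAddCommGroup E] [NormedSpace ℝ E] {s : ℝ → ℝ} {z : E}

lemma radialMap_id_of_eq (hs : s ‖z‖ = ‖z‖) : radialMap s id z = z := by
  rcases eq_or_ne z 0 with rfl | hz
  · rw [radialMap, hs, norm_zero, zero_smul]
  · rw [radialMap, hs, id, smul_inv_smul₀ (norm_ne_zero_iff.2 hz)]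

lemma dist_radialMap_id (hz : z ≠ 0) : dist (radialMap s id z) z = |s ‖z‖ - ‖z‖| := by
  have hnorm := norm_ne_zero_iff.2 hz
  calc dist (radialMap s id z) z
      = dist (s ‖z‖ • ‖z‖⁻¹ • z) (‖z‖ • ‖z‖⁻¹ • z) := by
        rw [radialMap, id, smul_inv_smul₀ hnorm]
    _ = |s ‖z‖ - ‖z‖| := by
        rw [dist_eq_norm, ← sub_smul, norm_smul,
          mem_sphere_zero_iff_norm.1 (norm_inv_smul_mem_sphere hz), mul_one, Real.norm_eq_abs]

lemma continuous_radialMap_id (hs : Continuous s) {a : ℝ} (ha : 0 < a)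
    (hsa : ∀ t ≤ a, s t = t) : Continuous (radialMap s id : E → E) := by
  refine continuous_iff_continuousAt.2 fun z => ?_
  rcases eq_or_ne z 0 with rfl | hz
  · refine continuousAt_id.congr ?_
    filter_upwards [ball_mem_nhds 0 ha] with w hw
    exact (radialMap_id_of_eq (hsa _ (mem_ball_zero_iff.1 hw).le)).symm
  · exact (continuousOn_radialMap hs.continuousOn continuousOn_id).continuousAt
      (isOpen_compl_singleton.mem_nhds hz)

lemma leftInverse_radialMap_id {e : ℝ ≃o ℝ} (he : e 0 = 0) :
    Function.LeftInverse (radialMap e.symm id : E → E) (radialMap e id) :=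
  leftInverse_radialMap he (fun _ hx => he ▸ e.strictMono hx) (fun x _ => e.symm_apply_apply x)
    (mapsTo_id _) fun _ _ => rfl

/-- The homeomorphism of a normed space that preserves directions and acts on the norm by an
increasing bijection equal to the identity up to some positive radius. -/
def radialHomeomorph (E : Type*) [NormedAddCommGroup E] [NormedSpace ℝ E] (e : ℝ ≃o ℝ) {a : ℝ}
    (ha : 0 < a) (he : ∀ t ≤ a, e t = t) : E ≃ₜ E :=
  have he_symm : ∀ t ≤ a, e.symm t = t := fun t ht => e.symm_apply_eq.2 (he t ht).symm
  { toFun := radialMap e id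
    invFun := radialMap e.symm id
    left_inv := leftInverse_radialMap_id (he 0 ha.le)
    right_inv := leftInverse_radialMap_id (e := e.symm) (he_symm 0 ha.le)
    continuous_toFun := continuous_radialMap_id e.continuous ha he
    continuous_invFun := continuous_radialMap_id e.symm.continuous ha he_symm }

lemma abs_max_sub_max_sub_abs_le (δ x y : ℝ) :
    |max 0 (δ - |x|) - max 0 (δ - |y|)| ≤ |x - y| := by
  calc |max 0 (δ - |x|) - max 0 (δ - |y|)|
      ≤ |(δ - |x|) - (δ - |y|)| := by
        simpa only [max_comm] using abs_max_sub_max_le_abs (δ - |x|) (δ - |y|) 0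
    _ = |(|x| - |y|)| := by rw [sub_sub_sub_cancel_left, abs_sub_comm]
    _ ≤ |x - y| := abs_abs_sub_abs_le x y

lemma exists_orderIso_shrinking_one {δ : ℝ} (hδ : 0 < δ) :
    ∃ e : ℝ ≃o ℝ, (∀ t, δ ≤ |t - 1| → e t = t) ∧ (∀ t, |e t - t| ≤ δ / 2) ∧ e 1 = 1 - δ / 2 := by
  set b : ℝ → ℝ := fun t => max 0 (δ - |t - 1|) / 2 with hb
  have hb_nonneg (t : ℝ) : 0 ≤ b t := by positivity
  have hb_le (t : ℝ) : b t ≤ δ / 2 :=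
    div_le_div_of_nonneg_right (max_le hδ.le (sub_le_self _ (abs_nonneg _))) zero_le_two
  have hmono : StrictMono fun t => t - b t := fun x y hxy => by
    have hlip := abs_max_sub_max_sub_abs_le δ (y - 1) (x - 1)
    rw [sub_sub_sub_cancel_right, abs_of_pos (sub_pos.2 hxy)] at hlip
    simp only [hb]
    linarith [le_of_abs_le hlip]
  have hsurj : Function.Surjective fun t => t - b t := by
    refine Continuous.surjective (by fun_prop) ?_ ?_
    · exact Filter.tendsto_atTop_mono (fun t => sub_le_sub_left (hb_le t) t)
        (Filter.tendsto_atTop_add_const_right _ (-(δ / 2)) Filter.tendsto_id)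
    · exact Filter.tendsto_atBot_mono (fun t => sub_le_self t (hb_nonneg t)) Filter.tendsto_id
  refine ⟨hmono.orderIsoOfSurjective _ hsurj, fun t ht => ?_, fun t => ?_, ?_⟩
  · simp [hb, ht]
  · rw [StrictMono.coe_orderIsoOfSurjective, sub_sub_cancel_left, abs_neg,
      abs_of_nonneg (hb_nonneg t)]
    exact hb_le t
  · simp [hb, hδ.le]

lemma exists_radial_homeomorph (E : Type*) [NormedAddCommGroup E] [NormedSpace ℝ E] {δ : ℝ}
    (hδ : 0 < δ) (hδ1 : δ < 1) :
    ∃ ρ : E ≃ₜ E, (∀ z, δ ≤ |‖z‖ - 1| → ρ z = z) ∧ (∀ z, dist (ρ z) z ≤ δ / 2) ∧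
      ∀ u ∈ sphere (0 : E) 1, ρ u = (1 - δ / 2) • u := by
  obtain ⟨e, he_eq, he_dist, he_one⟩ := exists_orderIso_shrinking_one hδ
  have he_small : ∀ t ≤ 1 - δ, e t = t := fun t ht =>
    he_eq t (by linarith [neg_le_abs (t - 1)])
  refine ⟨radialHomeomorph E e (sub_pos.2 hδ1) he_small,
    fun z hz => radialMap_id_of_eq (he_eq _ hz), fun z => ?_, fun u hu => ?_⟩
  · rcases eq_or_ne z 0 with rfl | hz
    · exact (dist_eq_zero.2 (radialMap_zero (he_small 0 (sub_pos.2 hδ1).le))).trans_le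
        (half_pos hδ).le
    · exact (dist_radialMap_id hz).trans_le (he_dist _)
  · exact (radialMap_of_mem_sphere hu).trans (by rw [he_one, id])

lemma exists_radial_homeomorph_comp_near [ProperSpace E] {Y : Type*} [PseudoMetricSpace Y]
    {Φ : E → Y} (hΦ : Continuous Φ) {ε : ℝ} (hε : 0 < ε) :
    ∃ ρ : E ≃ₜ E, (∀ z, dist (Φ (ρ z)) (Φ z) ≤ ε / 2) ∧
      (∀ z, ε ≤ infDist (Φ z) (Φ '' sphere 0 1) → ρ z = z) ∧
      ∃ c ∈ Ioo (0 : ℝ) 1, ∀ u ∈ sphere (0 : E) 1, ρ u = c • u := by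
  obtain ⟨η, hη, hΦη⟩ := uniformContinuousOn_iff.1
    ((isCompact_closedBall (0 : E) 3).uniformContinuousOn_of_continuous hΦ.continuousOn)
    (ε / 2) (half_pos hε)
  obtain ⟨δ, hδ, hδ_lt⟩ := exists_between (lt_min hη one_pos)
  obtain ⟨hδη, hδ1⟩ := lt_min_iff.1 hδ_lt
  obtain ⟨ρ, hρ_eq, hρ_dist, hρ_sphere⟩ := exists_radial_homeomorph E hδ hδ1
  refine ⟨ρ, fun z => ?_, fun z hz => hρ_eq z ?_, 1 - δ / 2, ⟨by linarith, by linarith⟩, hρ_sphere⟩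
  · by_cases hz : δ ≤ |‖z‖ - 1|
    · rw [hρ_eq z hz, dist_self]
      exact (half_pos hε).le
    · have hz2 : ‖z‖ < 2 := by linarith [le_abs_self (‖z‖ - 1)]
      have hρz := hρ_dist z
      refine (hΦη _ ?_ _ ?_ (by linarith)).le
      · rw [mem_closedBall]
        linarith [dist_triangle (ρ z) z 0, dist_zero_right z]
      · rw [mem_closedBall_zero_iff]
        linarith
  · by_contra! hzδ
    obtain ⟨hz1, hz2⟩ := abs_lt.1 hzδ
    have hz0 : z ≠ 0 := norm_pos_iff.1 (by linarith)
    have hu := norm_inv_smul_mem_sphere hz0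
    have hdist : dist z (‖z‖⁻¹ • z) < η := by
      have hproj := dist_radialMap_id (s := fun _ => 1) hz0
      rw [radialMap, one_smul, id, abs_sub_comm, dist_comm] at hproj
      linarith
    have hle := infDist_le_dist_of_mem (x := Φ z) (mem_image_of_mem Φ hu)
    have hlt := hΦη z (mem_closedBall_zero_iff.2 (by linarith)) _
      (closedBall_subset_closedBall (by norm_num) (sphere_subset_closedBall hu)) hdist
    linarith

end RadialHomeomorph

lemma isAnalyticJordanCurve_image_smul {f : ℂ → ℂ} (hf : DifferentiableOn ℂ f (ball 0 1))
    (hf_inj : InjOn f (ball 0 1)) {c : ℝ} (hc : c ∈ Ioo (0 : ℝ) 1) :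
    IsAnalyticJordanCurve ((fun u => f (c • u)) '' sphere 0 1) := by
  have hmaps : MapsTo (fun z : ℂ => c • z) {z | 0 < ‖z‖ ∧ ‖z‖ < c⁻¹} (ball 0 1) := fun z hz => by
    rw [mem_ball_zero_iff, norm_smul, Real.norm_of_nonneg hc.1.le]
    exact (lt_inv_mul_iff₀ hc.1).1 (by simpa using hz.2)
  exact ⟨0, c⁻¹, fun z => f (c • z), one_pos, (one_lt_inv₀ hc.1).2 hc.2,
    hf.comp (by fun_prop) hmaps,
    hf_inj.comp (smul_right_injective ℂ hc.1.ne').injOn hmaps, rfl⟩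

/-- Any Jordan curve in the plane is `ε`-homeomorphic to an analytic Jordan curve,
by a homeomorphism that is the identity outside an `ε`-neighborhood of the curve. -/
theorem jordan_curve_analytic_approximation
    (H : Set ℂ) (hH : IsJordanCurve H) (ε : ℝ) (hε : 0 < ε) :
    ∃ φ : ℂ ≃ₜ ℂ,
      (∃ c < ε, ∀ z : ℂ, dist (φ z) z ≤ c) ∧
      (∀ z : ℂ, ε ≤ Metric.infDist z H → φ z = z) ∧
      IsAnalyticJordanCurve (φ '' H) := by
  obtain ⟨e⟩ := hH
  obtain ⟨α, β, h⟩ := exists_jordanParam e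
  obtain ⟨Φ, hΦ_diff, rfl⟩ := h.exists_homeomorph
  obtain ⟨ρ, hρ_near, hρ_eq, c, hc, hρ_sphere⟩ :=
    exists_radial_homeomorph_comp_near Φ.continuous hε
  refine ⟨(Φ.symm.trans ρ).trans Φ, ⟨ε / 2, half_lt_self hε, fun w => ?_⟩, fun w hw => ?_, ?_⟩
  · simpa using hρ_near (Φ.symm w)
  · simp [hρ_eq (Φ.symm w) (by simpa using hw)]
  · have himage : (Φ.symm.trans ρ).trans Φ '' (Φ '' sphere 0 1) =
        (fun u => Φ (c • u)) '' sphere 0 1 := by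
      rw [image_image]
      exact image_congr fun u hu => by simp [hρ_sphere u hu]
    rw [himage]
    exact isAnalyticJordanCurve_image_smul hΦ_diff Φ.injective.injOn hc

end
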